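/- There is θ₀ > 0 such that for every θ ∈ (0,θ₀) there exists a constant C = C(θ) with the following property: for all μ ∈ (0,1], all T > 0, and all u, F : [0,T] → 𝓢(ℝ²) with t ↦ u(t) a C¹ curve in the Schwartz space, F continuous, and i∂_t u − (1/√μ) m_2(√μ D) u = F on [0,T], one has (∫_0^T ‖u(t)‖_{L^∞(ℝ²)}^2 dt)^{1/2} ≤ C [ μ^{−1/6+5θ/36} T^{1/6+5θ/18} ( sup_{t∈[0,T]} ‖J^θ u(t)‖_{L^2} + sup_{t∈[0,T]} ‖|D|^{1/2−θ/3} J^{2θ} J_μ^{3/4} u(t)‖_{L^2} ) + μ^{−1/3+θ/9} T^{1/3+2θ/9} ( ∫_0^T ‖|D|^{−1/2−θ/3} J^θ J_μ^{3/4} F(t)‖_{L^2}^2 dt )^{1/2} ]. -/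

import Mathlib

noncomputable section

open MeasureTheory SchwartzMap
open scoped FourierTransform ENNReal

/-- The plane `ℝ²` as a Euclidean space. -/
abbrev E2 := EuclideanSpace ℝ (Fin 2)

/-- The Japanese bracket `⟨x⟩ = (1 + x²)^{1/2}`. -/
def jap (x : ℝ) : ℝ := (1 + x ^ 2) ^ ((1 : ℝ) / 2)

/-- The symbol `m₂(ξ) = |ξ| (tanh|ξ|/|ξ|)^{1/2}`, with `m₂(0) = 0`. -/
def m2 (ξ : E2) : ℝ :=
  if ‖ξ‖ = 0 then 0 else ‖ξ‖ * Real.sqrt (Real.tanh ‖ξ‖ / ‖ξ‖)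

/-- Generic Fourier multiplier `a(D) g = (a(ξ) ĝ(ξ))^∨` with real symbol `a` on `ℝ²`. -/
def fmul2 (a : E2 → ℝ) (g : E2 → ℂ) : E2 → ℂ :=
  𝓕⁻ (fun ξ : E2 => ((a ξ : ℝ) : ℂ) * 𝓕 g ξ)

/-- The operator `(1/√μ) m₂(√μ D)`. -/
def whithamOp2 (μ : ℝ) (g : E2 → ℂ) : E2 → ℂ :=
  fmul2 (fun ξ => (1 / Real.sqrt μ) * m2 (Real.sqrt μ • ξ)) g

/-
Decompose `u` into dyadic frequency annuli. On the annulus of radius `N` the kernel of the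
propagator decays like `1 / t`, by van der Corput's lemma and the asymptotics of `J₀`; the `TT*`
method then gives an `L²L^∞` Strichartz estimate, and Duhamel's formula includes the source. The
time interval `[0, T]` is cut into pieces whose length depends on `N`, so that the contributions of
`u` and `F` balance and leave a factor `N^(±θ/3)` decaying away from `N = 1`; if the pieces would
be longer than `T`, Bernstein's inequality alone suffices. The remaining geometric series over the
annuli is summed by Minkowski's inequality.
-/

section OscillatoryIntegrals

open Complex Set intervalIntegral

theorem norm_integral_mul_deriv_le {g g' E E' : ℝ → ℂ} {a b M : ℝ} (hab : a ≤ b)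
    (hg : ∀ x ∈ Icc a b, HasDerivAt g (g' x) x) (hg' : ContinuousOn g' (Icc a b))
    (hE : ∀ x ∈ Icc a b, HasDerivAt E (E' x) x) (hE' : ContinuousOn E' (Icc a b))
    (hM : ∀ x ∈ Icc a b, ‖E x‖ ≤ M) :
    ‖∫ x in a..b, g x * E' x‖ ≤ M * (‖g b‖ + ∫ x in a..b, ‖g' x‖) + ‖g a‖ * ‖E a‖ := by
  have hu : uIcc a b = Icc a b := uIcc_of_le hab
  have hparts := integral_mul_deriv_eq_deriv_mul (fun x hx ↦ hg x (hu ▸ hx))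
    (fun x hx ↦ hE x (hu ▸ hx)) (hg'.intervalIntegrable_of_Icc hab)
    (hE'.intervalIntegrable_of_Icc hab)
  have hboundary : ‖g b * E b‖ ≤ M * ‖g b‖ := by
    rw [norm_mul, mul_comm]
    exact mul_le_mul_of_nonneg_right (hM b ⟨hab, le_rfl⟩) (norm_nonneg _)
  have hinterior : ‖∫ x in a..b, g' x * E x‖ ≤ M * ∫ x in a..b, ‖g' x‖ := by
    rw [← intervalIntegral.integral_const_mul]
    refine norm_integral_le_of_norm_le hab (.of_forall fun x hx ↦ ?_)
      ((hg'.norm.intervalIntegrable_of_Icc hab).const_mul M)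
    rw [norm_mul, mul_comm]
    exact mul_le_mul_of_nonneg_right (hM x ⟨hx.1.le, hx.2⟩) (norm_nonneg _)
  rw [hparts, ← norm_mul (g a)]
  linarith [norm_sub_le (g b * E b - g a * E a) (∫ x in a..b, g' x * E x),
    norm_sub_le (g b * E b) (g a * E a)]

theorem norm_integral_mul_exp_le {φ : ℝ → ℝ} {g g' : ℝ → ℂ} {a b B D₀ D : ℝ} (hab : a ≤ b)
    (hφ : Continuous φ) (hg : ∀ x ∈ Icc a b, HasDerivAt g (g' x) x)
    (hg' : ContinuousOn g' (Icc a b))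
    (hB : ∀ x ∈ Icc a b, ‖∫ y in a..x, exp (φ y * I)‖ ≤ B)
    (hD₀ : ‖g b‖ ≤ D₀) (hD : ∀ x ∈ Icc a b, ‖g' x‖ ≤ D) :
    ‖∫ x in a..b, g x * exp (φ x * I)‖ ≤ B * (D₀ + D * (b - a)) := by
  have hexp : Continuous fun x ↦ exp (φ x * I) := by fun_prop
  have hparts := norm_integral_mul_deriv_le hab hg hg'
    (fun x _ ↦ (hexp.integral_hasStrictDerivAt a x).hasDerivAt) hexp.continuousOn hB
  have hvariation : ∫ x in a..b, ‖g' x‖ ≤ D * (b - a) := by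
    calc ∫ x in a..b, ‖g' x‖ ≤ ∫ _ in a..b, D :=
          integral_mono_on hab (hg'.norm.intervalIntegrable_of_Icc hab) (by simp) hD
      _ = D * (b - a) := by rw [intervalIntegral.integral_const, smul_eq_mul, mul_comm]
  rw [integral_same, norm_zero, mul_zero, add_zero] at hparts
  exact hparts.trans (mul_le_mul_of_nonneg_left (add_le_add hD₀ hvariation)
    ((norm_nonneg _).trans (hB a ⟨le_rfl, hab⟩)))

variable {φ φ' φ'' : ℝ → ℝ} {a b l : ℝ}

theorem norm_integral_exp_le_sub (φ : ℝ → ℝ) (hab : a ≤ b) :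
    ‖∫ x in a..b, exp (φ x * I)‖ ≤ b - a := by
  simpa [abs_of_nonneg (sub_nonneg.2 hab)] using
    norm_integral_le_of_norm_le_const (a := a) (b := b) (C := 1)
      fun x _ ↦ (norm_exp_ofReal_mul_I (φ x)).le

-- Van der Corput, first order: `e^{iφ} = (1 / iφ') (e^{iφ})'` and `1 / φ'` is monotone.
theorem norm_integral_exp_le_of_le_abs_deriv (hab : a ≤ b) (hl : 0 < l)
    (h1 : ∀ x ∈ Icc a b, HasDerivAt φ (φ' x) x)
    (h2 : ∀ x ∈ Icc a b, HasDerivAt φ' (φ'' x) x) (hc : ContinuousOn φ'' (Icc a b))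
    (hφ'' : ∀ x ∈ Icc a b, 0 ≤ φ'' x) (hφ' : ∀ x ∈ Icc a b, l ≤ |φ' x|) :
    ‖∫ x in a..b, exp (φ x * I)‖ ≤ 4 / l := by
  have hne : ∀ x ∈ Icc a b, φ' x ≠ 0 := fun x hx ↦ abs_pos.1 (hl.trans_le (hφ' x hx))
  have hinv : ∀ x ∈ Icc a b, |(φ' x)⁻¹| ≤ l⁻¹ := fun x hx ↦ by
    rw [abs_inv]; exact inv_anti₀ hl (hφ' x hx)
  have hcφ : ContinuousOn φ (Icc a b) := fun x hx ↦ (h1 x hx).continuousAt.continuousWithinAt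
  have hcφ' : ContinuousOn φ' (Icc a b) := fun x hx ↦ (h2 x hx).continuousAt.continuousWithinAt
  have hdinv : ∀ x ∈ Icc a b, HasDerivAt (fun x ↦ (φ' x)⁻¹) (-φ'' x / φ' x ^ 2) x :=
    fun x hx ↦ (h2 x hx).inv (hne x hx)
  have hcinv : ContinuousOn (fun x ↦ -φ'' x / φ' x ^ 2) (Icc a b) :=
    hc.neg.div (hcφ'.pow 2) fun x hx ↦ pow_ne_zero 2 (hne x hx)
  have hvariation : ∫ x in a..b, ‖((-φ'' x / φ' x ^ 2 : ℝ) : ℂ)‖ = (φ' a)⁻¹ - (φ' b)⁻¹ := by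
    have hftc := integral_eq_sub_of_hasDerivAt (fun x hx ↦ hdinv x (uIcc_of_le hab ▸ hx))
      (hcinv.intervalIntegrable_of_Icc hab)
    rw [← neg_sub, ← hftc, ← intervalIntegral.integral_neg]
    refine integral_congr fun x hx ↦ ?_
    have := hφ'' x (uIcc_of_le hab ▸ hx)
    simp only [norm_real, Real.norm_eq_abs]
    rw [abs_of_nonpos (div_nonpos_of_nonpos_of_nonneg (by linarith) (sq_nonneg _))]
  have hparts := norm_integral_mul_deriv_le (M := 1) hab (fun x hx ↦ (hdinv x hx).ofReal_comp)
    (continuous_ofReal.comp_continuousOn hcinv)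
    (fun x hx ↦ ((h1 x hx).ofReal_comp.mul_const I).cexp) (by fun_prop)
    fun x _ ↦ (norm_exp_ofReal_mul_I _).le
  have hintegrand : ∫ x in a..b, (((φ' x)⁻¹ : ℝ) : ℂ) * (exp (φ x * I) * (φ' x * I)) =
      I * ∫ x in a..b, exp (φ x * I) := by
    rw [← intervalIntegral.integral_const_mul]
    refine integral_congr fun x hx ↦ ?_
    have : (φ' x : ℂ) ≠ 0 := mod_cast hne x (uIcc_of_le hab ▸ hx)
    simp only [ofReal_inv]
    field_simp
  rw [hintegrand, hvariation, norm_mul, norm_I, one_mul, one_mul, norm_exp_ofReal_mul_I, mul_one,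
    norm_real, norm_real, Real.norm_eq_abs, Real.norm_eq_abs] at hparts
  have ha := hinv a ⟨le_rfl, hab⟩
  have hb := hinv b ⟨hab, le_rfl⟩
  rw [div_eq_mul_inv]
  linarith [le_abs_self (φ' a)⁻¹, neg_abs_le (φ' b)⁻¹]

theorem norm_integral_exp_le_of_deriv_nonneg (hab : a ≤ b) (hl : 0 < l) (hφ : Continuous φ)
    (h1 : ∀ x ∈ Icc a b, HasDerivAt φ (φ' x) x)
    (h2 : ∀ x ∈ Icc a b, HasDerivAt φ' (φ'' x) x) (hc : ContinuousOn φ'' (Icc a b))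
    (hφ'' : ∀ x ∈ Icc a b, l ^ 2 ≤ φ'' x) (ha : 0 ≤ φ' a) :
    ‖∫ x in a..b, exp (φ x * I)‖ ≤ 5 / l := by
  have hl' : 0 < 1 / l := by positivity
  rcases le_or_gt (b - a) (1 / l) with hshort | hlong
  · exact ((norm_integral_exp_le_sub φ hab).trans hshort).trans (by gcongr; norm_num)
  have hsub : Icc (a + 1 / l) b ⊆ Icc a b := Icc_subset_Icc_left (by linarith)
  have hgrow : ∀ x ∈ Icc (a + 1 / l) b, l ≤ φ' x := fun x hx ↦ by
    have hmvt := (convex_Icc a b).mul_sub_le_image_sub_of_le_deriv (C := l ^ 2) (f := φ')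
      (fun z hz ↦ (h2 z hz).continuousAt.continuousWithinAt)
      (fun z hz ↦ (h2 z (interior_subset hz)).differentiableAt.differentiableWithinAt)
      (fun z hz ↦ (h2 z (interior_subset hz)).deriv ▸ hφ'' z (interior_subset hz))
      a ⟨le_rfl, hab⟩ x (hsub hx) (hsub hx).1
    calc l = l ^ 2 * (1 / l) := by field_simp
      _ ≤ l ^ 2 * (x - a) := by gcongr; linarith [hx.1]
      _ ≤ φ' x := by linarith
  have htail := norm_integral_exp_le_of_le_abs_deriv (by linarith) hl
    (fun x hx ↦ h1 x (hsub hx)) (fun x hx ↦ h2 x (hsub hx)) (hc.mono hsub)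
    (fun x hx ↦ (sq_nonneg l).trans (hφ'' x (hsub hx)))
    fun x hx ↦ (hgrow x hx).trans (le_abs_self _)
  have hhead := norm_integral_exp_le_sub φ (show a ≤ a + 1 / l by linarith)
  have hexp : Continuous fun x ↦ exp (φ x * I) := by fun_prop
  rw [← integral_add_adjacent_intervals (hexp.intervalIntegrable a (a + 1 / l))
    (hexp.intervalIntegrable _ b)]
  calc _ ≤ _ := (norm_add_le _ _).trans (add_le_add hhead htail)
    _ = 5 / l := by ring

theorem norm_integral_exp_le_of_deriv_nonpos (hab : a ≤ b) (hl : 0 < l) (hφ : Continuous φ)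
    (h1 : ∀ x ∈ Icc a b, HasDerivAt φ (φ' x) x)
    (h2 : ∀ x ∈ Icc a b, HasDerivAt φ' (φ'' x) x) (hc : ContinuousOn φ'' (Icc a b))
    (hφ'' : ∀ x ∈ Icc a b, l ^ 2 ≤ φ'' x) (hb : φ' b ≤ 0) :
    ‖∫ x in a..b, exp (φ x * I)‖ ≤ 5 / l := by
  have hneg : ∀ x ∈ Icc (-b) (-a), -x ∈ Icc a b := fun x hx ↦
    ⟨by linarith [hx.2], by linarith [hx.1]⟩
  have hreflect := norm_integral_exp_le_of_deriv_nonneg (φ := fun x ↦ φ (-x))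
    (φ' := fun x ↦ -φ' (-x)) (φ'' := fun x ↦ φ'' (-x)) (neg_le_neg hab) hl (by fun_prop)
    (fun x hx ↦ by simpa [Function.comp_def] using (h1 (-x) (hneg x hx)).comp x (hasDerivAt_neg x))
    (fun x hx ↦ by
      simpa [Function.comp_def] using ((h2 (-x) (hneg x hx)).comp x (hasDerivAt_neg x)).fun_neg)
    (hc.comp continuous_neg.continuousOn hneg) (fun x hx ↦ hφ'' (-x) (hneg x hx)) (by simpa)
  simpa [integral_comp_neg fun x ↦ exp (φ x * I)] using hreflect

-- Van der Corput, second order: split at the zero of the increasing function `φ'`.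
theorem norm_integral_exp_le_of_le_deriv2 (hab : a ≤ b) (hl : 0 < l) (hφ : Continuous φ)
    (h1 : ∀ x ∈ Icc a b, HasDerivAt φ (φ' x) x)
    (h2 : ∀ x ∈ Icc a b, HasDerivAt φ' (φ'' x) x) (hc : ContinuousOn φ'' (Icc a b))
    (hφ'' : ∀ x ∈ Icc a b, l ^ 2 ≤ φ'' x) :
    ‖∫ x in a..b, exp (φ x * I)‖ ≤ 10 / l := by
  have h5 : 5 / l ≤ 10 / l := by gcongr; norm_num
  rcases le_or_gt 0 (φ' a) with ha | ha
  · exact (norm_integral_exp_le_of_deriv_nonneg hab hl hφ h1 h2 hc hφ'' ha).trans h5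
  rcases le_or_gt (φ' b) 0 with hb | hb
  · exact (norm_integral_exp_le_of_deriv_nonpos hab hl hφ h1 h2 hc hφ'' hb).trans h5
  obtain ⟨c, hcab, hφ'c⟩ := intermediate_value_Icc hab
    (fun x hx ↦ (h2 x hx).continuousAt.continuousWithinAt) ⟨ha.le, hb.le⟩
  have hac : Icc a c ⊆ Icc a b := Icc_subset_Icc_right hcab.2
  have hcb : Icc c b ⊆ Icc a b := Icc_subset_Icc_left hcab.1
  have hleft := norm_integral_exp_le_of_deriv_nonpos hcab.1 hl hφ (fun x hx ↦ h1 x (hac hx))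
    (fun x hx ↦ h2 x (hac hx)) (hc.mono hac) (fun x hx ↦ hφ'' x (hac hx)) hφ'c.le
  have hright := norm_integral_exp_le_of_deriv_nonneg hcab.2 hl hφ (fun x hx ↦ h1 x (hcb hx))
    (fun x hx ↦ h2 x (hcb hx)) (hc.mono hcb) (fun x hx ↦ hφ'' x (hcb hx)) hφ'c.ge
  have hexp : Continuous fun x ↦ exp (φ x * I) := by fun_prop
  rw [← integral_add_adjacent_intervals (hexp.intervalIntegrable a c) (hexp.intervalIntegrable c b)]
  calc _ ≤ _ := (norm_add_le _ _).trans (add_le_add hleft hright)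
    _ = 10 / l := by ring

end OscillatoryIntegrals

section Bessel

open Complex Set
open scoped Real ComplexConjugate

/-- The `k`-th derivative of `2π J₀`, where `2π J₀ (z) = ∫ cos (z cos θ) dθ` is the Fourier
transform of the arc length of the unit circle at distance `z` from the origin. -/
def besselDeriv (k : ℕ) (z : ℝ) : ℝ :=
  ∫ θ in (-π)..π, Real.cos θ ^ k * Real.cos (z * Real.cos θ + k * (π / 2))

theorem hasDerivAt_besselDeriv (k : ℕ) (z : ℝ) :
    HasDerivAt (besselDeriv k) (besselDeriv (k + 1) z) z := by
  refine (intervalIntegral.hasDerivAt_integral_of_dominated_loc_of_deriv_le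
    (F := fun z θ ↦ Real.cos θ ^ k * Real.cos (z * Real.cos θ + k * (π / 2)))
    (F' := fun z θ ↦
      Real.cos θ ^ (k + 1) * Real.cos (z * Real.cos θ + (k + 1 : ℕ) * (π / 2)))
    (bound := fun _ ↦ 1) (s := univ) Filter.univ_mem
    (.of_forall fun x ↦ (by fun_prop : Continuous _).aestronglyMeasurable)
    ((by fun_prop : Continuous _).intervalIntegrable _ _)
    (by fun_prop : Continuous _).aestronglyMeasurable
    (.of_forall fun θ _ x _ ↦ ?_) (continuous_const.intervalIntegrable _ _)
    (.of_forall fun θ _ x _ ↦ ?_)).2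
  · rw [norm_mul, norm_pow]
    exact mul_le_one₀ (pow_le_one₀ (norm_nonneg _) (Real.abs_cos_le_one θ)) (norm_nonneg _)
      (Real.abs_cos_le_one _)
  · have hphase := ((hasDerivAt_id x).mul_const (Real.cos θ)).add_const (k * (π / 2))
    refine (hphase.cos.const_mul (Real.cos θ ^ k)).congr_deriv ?_
    rw [show x * Real.cos θ + (k + 1 : ℕ) * (π / 2) = x * Real.cos θ + k * (π / 2) + π / 2 by
      push_cast; ring, Real.cos_add_pi_div_two]
    simp only [id_eq]
    ring

theorem continuous_besselDeriv (k : ℕ) : Continuous (besselDeriv k) :=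
  continuous_iff_continuousAt.2 fun z ↦ (hasDerivAt_besselDeriv k z).continuousAt

theorem abs_besselDeriv_le (k : ℕ) (z : ℝ) : |besselDeriv k z| ≤ 2 * π := by
  have hle := intervalIntegral.norm_integral_le_of_norm_le_const (a := -π) (b := π) (C := 1)
    (f := fun θ ↦ Real.cos θ ^ k * Real.cos (z * Real.cos θ + k * (π / 2))) fun θ _ ↦ by
      rw [norm_mul, norm_pow]
      exact mul_le_one₀ (pow_le_one₀ (norm_nonneg _) (Real.abs_cos_le_one θ)) (norm_nonneg _)
        (Real.abs_cos_le_one _)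
  rwa [one_mul, sub_neg_eq_add, ← two_mul, abs_of_pos Real.two_pi_pos] at hle

-- The total derivative of `sin θ sin (z cos θ)` integrates to zero over a period.
theorem bessel_equation (z : ℝ) :
    z * (besselDeriv 0 z + besselDeriv 2 z) = -besselDeriv 1 z := by
  have hexact : ∫ θ in (-π)..π, (Real.cos θ * Real.sin (z * Real.cos θ) +
      Real.sin θ * (Real.cos (z * Real.cos θ) * (z * -Real.sin θ))) = 0 := by
    rw [intervalIntegral.integral_eq_sub_of_hasDerivAt
      (fun θ _ ↦ (Real.hasDerivAt_sin θ).mul (((Real.hasDerivAt_cos θ).const_mul z).sin))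
      ((by fun_prop : Continuous _).intervalIntegrable _ _)]
    simp
  have hcombine : z * (besselDeriv 0 z + besselDeriv 2 z) + besselDeriv 1 z =
      -∫ θ in (-π)..π, (Real.cos θ * Real.sin (z * Real.cos θ) +
        Real.sin θ * (Real.cos (z * Real.cos θ) * (z * -Real.sin θ))) := by
    unfold besselDeriv
    have hint : ∀ {f : ℝ → ℝ}, Continuous f → IntervalIntegrable f volume (-π) π :=
      fun hf ↦ hf.intervalIntegrable _ _
    rw [← intervalIntegral.integral_add (hint (by fun_prop)) (hint (by fun_prop)),
      ← intervalIntegral.integral_const_mul,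
      ← intervalIntegral.integral_add (hint (by fun_prop)) (hint (by fun_prop)),
      ← intervalIntegral.integral_neg]
    refine intervalIntegral.integral_congr fun θ _ ↦ ?_
    have htwo : z * Real.cos θ + (2 : ℕ) * (π / 2) = z * Real.cos θ + π := by push_cast; ring
    have hone : z * Real.cos θ + (1 : ℕ) * (π / 2) = z * Real.cos θ + π / 2 := by push_cast; ring
    simp only [htwo, hone, Real.cos_add_pi, Real.cos_add_pi_div_two, Nat.cast_zero, zero_mul,
      add_zero, pow_zero, pow_one]
    linear_combination (-z * Real.cos (z * Real.cos θ)) * Real.sin_sq θ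
  linarith

theorem besselDeriv_zero_eq_integral_exp (z : ℝ) :
    (besselDeriv 0 z : ℂ) = ∫ θ in (-π)..π, exp ((z * Real.cos θ : ℝ) * I) := by
  have hodd : ∫ θ in (-π)..π, Real.sin (z * Real.cos θ) = 0 := by
    have hperiodic : Function.Periodic (fun θ ↦ Real.sin (z * Real.cos θ)) (2 * π) :=
      fun θ ↦ by simp
    have hshift := intervalIntegral.integral_comp_add_right (a := -π) (b := π)
      (fun θ ↦ Real.sin (z * Real.cos θ)) π
    have hperiod := hperiodic.intervalIntegral_add_eq (-π) 0
    simp only [Real.cos_add_pi, mul_neg, Real.sin_neg, intervalIntegral.integral_neg] at hshift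
    rw [show -π + 2 * π = π by ring, zero_add] at hperiod
    rw [neg_add_cancel, ← two_mul] at hshift
    linarith
  have heuler : ∀ θ : ℝ, exp ((z * Real.cos θ : ℝ) * I) =
      (Real.cos (z * Real.cos θ) : ℝ) + (Real.sin (z * Real.cos θ) : ℝ) * I := fun θ ↦ by
    rw [exp_mul_I, ofReal_cos, ofReal_sin]
  simp_rw [heuler]
  rw [intervalIntegral.integral_add ((by fun_prop : Continuous _).intervalIntegrable _ _)
    ((by fun_prop : Continuous _).intervalIntegrable _ _), intervalIntegral.integral_mul_const,
    intervalIntegral.integral_ofReal, intervalIntegral.integral_ofReal, hodd]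
  simp [besselDeriv]

/-- `√z · 2π J₀ (z)`, a solution of the oscillator equation `w'' + (1 + 1 / (4 z²)) w = 0`. -/
def besselOsc (z : ℝ) : ℝ := √z * besselDeriv 0 z

/-- The derivative of `besselOsc`. -/
def besselOscDeriv (z : ℝ) : ℝ := besselDeriv 0 z / (2 * √z) + √z * besselDeriv 1 z

theorem hasDerivAt_besselOsc {z : ℝ} (hz : 0 < z) :
    HasDerivAt besselOsc (besselOscDeriv z) z := by
  refine ((Real.hasDerivAt_sqrt hz.ne').mul (hasDerivAt_besselDeriv 0 z)).congr_deriv ?_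
  unfold besselOscDeriv
  ring

theorem hasDerivAt_besselOscDeriv {z : ℝ} (hz : 0 < z) :
    HasDerivAt besselOscDeriv (-(1 + 1 / (4 * z ^ 2)) * besselOsc z) z := by
  have hs : 0 < √z := Real.sqrt_pos.2 hz
  have hsqrt := Real.hasDerivAt_sqrt hz.ne'
  have hode : besselDeriv 2 z = -besselDeriv 0 z - besselDeriv 1 z / z := by
    field_simp
    linarith [bessel_equation z]
  refine (((hasDerivAt_besselDeriv 0 z).div (hsqrt.const_mul 2) (by positivity)).add
    (hsqrt.mul (hasDerivAt_besselDeriv 1 z))).congr_deriv ?_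
  have hsq : z = √z ^ 2 := (Real.sq_sqrt hz.le).symm
  simp only [hode, besselOsc, zero_add]
  set s := √z
  rw [hsq]
  field_simp
  ring

theorem continuous_besselOsc : Continuous besselOsc := by
  have := continuous_besselDeriv 0
  unfold besselOsc
  fun_prop

theorem abs_besselOsc_le (z : ℝ) : |besselOsc z| ≤ √z * (2 * π) := by
  rw [besselOsc, abs_mul, abs_of_nonneg (Real.sqrt_nonneg z)]
  exact mul_le_mul_of_nonneg_left (abs_besselDeriv_le 0 z) (Real.sqrt_nonneg z)

/-- The slowly varying amplitude `(w - i w') e^{-iz}` of `w = besselOsc`. -/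
def besselAmp (z : ℝ) : ℂ := (besselOsc z - I * besselOscDeriv z) * exp ((-z : ℝ) * I)

/-- The derivative of `besselAmp`. -/
def besselAmpDeriv (z : ℝ) : ℂ := I * besselOsc z / (4 * z ^ 2) * exp ((-z : ℝ) * I)

theorem hasDerivAt_besselAmp {z : ℝ} (hz : 0 < z) :
    HasDerivAt besselAmp (besselAmpDeriv z) z := by
  have hosc := (hasDerivAt_besselOsc hz).ofReal_comp.sub
    ((hasDerivAt_besselOscDeriv hz).ofReal_comp.const_mul I)
  have hexp := ((hasDerivAt_neg z).ofReal_comp.mul_const I).cexp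
  refine (hosc.mul hexp).congr_deriv ?_
  have hz' : (z : ℂ) ≠ 0 := mod_cast hz.ne'
  unfold besselAmpDeriv
  simp only [Pi.sub_apply]
  push_cast
  field_simp
  linear_combination (4 * z ^ 2 * (besselOscDeriv z : ℂ)) * I_sq

theorem norm_besselAmpDeriv (z : ℝ) : ‖besselAmpDeriv z‖ = |besselOsc z| / (4 * z ^ 2) := by
  rw [besselAmpDeriv, norm_mul, norm_exp_ofReal_mul_I, norm_div, norm_mul, norm_I, norm_real]
  simp

theorem abs_besselOsc_le_norm_besselAmp (z : ℝ) : |besselOsc z| ≤ ‖besselAmp z‖ := by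
  rw [besselAmp, norm_mul, norm_exp_ofReal_mul_I, mul_one]
  simpa using abs_re_le_norm ((besselOsc z : ℂ) - I * (besselOscDeriv z : ℂ))

theorem continuousOn_besselAmpDeriv : ContinuousOn besselAmpDeriv (Ioi 0) := by
  have := continuous_besselOsc
  refine ContinuousOn.mul (ContinuousOn.div (by fun_prop) (by fun_prop) fun z hz ↦ ?_)
    (by fun_prop)
  exact by simpa using (mem_Ioi.1 hz).ne'

theorem norm_besselAmp_le {z : ℝ} (hz : 1 ≤ z) : ‖besselAmp z‖ ≤ ‖besselAmp 1‖ + π := by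
  -- `‖besselAmpDeriv z‖ ≤ (π / 2) z ^ (-3 / 2)` is integrable at infinity.
  have hmajorant : ∀ y ∈ Icc 1 z, HasDerivAt (fun y ↦ ‖besselAmp 1‖ + π - π * (√y)⁻¹)
      (π * (1 / (2 * √y) / √y ^ 2)) y := fun y hy ↦ by
    have hy : 0 < y := by linarith [hy.1]
    refine ((((Real.hasDerivAt_sqrt hy.ne').inv (Real.sqrt_pos.2 hy).ne').const_mul π).const_sub
      (‖besselAmp 1‖ + π)).congr_deriv ?_
    ring
  have hderiv : ∀ y ∈ Ico 1 z, ‖besselAmpDeriv y‖ ≤ π * (1 / (2 * √y) / √y ^ 2) := fun y hy ↦ by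
    have hy : 0 < y := by linarith [hy.1]
    calc ‖besselAmpDeriv y‖ ≤ √y * (2 * π) / (4 * y ^ 2) := by
          rw [norm_besselAmpDeriv]
          gcongr
          exact abs_besselOsc_le y
      _ = π * (1 / (2 * √y) / √y ^ 2) := by
          nth_rw 2 [← Real.sq_sqrt hy.le]
          field_simp
          norm_num
  have hgrow := image_norm_le_of_norm_deriv_right_le_deriv_boundary'
    (fun y hy ↦ (hasDerivAt_besselAmp (by linarith [hy.1])).continuousAt.continuousWithinAt)
    (fun y hy ↦ (hasDerivAt_besselAmp (by linarith [hy.1])).hasDerivWithinAt) (by simp)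
    (fun y hy ↦ (hmajorant y hy).continuousAt.continuousWithinAt)
    (fun y hy ↦ (hmajorant y (Ico_subset_Icc_self hy)).hasDerivWithinAt) hderiv ⟨hz, le_rfl⟩
  have : 0 ≤ π * (√z)⁻¹ := by positivity
  linarith

theorem besselDeriv_zero_eq_amp {z : ℝ} (hz : 0 < z) :
    (besselDeriv 0 z : ℂ) = besselAmp z / (2 * √z : ℝ) * exp (z * I) +
      conj (besselAmp z / (2 * √z : ℝ)) * exp ((-z : ℝ) * I) := by
  have hs : (√z : ℂ) ≠ 0 := mod_cast (Real.sqrt_pos.2 hz).ne'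
  have hcancel : exp (z * I) * exp ((-z : ℝ) * I) = 1 := by
    rw [← exp_add]
    simp
  have hosc : (besselOsc z : ℂ) = √z * besselDeriv 0 z := by
    unfold besselOsc
    push_cast
    rfl
  have hconj : exp (((-z : ℝ) : ℂ) * -I) = exp (z * I) := by congr 1; push_cast; ring
  simp only [besselAmp, map_div₀, map_mul, map_sub, conj_ofReal, conj_I, ← exp_conj, hconj]
  calc (besselDeriv 0 z : ℂ) = (√z : ℂ)⁻¹ * besselOsc z := by rw [hosc]; field_simp
    _ = (√z : ℂ)⁻¹ * besselOsc z * (exp (z * I) * exp ((-z : ℝ) * I)) := by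
      rw [hcancel, mul_one]
    _ = _ := by
      push_cast
      field_simp
      ring

theorem norm_besselAmpDeriv_div_sub_le {z : ℝ} (hz : 1 ≤ z) :
    ‖besselAmpDeriv z / (2 * √z : ℝ) - besselAmp z / (4 * z * √z : ℝ)‖ ≤
      (‖besselAmp 1‖ + π) / (z * √z) := by
  set C := ‖besselAmp 1‖ + π
  have hC0 : 0 < C := by positivity
  have hamp : ‖besselAmp z‖ ≤ C := norm_besselAmp_le hz
  have hderiv : ‖besselAmpDeriv z‖ ≤ C / (4 * z) := by
    rw [norm_besselAmpDeriv]
    calc _ ≤ C / (4 * z ^ 2) := by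
          gcongr
          exact (abs_besselOsc_le_norm_besselAmp z).trans hamp
      _ ≤ _ := by
          gcongr
          nlinarith
  refine (norm_sub_le _ _).trans ?_
  rw [norm_div, norm_div, norm_real, norm_real, Real.norm_of_nonneg (by positivity),
    Real.norm_of_nonneg (by positivity)]
  calc _ ≤ C / (4 * z) / (2 * √z) + C / (4 * z * √z) := by gcongr
    _ = 3 / 8 * (C / (z * √z)) := by field_simp; norm_num
    _ ≤ 1 * (C / (z * √z)) := by gcongr; norm_num
    _ = C / (z * √z) := one_mul _

theorem exists_amplitude_besselDeriv_zero : ∃ C : ℝ, 0 < C ∧ ∃ A A' : ℝ → ℂ,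
    (∀ z, 0 < z → HasDerivAt A (A' z) z) ∧ ContinuousOn A' (Ioi 0) ∧
    (∀ z, 1 ≤ z → ‖A z‖ ≤ C / √z) ∧ (∀ z, 1 ≤ z → ‖A' z‖ ≤ C / (z * √z)) ∧
    ∀ z, 0 < z → (besselDeriv 0 z : ℂ) = A z * exp (z * I) + conj (A z) * exp ((-z : ℝ) * I) := by
  set C : ℝ := ‖besselAmp 1‖ + π
  have hC0 : 0 < C := by positivity
  refine ⟨C, hC0, fun z ↦ besselAmp z / (2 * √z : ℝ),
    fun z ↦ besselAmpDeriv z / (2 * √z : ℝ) - besselAmp z / (4 * z * √z : ℝ),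
    fun z hz ↦ ?_, ?_, fun z hz ↦ ?_, fun z hz ↦ norm_besselAmpDeriv_div_sub_le hz,
    fun z hz ↦ besselDeriv_zero_eq_amp hz⟩
  · have hs : (√z : ℂ) ≠ 0 := mod_cast (Real.sqrt_pos.2 hz).ne'
    have hsq : (z : ℂ) = (√z : ℂ) ^ 2 := mod_cast (Real.sq_sqrt hz.le).symm
    refine ((hasDerivAt_besselAmp hz).div ((Real.hasDerivAt_sqrt hz.ne').const_mul 2).ofReal_comp
      (by simpa using hs)).congr_deriv ?_
    push_cast
    rw [hsq]
    field_simp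
    ring
  · have hsqrt : ∀ z ∈ Ioi (0 : ℝ), √z ≠ 0 := fun z hz ↦ (Real.sqrt_pos.2 hz).ne'
    have hamp : ContinuousOn besselAmp (Ioi 0) := fun z hz ↦
      (hasDerivAt_besselAmp hz).continuousAt.continuousWithinAt
    refine (continuousOn_besselAmpDeriv.div (by fun_prop) fun z hz ↦ ?_).sub
      (hamp.div (by fun_prop) fun z hz ↦ ?_)
    · simpa using hsqrt z hz
    · simpa [hsqrt z hz] using (mem_Ioi.1 hz).ne'
  · rw [norm_div, norm_real, Real.norm_of_nonneg (by positivity)]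
    calc ‖besselAmp z‖ / (2 * √z) ≤ C / (1 * √z) := by
          gcongr
          exacts [norm_besselAmp_le hz, one_le_two]
      _ = C / √z := by rw [one_mul]

end Bessel

section DispersionRelation

open Set

theorem hasDerivAt_real_tanh (s : ℝ) : HasDerivAt Real.tanh (1 - Real.tanh s ^ 2) s := by
  have hquot := (Real.hasDerivAt_sinh s).div (Real.hasDerivAt_cosh s) (Real.cosh_pos s).ne'
  have htanh : Real.tanh = Real.sinh / Real.cosh := funext Real.tanh_eq_sinh_div_cosh
  rw [htanh]
  refine hquot.congr_deriv ?_
  simp only [Pi.div_apply]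
  field_simp [(Real.cosh_pos s).ne']

theorem continuous_real_tanh : Continuous Real.tanh :=
  continuous_iff_continuousAt.2 fun s ↦ (hasDerivAt_real_tanh s).continuousAt

theorem one_sub_tanh_sq (s : ℝ) : 1 - Real.tanh s ^ 2 = 1 / Real.cosh s ^ 2 := by
  have hcosh := (Real.cosh_pos s).ne'
  rw [Real.tanh_eq_sinh_div_cosh]
  field_simp
  linarith [Real.cosh_sq s]

theorem div_one_add_le_tanh {s : ℝ} (hs : 0 ≤ s) : s / (1 + s) ≤ Real.tanh s := by
  rw [Real.tanh_eq_sinh_div_cosh, div_le_div_iff₀ (by linarith) (Real.cosh_pos s)]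
  have hsinh : s ≤ Real.sinh s := Real.self_le_sinh_iff.2 hs
  have hdiff : Real.cosh s - Real.sinh s ≤ 1 := by
    rw [Real.cosh_sub_sinh]
    exact Real.exp_le_one_iff.2 (by linarith)
  nlinarith

theorem tanh_pos_of_pos {s : ℝ} (hs : 0 < s) : 0 < Real.tanh s :=
  (div_pos hs (by linarith)).trans_le (div_one_add_le_tanh hs.le)

theorem one_add_sq_div_two_le_cosh (s : ℝ) : 1 + s ^ 2 / 2 ≤ Real.cosh s := by
  have hdouble : Real.cosh s = 1 + 2 * Real.sinh (s / 2) ^ 2 := by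
    have := Real.cosh_two_mul (s / 2)
    rw [mul_div_cancel₀ s two_ne_zero, Real.cosh_sq] at this
    linarith
  have hsinh : (s / 2) ^ 2 ≤ Real.sinh (s / 2) ^ 2 := by
    rw [sq_le_sq, Real.abs_sinh]
    exact Real.self_le_sinh_iff.2 (abs_nonneg _)
  linarith

/-- The radial profile `s ↦ (s tanh s)^{1/2}` of the symbol `m₂`. -/
def dispersion (s : ℝ) : ℝ := √(s * Real.tanh s)

/-- The first derivative of `dispersion` on `(0, ∞)`. -/
def dispersionDeriv (s : ℝ) : ℝ :=
  (Real.tanh s + s * (1 - Real.tanh s ^ 2)) / (2 * dispersion s)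

/-- The second derivative of `dispersion` on `(0, ∞)`, as minus a sum of two nonnegative terms. -/
def dispersionDeriv2 (s : ℝ) : ℝ :=
  -((Real.tanh s - s * (1 - Real.tanh s ^ 2)) ^ 2 +
    4 * s ^ 2 * Real.tanh s ^ 2 * (1 - Real.tanh s ^ 2)) / (4 * dispersion s ^ 3)

theorem dispersion_pos {s : ℝ} (hs : 0 < s) : 0 < dispersion s :=
  Real.sqrt_pos.2 (mul_pos hs (tanh_pos_of_pos hs))

theorem dispersion_sq {s : ℝ} (hs : 0 < s) : dispersion s ^ 2 = s * Real.tanh s :=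
  Real.sq_sqrt (mul_pos hs (tanh_pos_of_pos hs)).le

theorem continuous_dispersion : Continuous dispersion := by
  have := continuous_real_tanh
  unfold dispersion
  fun_prop

theorem hasDerivAt_dispersion {s : ℝ} (hs : 0 < s) :
    HasDerivAt dispersion (dispersionDeriv s) s := by
  have hsqrt := ((hasDerivAt_id s).mul (hasDerivAt_real_tanh s)).sqrt
    (mul_pos hs (tanh_pos_of_pos hs)).ne'
  refine HasDerivAt.congr_deriv (f := dispersion) hsqrt ?_
  simp [dispersionDeriv, dispersion]

theorem hasDerivAt_dispersionDeriv {s : ℝ} (hs : 0 < s) :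
    HasDerivAt dispersionDeriv (dispersionDeriv2 s) s := by
  have hpos := dispersion_pos hs
  have hnum := (hasDerivAt_real_tanh s).add
    ((hasDerivAt_id s).mul (((hasDerivAt_real_tanh s).pow 2).const_sub 1))
  have hquot := hnum.div ((hasDerivAt_dispersion hs).const_mul 2) (by positivity)
  refine HasDerivAt.congr_deriv (f := dispersionDeriv) hquot ?_
  simp only [Pi.pow_apply, one_mul, id_eq, Nat.cast_ofNat, Nat.add_one_sub_one, pow_one, mul_neg,
    Pi.add_apply, Pi.mul_apply, dispersionDeriv, dispersionDeriv2, neg_add_rev]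
  field_simp
  rw [dispersion_sq hs]
  ring

theorem continuousOn_dispersionDeriv2 : ContinuousOn dispersionDeriv2 (Ioi 0) := by
  have htanh := continuous_real_tanh
  have hdisp := continuous_dispersion
  unfold dispersionDeriv2
  refine ContinuousOn.div (by fun_prop) (by fun_prop) fun s hs ↦ ?_
  have := dispersion_pos hs
  positivity

theorem half_div_sqrt_le_dispersionDeriv {s : ℝ} (hs : 0 < s) :
    (1 / 2) / √(1 + s) ≤ dispersionDeriv s := by
  have hpos := dispersion_pos hs
  have htanh := tanh_pos_of_pos hs
  have hsech : 0 < 1 - Real.tanh s ^ 2 := by linarith [Real.tanh_sq_lt_one s]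
  have hle : dispersion s ≤ Real.tanh s * √(1 + s) := by
    unfold dispersion
    rw [Real.sqrt_le_left (by positivity), mul_pow, Real.sq_sqrt (by linarith)]
    have hlow := div_one_add_le_tanh hs.le
    rw [div_le_iff₀ (by linarith)] at hlow
    nlinarith
  unfold dispersionDeriv
  rw [div_le_div_iff₀ (by positivity) (by positivity)]
  have : 0 < s * (1 - Real.tanh s ^ 2) * √(1 + s) := by positivity
  nlinarith

theorem neg_dispersionDeriv2_eq {s : ℝ} (hs : 0 < s) :
    -dispersionDeriv2 s = (Real.tanh s - s * (1 - Real.tanh s ^ 2)) ^ 2 / (4 * dispersion s ^ 3) +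
      dispersion s * (1 - Real.tanh s ^ 2) := by
  have hpos := dispersion_pos hs
  have hpow : dispersion s ^ 4 = s ^ 2 * Real.tanh s ^ 2 := by
    rw [show dispersion s ^ 4 = (dispersion s ^ 2) ^ 2 by ring, dispersion_sq hs]
    ring
  unfold dispersionDeriv2
  field_simp
  linear_combination -(4 * (1 - Real.tanh s ^ 2)) * hpow

theorem le_neg_dispersionDeriv2_of_le_one {s : ℝ} (hs : 0 < s) (hs1 : s ≤ 1) :
    s / 6 ≤ -dispersionDeriv2 s := by
  have hpos := dispersion_pos hs
  have hcosh : Real.cosh s ^ 2 ≤ 3 :=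
    calc Real.cosh s ^ 2 ≤ Real.exp (s ^ 2 / 2) ^ 2 :=
          pow_le_pow_left₀ (Real.cosh_pos s).le (Real.cosh_le_exp_half_sq s) 2
      _ = Real.exp (s ^ 2) := by
          rw [← Real.exp_nat_mul]
          congr 1
          push_cast
          ring
      _ ≤ Real.exp 1 := Real.exp_le_exp.2 (by nlinarith)
      _ ≤ 3 := by linarith [Real.exp_one_lt_d9]
  have hsech : 1 / 3 ≤ 1 - Real.tanh s ^ 2 := by
    rw [one_sub_tanh_sq]
    exact one_div_le_one_div_of_le (by have := Real.cosh_pos s; positivity) hcosh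
  have hdisp : s / 2 ≤ dispersion s := by
    refine Real.le_sqrt_of_sq_le ?_
    have : s / 2 ≤ s / (1 + s) := by gcongr; linarith
    nlinarith [div_one_add_le_tanh hs.le]
  calc s / 6 = s / 2 * (1 / 3) := by ring
    _ ≤ dispersion s * (1 - Real.tanh s ^ 2) := by gcongr
    _ ≤ -dispersionDeriv2 s := by
        rw [neg_dispersionDeriv2_eq hs]
        exact le_add_of_nonneg_left (by positivity)

theorem le_neg_dispersionDeriv2_of_one_le {s : ℝ} (hs : 1 ≤ s) :
    1 / (1600 * √(1 + s) ^ 3) ≤ -dispersionDeriv2 s := by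
  have hs0 : 0 < s := by linarith
  have hpos := dispersion_pos hs0
  have hsech : 0 < 1 - Real.tanh s ^ 2 := by linarith [Real.tanh_sq_lt_one s]
  have htanh : 1 / 2 ≤ Real.tanh s := by
    refine le_trans ?_ (div_one_add_le_tanh hs0.le)
    rw [div_le_div_iff₀ (by norm_num) (by linarith)]
    linarith
  have hsecond : s * (1 - Real.tanh s ^ 2) ≤ 4 / 9 := by
    have hcosh : (1 + s ^ 2 / 2) ^ 2 ≤ Real.cosh s ^ 2 :=
      pow_le_pow_left₀ (by positivity) (one_add_sq_div_two_le_cosh s) 2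
    rw [one_sub_tanh_sq, mul_one_div, div_le_div_iff₀ (pow_pos (Real.cosh_pos s) 2) (by norm_num)]
    nlinarith [sq_nonneg (s ^ 2 - 1), sq_nonneg (s - 1)]
  have hdiff : 1 / 20 ≤ Real.tanh s - s * (1 - Real.tanh s ^ 2) := by linarith
  have hdisp : dispersion s ≤ √(1 + s) := by
    refine Real.sqrt_le_sqrt ?_
    nlinarith [Real.tanh_lt_one s]
  calc 1 / (1600 * √(1 + s) ^ 3) = (1 / 20) ^ 2 / (4 * √(1 + s) ^ 3) := by
        field_simp
        norm_num
    _ ≤ (Real.tanh s - s * (1 - Real.tanh s ^ 2)) ^ 2 / (4 * dispersion s ^ 3) := by gcongr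
    _ ≤ -dispersionDeriv2 s := by
        rw [neg_dispersionDeriv2_eq hs0]
        exact le_add_of_nonneg_right (by positivity)

theorem le_neg_dispersionDeriv2 {s : ℝ} (hs : 0 < s) :
    s / (1600 * √(1 + s) ^ 5) ≤ -dispersionDeriv2 s := by
  have hsqrt : 1 ≤ √(1 + s) := Real.one_le_sqrt.2 (by linarith)
  rcases le_total s 1 with hs1 | hs1
  · refine le_trans ?_ (le_neg_dispersionDeriv2_of_le_one hs hs1)
    have := one_le_pow₀ hsqrt (n := 5)
    gcongr
    linarith
  · refine le_trans ?_ (le_neg_dispersionDeriv2_of_one_le hs1)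
    have hsq : √(1 + s) ^ 2 = 1 + s := Real.sq_sqrt (by linarith)
    rw [div_le_div_iff₀ (by positivity) (by positivity),
      show √(1 + s) ^ 5 = √(1 + s) ^ 2 * √(1 + s) ^ 3 by ring, hsq]
    nlinarith [pow_pos (one_pos.trans_le hsqrt) 3]

/-- The radial profile `r ↦ ν⁻¹ (ν r tanh (ν r))^{1/2}` of the symbol `m₂(√μ ξ) / √μ`, where
`ν = √μ`. -/
def scaledDispersion (ν r : ℝ) : ℝ := dispersion (ν * r) / ν

/-- The phase `z r - t ν⁻¹ (ν r tanh (ν r))^{1/2}` of the radial dispersive kernel. -/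
def dispersivePhase (ν t z r : ℝ) : ℝ := z * r - t * scaledDispersion ν r

theorem continuous_scaledDispersion (ν : ℝ) : Continuous (scaledDispersion ν) := by
  have := continuous_dispersion
  unfold scaledDispersion
  fun_prop

theorem continuous_dispersivePhase (ν t z : ℝ) : Continuous (dispersivePhase ν t z) := by
  have := continuous_scaledDispersion ν
  unfold dispersivePhase
  fun_prop

theorem hasDerivAt_scaledDispersion {ν r : ℝ} (hν : 0 < ν) (hr : 0 < r) :
    HasDerivAt (scaledDispersion ν) (dispersionDeriv (ν * r)) r := by
  have hcomp := (hasDerivAt_dispersion (mul_pos hν hr)).comp r ((hasDerivAt_id r).const_mul ν)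
  refine HasDerivAt.congr_deriv (f := scaledDispersion ν) (hcomp.div_const ν) ?_
  field_simp

theorem hasDerivAt_dispersivePhase {ν t z r : ℝ} (hν : 0 < ν) (hr : 0 < r) :
    HasDerivAt (dispersivePhase ν t z) (z - t * dispersionDeriv (ν * r)) r := by
  have hsub := ((hasDerivAt_id r).const_mul z).sub
    ((hasDerivAt_scaledDispersion hν hr).const_mul t)
  exact HasDerivAt.congr_deriv (f := dispersivePhase ν t z) hsub (by ring)

theorem hasDerivAt_dispersivePhase_deriv {ν t z r : ℝ} (hν : 0 < ν) (hr : 0 < r) :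
    HasDerivAt (fun r ↦ z - t * dispersionDeriv (ν * r))
      (t * (ν * -dispersionDeriv2 (ν * r))) r := by
  have hcomp := (hasDerivAt_dispersionDeriv (mul_pos hν hr)).comp r
    ((hasDerivAt_id r).const_mul ν)
  exact HasDerivAt.congr_deriv (f := fun r ↦ z - t * dispersionDeriv (ν * r))
    ((hcomp.const_mul t).const_sub z) (by ring)

theorem continuousOn_dispersivePhase_deriv2 {ν t N b : ℝ} (hν : 0 < ν) (hN : 0 < N) :
    ContinuousOn (fun r ↦ t * (ν * -dispersionDeriv2 (ν * r))) (Icc N b) := by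
  have hcomp : ContinuousOn (fun r ↦ dispersionDeriv2 (ν * r)) (Icc N b) :=
    continuousOn_dispersionDeriv2.comp (by fun_prop) fun r hr ↦ mul_pos hν (hN.trans_le hr.1)
  fun_prop

section DyadicInterval

variable {ν N q r : ℝ}

theorem sqrt_one_add_mul_le (hν : 0 ≤ ν) (hq : 1 ≤ q) (hνN : ν * N ≤ q ^ 2) (hr : r ≤ 2 * N) :
    √(1 + ν * r) ≤ √3 * q := by
  rw [Real.sqrt_le_left (by positivity), mul_pow, Real.sq_sqrt (by norm_num)]
  nlinarith

theorem le_dispersionDeriv_of_mem_Icc (hν : 0 < ν) (hN : 0 < N) (hq : 1 ≤ q)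
    (hνN : ν * N ≤ q ^ 2) (hr : r ∈ Icc N (2 * N)) :
    1 / (4 * q) ≤ dispersionDeriv (ν * r) := by
  have hr0 : 0 < r := hN.trans_le hr.1
  have hsqrt := sqrt_one_add_mul_le hν.le hq hνN hr.2
  have hthree : √3 ≤ 2 := by
    rw [Real.sqrt_le_left (by norm_num)]
    norm_num
  refine le_trans ?_ (half_div_sqrt_le_dispersionDeriv (mul_pos hν hr0))
  rw [div_le_div_iff₀ (by positivity) (by positivity)]
  nlinarith

theorem le_neg_dispersionDeriv2_of_mem_Icc (hν : 0 < ν) (hN : 0 < N) (hq : 1 ≤ q)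
    (hνN : ν * N ≤ q ^ 2) (hr : r ∈ Icc N (2 * N)) :
    ν * N / (25600 * q ^ 5) ≤ -dispersionDeriv2 (ν * r) := by
  have hr0 : 0 < r := hN.trans_le hr.1
  have hthree : √3 ^ 5 ≤ 16 := by
    have hsq : √3 ^ 2 = 3 := Real.sq_sqrt (by norm_num)
    have hle : √3 ≤ 1.75 := by
      rw [Real.sqrt_le_left (by norm_num)]
      norm_num
    calc √3 ^ 5 = (√3 ^ 2) ^ 2 * √3 := by ring
      _ ≤ 16 := by rw [hsq]; linarith
  have hsqrt : √(1 + ν * r) ^ 5 ≤ 16 * q ^ 5 :=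
    calc √(1 + ν * r) ^ 5 ≤ (√3 * q) ^ 5 := by
          gcongr
          exact sqrt_one_add_mul_le hν.le hq hνN hr.2
      _ = √3 ^ 5 * q ^ 5 := by ring
      _ ≤ 16 * q ^ 5 := by gcongr
  calc ν * N / (25600 * q ^ 5) = ν * N / (1600 * (16 * q ^ 5)) := by ring
    _ ≤ ν * r / (1600 * √(1 + ν * r) ^ 5) := by
        gcongr
        exact hr.1
    _ ≤ -dispersionDeriv2 (ν * r) := le_neg_dispersionDeriv2 (mul_pos hν hr0)

end DyadicInterval

end DispersionRelation

section RadialKernel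

open Complex Set intervalIntegral
open scoped Real ComplexConjugate

theorem norm_integral_exp_dispersivePhase_le_of_abs_le {ν N q t z x : ℝ} (hν : 0 < ν) (hN : 0 < N)
    (hq : 1 ≤ q) (hνN : ν * N ≤ q ^ 2) (ht : 0 < t) (hz : |z| ≤ t / (8 * q))
    (hx : x ∈ Icc N (2 * N)) :
    ‖∫ r in N..x, exp (dispersivePhase ν t z r * I)‖ ≤ 4 / (t / (8 * q)) := by
  have hmem : ∀ r ∈ Icc N x, r ∈ Icc N (2 * N) := fun r hr ↦ ⟨hr.1, hr.2.trans hx.2⟩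
  refine norm_integral_exp_le_of_le_abs_deriv hx.1 (by positivity)
    (fun r hr ↦ hasDerivAt_dispersivePhase hν (hN.trans_le hr.1))
    (fun r hr ↦ hasDerivAt_dispersivePhase_deriv hν (hN.trans_le hr.1))
    (continuousOn_dispersivePhase_deriv2 hν hN) (fun r hr ↦ ?_) (fun r hr ↦ ?_)
  · have : 0 ≤ -dispersionDeriv2 (ν * r) :=
      le_trans (by positivity) (le_neg_dispersionDeriv2_of_mem_Icc hν hN hq hνN (hmem r hr))
    positivity
  · have hgroup : t / (8 * q) + t / (8 * q) ≤ t * dispersionDeriv (ν * r) :=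
      calc t / (8 * q) + t / (8 * q) = t * (1 / (4 * q)) := by field_simp; norm_num
        _ ≤ t * dispersionDeriv (ν * r) := by
            gcongr
            exact le_dispersionDeriv_of_mem_Icc hν hN hq hνN (hmem r hr)
    refine le_abs.2 (Or.inr ?_)
    linarith [le_abs_self z]

theorem norm_integral_exp_dispersivePhase_le {ν N q t l x : ℝ} (z : ℝ) (hν : 0 < ν) (hN : 0 < N)
    (hq : 1 ≤ q) (hνN : ν * N ≤ q ^ 2) (ht : 0 < t) (hl : 0 < l)
    (hl2 : l ^ 2 = t * (ν * (ν * N / (25600 * q ^ 5)))) (hx : x ∈ Icc N (2 * N)) :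
    ‖∫ r in N..x, exp (dispersivePhase ν t z r * I)‖ ≤ 10 / l := by
  refine norm_integral_exp_le_of_le_deriv2 hx.1 hl (continuous_dispersivePhase ν t z)
    (fun r hr ↦ hasDerivAt_dispersivePhase hν (hN.trans_le hr.1))
    (fun r hr ↦ hasDerivAt_dispersivePhase_deriv hν (hN.trans_le hr.1))
    (continuousOn_dispersivePhase_deriv2 hν hN) fun r hr ↦ ?_
  rw [hl2]
  gcongr
  exact le_neg_dispersionDeriv2_of_mem_Icc hν hN hq hνN ⟨hr.1, hr.2.trans hx.2⟩

theorem norm_integral_id_mul_exp_dispersivePhase_le {ν N q t z : ℝ} (hν : 0 < ν) (hN : 0 < N)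
    (hq : 1 ≤ q) (hνN : ν * N ≤ q ^ 2) (ht : 0 < t) (hz : |z| ≤ t / (8 * q)) :
    ‖∫ r in N..(2 * N), (r : ℂ) * exp (dispersivePhase ν t z r * I)‖ ≤ 96 * N * q / t := by
  refine (norm_integral_mul_exp_le (D₀ := 2 * N) (D := 1) (by linarith)
    (continuous_dispersivePhase ν t z) (fun r _ ↦ (hasDerivAt_id r).ofReal_comp)
    continuousOn_const
    (fun x hx ↦ norm_integral_exp_dispersivePhase_le_of_abs_le hν hN hq hνN ht hz hx)
    (by simp [abs_of_pos hN]) (by simp)).trans_eq ?_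
  field_simp
  ring

theorem hasDerivAt_id_mul_comp_mul {A A' : ℝ → ℂ} {ρ r : ℝ}
    (hA : HasDerivAt A (A' (ρ * r)) (ρ * r)) :
    HasDerivAt (fun r : ℝ ↦ (r : ℂ) * A (ρ * r)) (A (ρ * r) + r * (ρ * A' (ρ * r))) r := by
  have hcomp := hA.scomp r ((hasDerivAt_id r).const_mul ρ)
  have hmul := (hasDerivAt_id r).ofReal_comp.mul hcomp
  refine HasDerivAt.congr_deriv (f := fun r : ℝ ↦ (r : ℂ) * A (ρ * r)) hmul ?_
  simp

theorem div_mul_sqrt_le {ν N q t l ρ : ℝ} (hν : 0 < ν) (hN : 0 < N) (hq : 1 ≤ q) (ht : 0 < t)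
    (hl : 0 < l) (hl2 : l ^ 2 = t * (ν * (ν * N / (25600 * q ^ 5)))) (hρ : t / (8 * q) ≤ ρ) :
    N / (l * √(ρ * N)) ≤ 500 * q ^ 3 / (ν * t) := by
  have hρ0 : 0 < ρ := lt_of_lt_of_le (by positivity) hρ
  refine (pow_le_pow_iff_left₀ (by positivity) (by positivity) two_ne_zero).1 ?_
  rw [div_pow, mul_pow, hl2, Real.sq_sqrt (by positivity)]
  calc N ^ 2 / (t * (ν * (ν * N / (25600 * q ^ 5))) * (ρ * N))
      ≤ N ^ 2 / (t * (ν * (ν * N / (25600 * q ^ 5))) * (t / (8 * q) * N)) := by gcongr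
    _ = 204800 * (q ^ 3 / (ν * t)) ^ 2 := by field_simp; norm_num
    _ ≤ 250000 * (q ^ 3 / (ν * t)) ^ 2 := by gcongr; norm_num
    _ = (500 * q ^ 3 / (ν * t)) ^ 2 := by ring

section Amplitude

variable {A A' : ℝ → ℂ} {C : ℝ}

theorem norm_deriv_id_mul_comp_mul_le (hAC : ∀ z, 1 ≤ z → ‖A z‖ ≤ C / √z)
    (hAC' : ∀ z, 1 ≤ z → ‖A' z‖ ≤ C / (z * √z)) {ρ r : ℝ} (hρ : 0 < ρ) (hr : 0 < r)
    (hρr : 1 ≤ ρ * r) : ‖A (ρ * r) + r * (ρ * A' (ρ * r))‖ ≤ 2 * C / √(ρ * r) := by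
  refine (norm_add_le _ _).trans ?_
  rw [norm_mul, norm_mul, norm_real, norm_real, Real.norm_of_nonneg hr.le,
    Real.norm_of_nonneg hρ.le]
  calc ‖A (ρ * r)‖ + r * (ρ * ‖A' (ρ * r)‖)
      ≤ C / √(ρ * r) + r * (ρ * (C / (ρ * r * √(ρ * r)))) := by
        gcongr
        exacts [hAC _ hρr, hAC' _ hρr]
    _ = 2 * C / √(ρ * r) := by
        field_simp
        norm_num

theorem norm_integral_amplitude_mul_exp_le (hC : 0 ≤ C)
    (hA : ∀ z, 0 < z → HasDerivAt A (A' z) z) (hA' : ContinuousOn A' (Ioi 0))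
    (hAC : ∀ z, 1 ≤ z → ‖A z‖ ≤ C / √z) (hAC' : ∀ z, 1 ≤ z → ‖A' z‖ ≤ C / (z * √z))
    {ν N q t ρ : ℝ} (z : ℝ) (hν : 0 < ν) (hN : 0 < N) (hq : 1 ≤ q) (hνN : ν * N ≤ q ^ 2)
    (ht : 0 < t) (hρ : t / (8 * q) ≤ ρ) (hρN : 1 ≤ ρ * N) :
    ‖∫ r in N..(2 * N), r * A (ρ * r) * exp (dispersivePhase ν t z r * I)‖ ≤
      20000 * C * q ^ 3 / (ν * t) := by
  have hρ0 : 0 < ρ := lt_of_lt_of_le (by positivity) hρ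
  set l : ℝ := √(t * (ν * (ν * N / (25600 * q ^ 5))))
  have hl2 : l ^ 2 = t * (ν * (ν * N / (25600 * q ^ 5))) := Real.sq_sqrt (by positivity)
  have hl : 0 < l := Real.sqrt_pos.2 (by positivity)
  have hpos : ∀ r ∈ Icc N (2 * N), 0 < ρ * r := fun r hr ↦ mul_pos hρ0 (hN.trans_le hr.1)
  have hone : ∀ r ∈ Icc N (2 * N), 1 ≤ ρ * r := fun r hr ↦
    hρN.trans (mul_le_mul_of_nonneg_left hr.1 hρ0.le)
  have hmono : ∀ r ∈ Icc N (2 * N), √(ρ * N) ≤ √(ρ * r) := fun r hr ↦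
    Real.sqrt_le_sqrt (mul_le_mul_of_nonneg_left hr.1 hρ0.le)
  have hend : 2 * N ∈ Icc N (2 * N) := ⟨by linarith, le_rfl⟩
  have hAcont : ContinuousOn (fun r ↦ A (ρ * r)) (Icc N (2 * N)) :=
    ContinuousOn.comp (t := Ioi 0) (fun z hz ↦ (hA z hz).continuousAt.continuousWithinAt)
      (by fun_prop) hpos
  have hAcont' : ContinuousOn (fun r ↦ A' (ρ * r)) (Icc N (2 * N)) :=
    hA'.comp (by fun_prop) hpos
  have hbound := norm_integral_mul_exp_le (D₀ := 2 * N * (C / √(ρ * N))) (D := 2 * C / √(ρ * N))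
    (by linarith) (continuous_dispersivePhase ν t z)
    (fun r hr ↦ hasDerivAt_id_mul_comp_mul (hA _ (hpos r hr)))
    (hAcont.add (continuous_ofReal.continuousOn.mul (continuousOn_const.mul hAcont')))
    (fun x hx ↦ norm_integral_exp_dispersivePhase_le z hν hN hq hνN ht hl hl2 hx)
    (by
      rw [norm_mul, norm_real, Real.norm_of_nonneg (by positivity)]
      gcongr
      exact (hAC _ (hone _ hend)).trans
        (div_le_div_of_nonneg_left hC (Real.sqrt_pos.2 (by positivity)) (hmono _ hend)))
    (fun r hr ↦ (norm_deriv_id_mul_comp_mul_le hAC hAC' hρ0 (hN.trans_le hr.1) (hone r hr)).trans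
      (div_le_div_of_nonneg_left (by positivity) (Real.sqrt_pos.2 (by positivity))
        (hmono r hr)))
  calc _ ≤ _ := hbound
    _ = 40 * C * (N / (l * √(ρ * N))) := by field_simp; ring
    _ ≤ 40 * C * (500 * q ^ 3 / (ν * t)) :=
        mul_le_mul_of_nonneg_left (div_mul_sqrt_le hν hN hq ht hl hl2 hρ) (by positivity)
    _ = 20000 * C * q ^ 3 / (ν * t) := by ring

end Amplitude

/-- The convolution kernel of the frequency-localised propagator
`𝟙_{N < |ξ| < 2N} exp (-i t m₂(√μ ξ) / √μ)`, with `ν = √μ`, at distance `ρ / (2π)` from the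
origin, written in polar coordinates. -/
def radialKernel (ν t ρ N : ℝ) : ℂ :=
  ∫ r in N..(2 * N),
    (r : ℂ) * (exp ((-(t * scaledDispersion ν r) : ℝ) * I) * (besselDeriv 0 (ρ * r) : ℂ))

theorem exp_neg_scaledDispersion_mul (ν t z r : ℝ) :
    exp ((-(t * scaledDispersion ν r) : ℝ) * I) * exp ((z * r : ℝ) * I) =
      exp (dispersivePhase ν t z r * I) := by
  rw [← exp_add, dispersivePhase]
  push_cast
  ring_nf

theorem norm_radialKernel_le (ν t ρ : ℝ) {N : ℝ} (hN : 0 < N) :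
    ‖radialKernel ν t ρ N‖ ≤ 4 * π * N ^ 2 := by
  have hbound := norm_integral_le_of_norm_le_const (a := N) (b := 2 * N)
    (C := 2 * N * (2 * π))
    (f := fun r : ℝ ↦ (r : ℂ) * (exp ((-(t * scaledDispersion ν r) : ℝ) * I) *
      (besselDeriv 0 (ρ * r) : ℂ))) (fun r hr ↦ by
      rw [uIoc_of_le (by linarith)] at hr
      rw [norm_mul, norm_mul, norm_exp_ofReal_mul_I, one_mul, norm_real, norm_real,
        Real.norm_of_nonneg (hN.trans hr.1).le, Real.norm_eq_abs]
      exact mul_le_mul hr.2 (abs_besselDeriv_le 0 _) (abs_nonneg _) (by positivity))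
  refine hbound.trans_eq ?_
  rw [show 2 * N - N = N by ring, abs_of_pos hN]
  ring

theorem radialKernel_eq_integral_integral {N : ℝ} (ν t ρ : ℝ) (hN : 0 ≤ N) :
    radialKernel ν t ρ N = ∫ θ in (-π)..π, ∫ r in N..(2 * N),
      (r : ℂ) * exp (dispersivePhase ν t (ρ * Real.cos θ) r * I) := by
  have hπ : -π ≤ π := by linarith [Real.pi_pos]
  have hcont : Continuous (Function.uncurry fun r θ : ℝ ↦
      (r : ℂ) * exp (dispersivePhase ν t (ρ * Real.cos θ) r * I)) := by
    have := continuous_scaledDispersion ν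
    unfold dispersivePhase Function.uncurry
    fun_prop
  rw [integral_of_le hπ, ← intervalIntegral_integral_swap]
  · refine integral_congr fun r _ ↦ ?_
    rw [besselDeriv_zero_eq_integral_exp, ← integral_of_le hπ,
      ← intervalIntegral.integral_const_mul, ← intervalIntegral.integral_const_mul]
    refine integral_congr fun θ _ ↦ ?_
    rw [← exp_neg_scaledDispersion_mul, mul_right_comm]
  · rw [Measure.prod_restrict, uIoc_of_le (by linarith)]
    exact (hcont.continuousOn.integrableOn_compact (isCompact_Icc.prod isCompact_Icc)).mono_set
      (prod_mono Ioc_subset_Icc_self Ioc_subset_Icc_self)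

theorem norm_radialKernel_le_of_le {ν N q t ρ : ℝ} (hν : 0 < ν) (hN : 0 < N) (hq : 1 ≤ q)
    (hνN : ν * N ≤ q ^ 2) (ht : 0 < t) (hρ : 0 ≤ ρ) (hρt : ρ ≤ t / (8 * q)) :
    ‖radialKernel ν t ρ N‖ ≤ 1000 * q ^ 3 / (ν * t) := by
  rw [radialKernel_eq_integral_integral ν t ρ hN.le]
  have hbound := norm_integral_le_of_norm_le_const (a := -π) (b := π) (C := 96 * N * q / t)
    fun θ _ ↦ norm_integral_id_mul_exp_dispersivePhase_le (z := ρ * Real.cos θ) hν hN hq hνN ht (by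
      rw [abs_mul, abs_of_nonneg hρ]
      nlinarith [Real.abs_cos_le_one θ])
  have hN' : N ≤ q ^ 2 / ν := by
    rw [le_div_iff₀ hν]
    linarith
  calc _ ≤ 96 * N * q / t * |π - -π| := hbound
    _ = 96 * N * q / t * (2 * π) := by rw [sub_neg_eq_add, ← two_mul, abs_of_pos (by positivity)]
    _ ≤ 96 * (q ^ 2 / ν) * q / t * (2 * 4) := by
        gcongr
        exact Real.pi_le_four
    _ = 768 * q ^ 3 / (ν * t) := by field_simp; norm_num
    _ ≤ 1000 * q ^ 3 / (ν * t) := by gcongr; norm_num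

theorem radialKernel_eq_add {A A' : ℝ → ℂ} (hA : ∀ z, 0 < z → HasDerivAt A (A' z) z)
    (hbessel : ∀ z, 0 < z → (besselDeriv 0 z : ℂ) =
      A z * exp (z * I) + conj (A z) * exp ((-z : ℝ) * I))
    (ν t : ℝ) {ρ N : ℝ} (hρ : 0 < ρ) (hN : 0 < N) :
    radialKernel ν t ρ N =
      (∫ r in N..(2 * N), r * A (ρ * r) * exp (dispersivePhase ν t ρ r * I)) +
        ∫ r in N..(2 * N), r * conj (A (ρ * r)) * exp (dispersivePhase ν t (-ρ) r * I) := by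
  have hpos : ∀ r ∈ Icc N (2 * N), 0 < ρ * r := fun r hr ↦ mul_pos hρ (hN.trans_le hr.1)
  have huIcc : uIcc N (2 * N) = Icc N (2 * N) := uIcc_of_le (by linarith)
  have hAcont : ContinuousOn (fun r ↦ A (ρ * r)) (uIcc N (2 * N)) :=
    ContinuousOn.comp (t := Ioi 0) (fun z hz ↦ (hA z hz).continuousAt.continuousWithinAt)
      (by fun_prop) (huIcc ▸ hpos)
  have hphase := continuous_dispersivePhase ν t ρ
  have hphase' := continuous_dispersivePhase ν t (-ρ)
  have hAconj := continuous_conj.comp_continuousOn hAcont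
  have hofReal : ContinuousOn ((↑) : ℝ → ℂ) (uIcc N (2 * N)) := continuous_ofReal.continuousOn
  rw [← intervalIntegral.integral_add]
  · refine integral_congr fun r hr ↦ ?_
    rw [hbessel _ (hpos r (huIcc ▸ hr)), ← exp_neg_scaledDispersion_mul,
      ← exp_neg_scaledDispersion_mul, neg_mul]
    ring
  · exact ((hofReal.mul hAcont).mul (by fun_prop)).intervalIntegrable
  · exact ((hofReal.mul hAconj).mul (by fun_prop)).intervalIntegrable

theorem exists_norm_radialKernel_le_of_ge : ∃ C : ℝ, 0 < C ∧ ∀ ν N q t ρ : ℝ, 0 < ν → 0 < N →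
    1 ≤ q → ν * N ≤ q ^ 2 → 0 < t → t / (8 * q) ≤ ρ → 1 ≤ ρ * N →
      ‖radialKernel ν t ρ N‖ ≤ C * q ^ 3 / (ν * t) := by
  obtain ⟨C, hC, A, A', hA, hA', hAC, hAC', hbessel⟩ := exists_amplitude_besselDeriv_zero
  refine ⟨40000 * C, by positivity, fun ν N q t ρ hν hN hq hνN ht hρ hρN ↦ ?_⟩
  have hρ0 : 0 < ρ := lt_of_lt_of_le (by positivity) hρ
  rw [radialKernel_eq_add hA hbessel ν t hρ0 hN]
  calc _ ≤ _ := norm_add_le _ _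
    _ ≤ 20000 * C * q ^ 3 / (ν * t) + 20000 * C * q ^ 3 / (ν * t) := by
        refine add_le_add ?_ ?_
        · exact norm_integral_amplitude_mul_exp_le hC.le hA hA' hAC hAC' ρ hν hN hq hνN ht hρ hρN
        · exact norm_integral_amplitude_mul_exp_le hC.le (A := fun z ↦ conj (A z))
            (A' := fun z ↦ conj (A' z)) (fun z hz ↦ (hA z hz).star)
            (continuous_conj.comp_continuousOn hA') (by simpa using hAC) (by simpa using hAC')
            (-ρ) hν hN hq hνN ht hρ hρN
    _ = 40000 * C * q ^ 3 / (ν * t) := by ring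

theorem exists_norm_radialKernel_le : ∃ C : ℝ, 0 < C ∧ ∀ ν N q t ρ : ℝ, 0 < ν → 0 < N → 1 ≤ q →
    ν * N ≤ q ^ 2 → 0 < t → 0 ≤ ρ → ‖radialKernel ν t ρ N‖ ≤ C * q ^ 3 / (ν * t) := by
  obtain ⟨C, hC, hker⟩ := exists_norm_radialKernel_le_of_ge
  refine ⟨1000 + C, by positivity, fun ν N q t ρ hν hN hq hνN ht hρ ↦ ?_⟩
  rcases le_total ρ (t / (8 * q)) with hρt | hρt
  · refine (norm_radialKernel_le_of_le hν hN hq hνN ht hρ hρt).trans ?_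
    gcongr
    linarith
  rcases le_total 1 (ρ * N) with hρN | hρN
  · refine (hker ν N q t ρ hν hN hq hνN ht hρt hρN).trans ?_
    gcongr
    linarith
  have hNν : N ≤ q ^ 2 / ν := by
    rw [le_div_iff₀ hν]
    linarith
  have hNt : N ≤ 8 * q / t := by
    rw [le_div_iff₀ ht]
    rw [div_le_iff₀ (by positivity)] at hρt
    nlinarith
  calc _ ≤ 4 * π * N ^ 2 := norm_radialKernel_le ν t ρ hN
    _ = 4 * π * (N * N) := by ring
    _ ≤ 4 * 4 * ((q ^ 2 / ν) * (8 * q / t)) := by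
        gcongr
        exact Real.pi_le_four
    _ = 128 * q ^ 3 / (ν * t) := by field_simp; norm_num
    _ ≤ (1000 + C) * q ^ 3 / (ν * t) := by gcongr; linarith

end RadialKernel

section PlaneKernel

open Complex Set
open scoped Real ComplexConjugate

/-- The dyadic annulus `N ≤ |ξ| < 2N` in the frequency plane. -/
def dyadicAnnulus (N : ℝ) : Set E2 := {ξ | N ≤ ‖ξ‖ ∧ ‖ξ‖ < 2 * N}

theorem measurableSet_dyadicAnnulus (N : ℝ) : MeasurableSet (dyadicAnnulus N) :=
  (measurableSet_le measurable_const measurable_norm).inter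
    (measurableSet_lt measurable_norm measurable_const)

theorem volume_dyadicAnnulus_lt_top (N : ℝ) : volume (dyadicAnnulus N) < ⊤ :=
  (measure_mono fun ξ hξ ↦ by simpa using hξ.2).trans_lt
    (measure_ball_lt_top (x := (0 : E2)) (r := 2 * N))

theorem m2_eq_dispersion (ξ : E2) : m2 ξ = dispersion ‖ξ‖ := by
  unfold m2 dispersion
  split_ifs with hξ
  · simp [hξ]
  · rw [show ‖ξ‖ * Real.tanh ‖ξ‖ = ‖ξ‖ ^ 2 * (Real.tanh ‖ξ‖ / ‖ξ‖) by field_simp,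
      Real.sqrt_mul (by positivity), Real.sqrt_sq (norm_nonneg ξ)]

theorem one_div_sqrt_mul_m2_eq (μ : ℝ) (ξ : E2) :
    1 / √μ * m2 (√μ • ξ) = scaledDispersion (√μ) ‖ξ‖ := by
  rw [m2_eq_dispersion, scaledDispersion, norm_smul, Real.norm_of_nonneg (Real.sqrt_nonneg μ)]
  ring

theorem setIntegral_dyadicAnnulus_eq_polarCoord {F : Type*} [NormedAddCommGroup F]
    [NormedSpace ℝ F] {N : ℝ} (hN : 0 < N) (f : E2 → F) :
    ∫ ξ in dyadicAnnulus N, f ξ = ∫ p in Ico N (2 * N) ×ˢ Ioo (-π) π,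
      p.1 • f (Complex.orthonormalBasisOneI.repr (Complex.polarCoord.symm p)) := by
  set L : ℂ ≃ₗᵢ[ℝ] E2 := Complex.orthonormalBasisOneI.repr
  have htarget : polarCoord.target ∩ Ico N (2 * N) ×ˢ univ = Ico N (2 * N) ×ˢ Ioo (-π) π := by
    ext p
    simp only [polarCoord_target, mem_inter_iff, mem_prod, mem_univ, and_true, mem_Ioi]
    exact ⟨fun h ↦ ⟨h.2, h.1.2⟩, fun h ↦ ⟨⟨hN.trans_le h.1.1, h.2⟩, h.1⟩⟩
  rw [← integral_indicator (measurableSet_dyadicAnnulus N), ← L.measurePreserving.integral_comp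
    L.toHomeomorph.measurableEmbedding, ← Complex.integral_comp_polarCoord_symm, ← htarget,
    ← setIntegral_indicator (measurableSet_Ico.prod MeasurableSet.univ)]
  refine setIntegral_congr_fun polarCoord.open_target.measurableSet fun p hp ↦ ?_
  have hnorm : ‖L (Complex.polarCoord.symm p)‖ = p.1 := by
    rw [L.norm_map, Complex.norm_polarCoord_symm, abs_of_pos hp.1]
  have hmem : L (Complex.polarCoord.symm p) ∈ dyadicAnnulus N ↔
      p ∈ Ico N (2 * N) ×ˢ (univ : Set ℝ) := by
    simp only [dyadicAnnulus, mem_ofPred_eq, hnorm, mem_prod, mem_Ico, mem_univ, and_true]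
  by_cases hp' : p ∈ Ico N (2 * N) ×ˢ (univ : Set ℝ)
  · simp only [indicator_of_mem hp', indicator_of_mem (hmem.2 hp')]
  · simp only [indicator_of_notMem hp', indicator_of_notMem (mt hmem.1 hp'), smul_zero]

theorem inner_repr_polarCoord_symm (p : ℝ × ℝ) (x : E2) :
    inner ℝ (Complex.orthonormalBasisOneI.repr (Complex.polarCoord.symm p)) x =
      p.1 * ‖x‖ * Real.cos (p.2 - arg (Complex.orthonormalBasisOneI.repr.symm x)) := by
  set L : ℂ ≃ₗᵢ[ℝ] E2 := Complex.orthonormalBasisOneI.repr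
  obtain ⟨y, rfl⟩ := L.surjective x
  rw [L.inner_map_map, L.symm_apply_apply, L.norm_map, Complex.inner,
    Complex.polarCoord_symm_apply, Real.cos_sub]
  simp only [mul_re, conj_re, conj_im, ofReal_re, ofReal_im, add_re, add_im, mul_im, I_re, I_im,
    zero_mul, mul_zero, mul_one, zero_add, add_zero, sub_zero]
  rw [← norm_mul_cos_arg y, ← norm_mul_sin_arg y]
  ring

theorem integral_exp_mul_cos_sub (z α : ℝ) :
    ∫ θ in (-π)..π, exp ((z * Real.cos (θ - α) : ℝ) * I) = (besselDeriv 0 z : ℂ) := by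
  have hper : Function.Periodic (fun θ ↦ exp ((z * Real.cos θ : ℝ) * I)) (2 * π) := fun θ ↦ by
    simp only [Real.cos_add_two_pi]
  have hshift := hper.intervalIntegral_add_eq (-π) (-π - α)
  rw [show -π + 2 * π = π by ring, show -π - α + 2 * π = π - α by ring] at hshift
  rw [besselDeriv_zero_eq_integral_exp, hshift,
    intervalIntegral.integral_comp_sub_right fun θ ↦ exp ((z * Real.cos θ : ℝ) * I)]

/-- The convolution kernel of `𝟙_{N ≤ |D| < 2N} exp (-i t m₂(√μ D) / √μ)`, with `ν = √μ`. -/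
def dispersiveKernel (ν t N : ℝ) (x : E2) : ℂ :=
  ∫ ξ in dyadicAnnulus N,
    exp ((2 * π * inner ℝ ξ x - t * scaledDispersion ν ‖ξ‖ : ℝ) * I)

theorem dispersiveKernel_eq_radialKernel (ν t : ℝ) {N : ℝ} (hN : 0 < N) (x : E2) :
    dispersiveKernel ν t N x = radialKernel ν t (2 * π * ‖x‖) N := by
  set α := arg (Complex.orthonormalBasisOneI.repr.symm x)
  set g : ℝ × ℝ → ℂ := fun p ↦ p.1 * (exp ((-(t * scaledDispersion ν p.1) : ℝ) * I) *
    exp ((2 * π * ‖x‖ * p.1 * Real.cos (p.2 - α) : ℝ) * I)) with hg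
  have hgcont : Continuous g := by
    have := continuous_scaledDispersion ν
    fun_prop
  have hpolar : dispersiveKernel ν t N x = ∫ p in Ico N (2 * N) ×ˢ Ioo (-π) π, g p := by
    unfold dispersiveKernel
    rw [setIntegral_dyadicAnnulus_eq_polarCoord hN]
    refine setIntegral_congr_fun (measurableSet_Ico.prod measurableSet_Ioo) fun p hp ↦ ?_
    beta_reduce
    rw [inner_repr_polarCoord_symm, LinearIsometryEquiv.norm_map, Complex.norm_polarCoord_symm,
      abs_of_pos (hN.trans_le hp.1.1), real_smul]
    simp only [hg]
    rw [← exp_add, ← add_mul, ← ofReal_add]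
    congr 4
    ring
  have hint : IntegrableOn g (Ico N (2 * N) ×ˢ Ioo (-π) π) :=
    (hgcont.continuousOn.integrableOn_compact (isCompact_Icc.prod isCompact_Icc)).mono_set
      (prod_mono Ico_subset_Icc_self Ioo_subset_Icc_self)
  rw [hpolar, Measure.volume_eq_prod, setIntegral_prod _ hint, integral_Ico_eq_integral_Ioc,
    ← intervalIntegral.integral_of_le (by linarith)]
  refine intervalIntegral.integral_congr fun r _ ↦ ?_
  simp only [hg]
  rw [← integral_Ioc_eq_integral_Ioo,
    ← intervalIntegral.integral_of_le (by linarith [Real.pi_pos]),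
    intervalIntegral.integral_const_mul, intervalIntegral.integral_const_mul,
    integral_exp_mul_cos_sub]

theorem dispersiveKernel_neg_neg (ν t N : ℝ) (x : E2) :
    dispersiveKernel ν (-t) N (-x) = conj (dispersiveKernel ν t N x) := by
  unfold dispersiveKernel
  rw [← integral_conj]
  refine integral_congr_ae (Filter.Eventually.of_forall fun ξ ↦ ?_)
  beta_reduce
  rw [← exp_conj, map_mul, conj_I, conj_ofReal, inner_neg_right]
  push_cast
  ring_nf

theorem norm_dispersiveKernel_le (ν t : ℝ) {N : ℝ} (hN : 0 < N) (x : E2) :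
    ‖dispersiveKernel ν t N x‖ ≤ 4 * π * N ^ 2 :=
  dispersiveKernel_eq_radialKernel ν t hN x ▸ norm_radialKernel_le ν t _ hN

theorem volume_real_dyadicAnnulus_le {N : ℝ} (hN : 0 < N) :
    volume.real (dyadicAnnulus N) ≤ 4 * π * N ^ 2 := by
  simpa [dispersiveKernel, abs_of_nonneg measureReal_nonneg] using
    norm_dispersiveKernel_le 0 0 hN 0

theorem exists_norm_dispersiveKernel_le : ∃ C : ℝ, 0 < C ∧ ∀ ν N q t : ℝ, 0 < ν → 0 < N → 1 ≤ q →
    ν * N ≤ q ^ 2 → t ≠ 0 → ∀ x : E2, ‖dispersiveKernel ν t N x‖ ≤ C * q ^ 3 / (ν * |t|) := by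
  obtain ⟨C, hC, hker⟩ := exists_norm_radialKernel_le
  refine ⟨C, hC, fun ν N q t hν hN hq hνN ht x ↦ ?_⟩
  have hpos : ∀ s : ℝ, 0 < s → ∀ y : E2, ‖dispersiveKernel ν s N y‖ ≤ C * q ^ 3 / (ν * s) :=
    fun s hs y ↦ by
      rw [dispersiveKernel_eq_radialKernel ν s hN]
      exact hker ν N q s _ hν hN hq hνN hs (by positivity)
  rcases lt_or_gt_of_ne ht with ht | ht
  · rw [abs_of_neg ht, ← RCLike.norm_conj, ← dispersiveKernel_neg_neg]
    exact hpos _ (by linarith) _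
  · rw [abs_of_pos ht]
    exact hpos t ht x

end PlaneKernel

section DualityMethod

open Set Function
open scoped ComplexConjugate

theorem ennreal_two_mul_le_add_sq (a b : ℝ≥0∞) : 2 * a * b ≤ a ^ 2 + b ^ 2 := by
  rcases eq_or_ne a ⊤ with rfl | ha
  · simp
  rcases eq_or_ne b ⊤ with rfl | hb
  · simp
  lift a to NNReal using ha
  lift b to NNReal using hb
  exact_mod_cast two_mul_le_add_sq a b

theorem lintegral_mul_sq_le {X : Type*} [MeasurableSpace X] {m : Measure X} {f g : X → ℝ≥0∞}
    (hf : AEMeasurable f m) (hg : AEMeasurable g m) :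
    (∫⁻ x, f x * g x ∂m) ^ 2 ≤ (∫⁻ x, f x ^ 2 ∂m) * ∫⁻ x, g x ^ 2 ∂m := by
  have hölder := ENNReal.lintegral_mul_le_Lp_mul_Lq m Real.HolderConjugate.two_two hf hg
  simp only [Pi.mul_apply, ENNReal.rpow_two] at hölder
  calc (∫⁻ x, f x * g x ∂m) ^ 2
      ≤ ((∫⁻ x, f x ^ 2 ∂m) ^ (1 / 2 : ℝ) * (∫⁻ x, g x ^ 2 ∂m) ^ (1 / 2 : ℝ)) ^ 2 := by gcongr
    _ = (∫⁻ x, f x ^ 2 ∂m) * ∫⁻ x, g x ^ 2 ∂m := by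
        rw [mul_pow, ← ENNReal.rpow_two, ← ENNReal.rpow_two, ← ENNReal.rpow_mul,
          ← ENNReal.rpow_mul]
        norm_num

theorem lintegral_sq_le {X : Type*} [MeasurableSpace X] {m : Measure X} {f : X → ℝ≥0∞}
    (hf : AEMeasurable f m) : (∫⁻ x, f x ∂m) ^ 2 ≤ m univ * ∫⁻ x, f x ^ 2 ∂m := by
  simpa using lintegral_mul_sq_le (f := fun _ ↦ 1) aemeasurable_const hf

theorem add_lintegral_sq_le {X : Type*} [MeasurableSpace X] {m : Measure X} {f : X → ℝ≥0∞}
    (hf : AEMeasurable f m) (a : ℝ≥0∞) :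
    (a + ∫⁻ x, f x ∂m) ^ 2 ≤ 2 * a ^ 2 + 2 * m univ * ∫⁻ x, f x ^ 2 ∂m :=
  calc (a + ∫⁻ x, f x ∂m) ^ 2 ≤ 2 * (a ^ 2 + (∫⁻ x, f x ∂m) ^ 2) := by
        rw [add_sq, two_mul (_ + _), add_right_comm]
        gcongr
        exact ennreal_two_mul_le_add_sq _ _
    _ ≤ 2 * (a ^ 2 + m univ * ∫⁻ x, f x ^ 2 ∂m) := by grw [lintegral_sq_le hf]
    _ = 2 * a ^ 2 + 2 * m univ * ∫⁻ x, f x ^ 2 ∂m := by ring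

variable {Ω X : Type*} [MeasurableSpace Ω] [MeasurableSpace X] {τ : Measure Ω} {m : Measure X}

theorem lintegral_lintegral_mul_mul_le_of_schur [SFinite τ] {v : Ω → ℝ≥0∞} {k : Ω → Ω → ℝ≥0∞}
    {κ : ℝ≥0∞} (hv : Measurable v) (hk : Measurable (uncurry k))
    (hsymm : ∀ t t', k t t' = k t' t) (hκ : ∀ᵐ t ∂τ, ∫⁻ t', k t t' ∂τ ≤ κ) :
    ∫⁻ t, ∫⁻ t', v t * v t' * k t t' ∂τ ∂τ ≤ κ * ∫⁻ t, v t ^ 2 ∂τ := by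
  have hrow : ∫⁻ t, ∫⁻ t', v t ^ 2 * k t t' ∂τ ∂τ ≤ κ * ∫⁻ t, v t ^ 2 ∂τ := by
    rw [← lintegral_const_mul _ (hv.pow_const 2)]
    refine lintegral_mono_ae (hκ.mono fun t ht ↦ ?_)
    rw [lintegral_const_mul _ hk.of_uncurry_left, mul_comm]
    gcongr
  have hcol : ∫⁻ t, ∫⁻ t', v t' ^ 2 * k t t' ∂τ ∂τ = ∫⁻ t, ∫⁻ t', v t ^ 2 * k t t' ∂τ ∂τ := by
    rw [lintegral_lintegral_swap]
    · simp only [hsymm]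
    · fun_prop
  have hyoung : 2 * ∫⁻ t, ∫⁻ t', v t * v t' * k t t' ∂τ ∂τ ≤ 2 * (κ * ∫⁻ t, v t ^ 2 ∂τ) :=
    calc 2 * ∫⁻ t, ∫⁻ t', v t * v t' * k t t' ∂τ ∂τ
        = ∫⁻ t, ∫⁻ t', 2 * v t * v t' * k t t' ∂τ ∂τ := by
          simp only [← lintegral_const_mul' _ _ ENNReal.ofNat_ne_top, mul_assoc]
      _ ≤ ∫⁻ t, ∫⁻ t', v t ^ 2 * k t t' + v t' ^ 2 * k t t' ∂τ ∂τ := by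
          simp only [← add_mul]
          gcongr
          exact ennreal_two_mul_le_add_sq _ _
      _ = ∫⁻ t, ∫⁻ t', v t ^ 2 * k t t' ∂τ ∂τ + ∫⁻ t, ∫⁻ t', v t' ^ 2 * k t t' ∂τ ∂τ := by
          rw [← lintegral_add_left (by fun_prop)]
          refine lintegral_congr fun t ↦ lintegral_add_left (by fun_prop) _
      _ ≤ 2 * (κ * ∫⁻ t, v t ^ 2 ∂τ) := by
          rw [hcol, ← two_mul]
          gcongr
  exact (ENNReal.mul_le_mul_iff_right two_ne_zero ENNReal.ofNat_ne_top).1 hyoung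

theorem enorm_integral_mul_conj {w : X → ℂ} (hw : MemLp w 2 m) :
    ‖∫ x, w x * conj (w x) ∂m‖ₑ = ∫⁻ x, ‖w x‖ₑ ^ 2 ∂m := by
  have hsq : ∀ z : ℂ, z * conj z = ((‖z‖ ^ 2 : ℝ) : ℂ) := fun z ↦ by
    rw [Complex.mul_conj, Complex.normSq_eq_norm_sq]
  simp only [hsq]
  rw [integral_complex_ofReal, ← enorm_norm, Complex.norm_real, enorm_norm,
    Real.enorm_of_nonneg (integral_nonneg fun x ↦ by positivity),
    ofReal_integral_eq_lintegral_ofReal (hw.integrable_norm_pow two_ne_zero)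
      (.of_forall fun x ↦ by positivity)]
  simp only [ENNReal.ofReal_pow (norm_nonneg _), ofReal_norm]

theorem integrable_uncurry_mul_mul [SFinite τ] [SFinite m] {e : Ω → X → ℂ} {c : Ω → ℂ}
    {h : X → ℂ} (he : StronglyMeasurable (uncurry e)) (he1 : ∀ t ξ, ‖e t ξ‖ ≤ 1)
    (hc : Integrable c τ) (hh : Integrable h m) :
    Integrable (uncurry fun t ξ ↦ c t * (e t ξ * h ξ)) (τ.prod m) := by
  refine ((hc.mul_prod hh).bdd_mul he.aestronglyMeasurable (c := 1)
    (.of_forall fun p ↦ he1 p.1 p.2)).congr (.of_forall fun p ↦ ?_)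
  simp only [uncurry]
  ring

theorem integral_integral_mul_mul_swap [SFinite τ] [SFinite m] {e : Ω → X → ℂ} {c : Ω → ℂ}
    {h : X → ℂ} (he : StronglyMeasurable (uncurry e)) (he1 : ∀ t ξ, ‖e t ξ‖ ≤ 1)
    (hc : Integrable c τ) (hh : Integrable h m) :
    ∫ ξ, (∫ t, c t * e t ξ ∂τ) * h ξ ∂m = ∫ t, c t * ∫ ξ, e t ξ * h ξ ∂m ∂τ := by
  simp only [← integral_mul_const, ← integral_const_mul, mul_assoc]
  exact (integral_integral_swap (integrable_uncurry_mul_mul he he1 hc hh)).symm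

theorem memLp_integral_mul [SFinite τ] [IsFiniteMeasure m] {e : Ω → X → ℂ} {c : Ω → ℂ}
    (he : StronglyMeasurable (uncurry e)) (he1 : ∀ t ξ, ‖e t ξ‖ ≤ 1) (hc : Integrable c τ)
    (p : ℝ≥0∞) : MemLp (fun ξ ↦ ∫ t, c t * e t ξ ∂τ) p m := by
  refine .of_bound ?_ (∫ t, ‖c t‖ ∂τ) (.of_forall fun ξ ↦ ?_)
  · simpa using (integrable_uncurry_mul_mul he he1 hc
      (integrable_const (1 : ℂ))).integral_prod_right.aestronglyMeasurable
  · refine norm_integral_le_of_norm_le hc.norm (.of_forall fun t ↦ ?_)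
    rw [norm_mul]
    exact mul_le_of_le_one_right (norm_nonneg _) (he1 t ξ)

theorem lintegral_enorm_integral_mul_sq_le_kernel [SFinite τ] [IsFiniteMeasure m]
    {e : Ω → X → ℂ} {c : Ω → ℂ} (he : StronglyMeasurable (uncurry e))
    (he1 : ∀ t ξ, ‖e t ξ‖ ≤ 1) (hc : Integrable c τ) :
    ∫⁻ ξ, ‖∫ t, c t * e t ξ ∂τ‖ₑ ^ 2 ∂m ≤
      ∫⁻ t, ∫⁻ t', ‖c t‖ₑ * ‖c t'‖ₑ * ‖∫ ξ, e t ξ * conj (e t' ξ) ∂m‖ₑ ∂τ ∂τ := by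
  set φ : X → ℂ := fun ξ ↦ ∫ t, c t * e t ξ ∂τ with hφ
  have hφ_conj : Integrable (fun ξ ↦ conj (φ ξ)) m :=
    Complex.conjCLE.integrable_comp_iff.2 ((memLp_integral_mul he he1 hc 1).integrable le_rfl)
  have hc_conj : Integrable (fun t ↦ conj (c t)) τ := Complex.conjCLE.integrable_comp_iff.2 hc
  have he_conj : StronglyMeasurable (uncurry fun t ξ ↦ conj (e t ξ)) :=
    Complex.continuous_conj.comp_stronglyMeasurable he
  have he_slice : ∀ t, Integrable (e t) m := fun t ↦
    .of_bound (he.comp_measurable measurable_prodMk_left).aestronglyMeasurable 1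
      (.of_forall (he1 t))
  have hinner : ∀ t, ∫ ξ, e t ξ * conj (φ ξ) ∂m =
      ∫ t', conj (c t') * ∫ ξ, e t ξ * conj (e t' ξ) ∂m ∂τ := fun t ↦ by
    simpa only [hφ, ← integral_conj, map_mul, mul_comm (e t _)] using
      integral_integral_mul_mul_swap he_conj (fun t ξ ↦ by simpa using he1 t ξ) hc_conj
        (he_slice t)
  have hexpand : ∫ ξ, φ ξ * conj (φ ξ) ∂m =
      ∫ t, c t * ∫ t', conj (c t') * ∫ ξ, e t ξ * conj (e t' ξ) ∂m ∂τ ∂τ := by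
    rw [integral_integral_mul_mul_swap he he1 hc hφ_conj]
    simp only [hinner]
  rw [← enorm_integral_mul_conj (memLp_integral_mul he he1 hc 2), hexpand]
  refine (enorm_integral_le_lintegral_enorm _).trans (lintegral_mono fun t ↦ ?_)
  rw [enorm_mul]
  simp only [mul_assoc]
  rw [lintegral_const_mul' _ _ enorm_ne_top]
  gcongr
  refine (enorm_integral_le_lintegral_enorm _).trans_eq (lintegral_congr fun t' ↦ ?_)
  rw [enorm_mul, RCLike.enorm_conj]

theorem lintegral_enorm_integral_mul_sq_le_of_kernel_left [SFinite τ] [IsFiniteMeasure m]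
    {e : Ω → X → ℂ} {c : Ω → ℂ} {κ : ℝ≥0∞} (he : StronglyMeasurable (uncurry e))
    (he1 : ∀ t ξ, ‖e t ξ‖ ≤ 1) (hc_meas : Measurable c) (hc : Integrable c τ)
    (hκ : ∀ᵐ t ∂τ, ∫⁻ t', ‖∫ ξ, e t ξ * conj (e t' ξ) ∂m‖ₑ ∂τ ≤ κ) :
    ∫⁻ ξ, ‖∫ t, c t * e t ξ ∂τ‖ₑ ^ 2 ∂m ≤ κ * ∫⁻ t, ‖c t‖ₑ ^ 2 ∂τ := by
  have hkernel : StronglyMeasurable fun p : Ω × Ω ↦ ∫ ξ, e p.1 ξ * conj (e p.2 ξ) ∂m := by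
    refine StronglyMeasurable.integral_prod_right
      (f := fun (p : Ω × Ω) ξ ↦ e p.1 ξ * conj (e p.2 ξ)) ?_
    exact (he.comp_measurable (g := fun q : (Ω × Ω) × X ↦ (q.1.1, q.2)) (by fun_prop)).mul
      (Complex.continuous_conj.comp_stronglyMeasurable
        (he.comp_measurable (g := fun q : (Ω × Ω) × X ↦ (q.1.2, q.2)) (by fun_prop)))
  refine (lintegral_enorm_integral_mul_sq_le_kernel he he1 hc).trans
    (lintegral_lintegral_mul_mul_le_of_schur hc_meas.enorm hkernel.measurable.enorm
      (fun t t' ↦ ?_) hκ)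
  rw [← RCLike.enorm_conj, ← integral_conj]
  simp only [map_mul, Complex.conj_conj, mul_comm]

-- `TT*`: the operator `g ↦ ∫ e(·, ξ) g(ξ) dm(ξ)` is controlled by the kernel of its composition
-- with its adjoint.
theorem lintegral_enorm_integral_mul_sq_le_of_kernel [IsFiniteMeasure τ] [IsFiniteMeasure m]
    {e : Ω → X → ℂ} {g : X → ℂ} {κ : ℝ≥0∞} (he : StronglyMeasurable (uncurry e))
    (he1 : ∀ t ξ, ‖e t ξ‖ ≤ 1) (hg_meas : Measurable g) (hg : Integrable g m)
    (hκ : ∀ᵐ t ∂τ, ∫⁻ t', ‖∫ ξ, e t ξ * conj (e t' ξ) ∂m‖ₑ ∂τ ≤ κ) :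
    ∫⁻ t, ‖∫ ξ, e t ξ * g ξ ∂m‖ₑ ^ 2 ∂τ ≤ κ * ∫⁻ ξ, ‖g ξ‖ₑ ^ 2 ∂m := by
  set V : Ω → ℂ := fun t ↦ ∫ ξ, e t ξ * g ξ ∂m with hV
  have hV_memLp : MemLp V 2 τ := by
    simpa only [hV, mul_comm] using memLp_integral_mul (e := fun ξ t ↦ e t ξ)
      (he.comp_measurable measurable_swap) (fun ξ t ↦ he1 t ξ) hg 2
  have hV_conj : Integrable (fun t ↦ conj (V t)) τ :=
    Complex.conjCLE.integrable_comp_iff.2 (hV_memLp.integrable one_le_two)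
  have hV_meas : Measurable fun t ↦ conj (V t) :=
    Complex.continuous_conj.measurable.comp (StronglyMeasurable.integral_prod_right
      (f := fun t ξ ↦ e t ξ * g ξ)
      (he.mul (hg_meas.stronglyMeasurable.comp_measurable measurable_snd))).measurable
  set Q := ∫⁻ t, ‖V t‖ₑ ^ 2 ∂τ with hQ
  have hQ_top : Q ≠ ⊤ := by
    rw [hQ, ← enorm_integral_mul_conj hV_memLp]
    exact enorm_ne_top
  set φ : X → ℂ := fun ξ ↦ ∫ t, conj (V t) * e t ξ ∂τ
  have hφ_le : ∫⁻ ξ, ‖φ ξ‖ₑ ^ 2 ∂m ≤ κ * Q := by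
    simpa only [RCLike.enorm_conj] using
      lintegral_enorm_integral_mul_sq_le_of_kernel_left he he1 hV_meas hV_conj hκ
  have hdual : Q ≤ ∫⁻ ξ, ‖φ ξ‖ₑ * ‖g ξ‖ₑ ∂m := by
    have hpair : ∫ ξ, φ ξ * g ξ ∂m = ∫ t, V t * conj (V t) ∂τ := by
      rw [integral_integral_mul_mul_swap he he1 hV_conj hg]
      simp only [hV, mul_comm (conj _)]
    rw [hQ, ← enorm_integral_mul_conj hV_memLp, ← hpair]
    simpa only [enorm_mul] using enorm_integral_le_lintegral_enorm fun ξ ↦ φ ξ * g ξ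
  have hsq : Q * Q ≤ κ * (∫⁻ ξ, ‖g ξ‖ₑ ^ 2 ∂m) * Q :=
    calc Q * Q ≤ (∫⁻ ξ, ‖φ ξ‖ₑ * ‖g ξ‖ₑ ∂m) ^ 2 := by rw [← sq]; gcongr
      _ ≤ (∫⁻ ξ, ‖φ ξ‖ₑ ^ 2 ∂m) * ∫⁻ ξ, ‖g ξ‖ₑ ^ 2 ∂m :=
          lintegral_mul_sq_le (memLp_integral_mul he he1 hV_conj 1).aestronglyMeasurable.enorm
            hg.aestronglyMeasurable.enorm
      _ ≤ κ * Q * ∫⁻ ξ, ‖g ξ‖ₑ ^ 2 ∂m := by gcongr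
      _ = κ * (∫⁻ ξ, ‖g ξ‖ₑ ^ 2 ∂m) * Q := by ring
  rcases eq_or_ne Q 0 with hQ0 | hQ0
  · simp [hQ0]
  · exact (ENNReal.mul_le_mul_iff_left hQ0 hQ_top).1 hsq

theorem enorm_integral_mul_le_of_eq_add_integral [SFinite m] {a b t : ℝ} {e u₀ u₁ : X → ℂ}
    {F : ℝ → X → ℂ} (he : StronglyMeasurable e) (he1 : ∀ ξ, ‖e ξ‖ ≤ 1) (hu₀ : Integrable u₀ m)
    (hF : Integrable (uncurry F) ((volume.restrict (Ioc a b)).prod m)) (ht : t ∈ Ioc a b)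
    (hu : ∀ ξ, u₁ ξ = u₀ ξ + ∫ τ in Ioc a t, F τ ξ) :
    ‖∫ ξ, e ξ * u₁ ξ ∂m‖ₑ ≤
      ‖∫ ξ, e ξ * u₀ ξ ∂m‖ₑ + ∫⁻ τ in Ioc a b, ‖∫ ξ, e ξ * F τ ξ ∂m‖ₑ := by
  have hsub : Ioc a t ⊆ Ioc a b := Ioc_subset_Ioc_right ht.2
  have hmono : (volume.restrict (Ioc a t)).prod m ≤ (volume.restrict (Ioc a b)).prod m :=
    Measure.prod_mono (Measure.restrict_mono_set _ hsub) le_rfl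
  have hprod : Integrable (uncurry fun τ ξ ↦ e ξ * F τ ξ)
      ((volume.restrict (Ioc a t)).prod m) := (hF.mono_measure hmono).bdd_mul
    (he.comp_measurable measurable_snd).aestronglyMeasurable (c := 1) (.of_forall fun p ↦ he1 p.2)
  have hu₀' : Integrable (fun ξ ↦ e ξ * u₀ ξ) m :=
    hu₀.bdd_mul he.aestronglyMeasurable (.of_forall he1)
  have hsplit : ∫ ξ, e ξ * u₁ ξ ∂m =
      (∫ ξ, e ξ * u₀ ξ ∂m) + ∫ τ in Ioc a t, ∫ ξ, e ξ * F τ ξ ∂m := by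
    have hsource : Integrable (fun ξ ↦ ∫ τ in Ioc a t, e ξ * F τ ξ) m :=
      hprod.integral_prod_right
    rw [integral_integral_swap hprod, ← integral_add hu₀' hsource]
    simp only [hu, mul_add, ← integral_const_mul]
  rw [hsplit]
  refine (enorm_add_le _ _).trans (add_le_add_right ?_ _)
  exact (enorm_integral_le_lintegral_enorm _).trans (lintegral_mono_set hsub)

-- Duhamel's principle: a `TT*` bound for the homogeneous evolution passes to the inhomogeneous
-- one, whose source costs a factor `b - a` by Cauchy–Schwarz in time.
theorem lintegral_enorm_integral_mul_sq_le_of_eq_add_integral [IsFiniteMeasure m] {a b : ℝ}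
    {e U F : ℝ → X → ℂ} {κ : ℝ≥0∞} (he : StronglyMeasurable (uncurry e))
    (he1 : ∀ t ξ, ‖e t ξ‖ ≤ 1) (hUa_meas : Measurable (U a)) (hUa : Integrable (U a) m)
    (hF_meas : StronglyMeasurable (uncurry F))
    (hF : Integrable (uncurry F) ((volume.restrict (Ioc a b)).prod m))
    (hU : ∀ t ∈ Ioc a b, ∀ ξ, U t ξ = U a ξ + ∫ τ in Ioc a t, F τ ξ)
    (hκ : ∀ᵐ t ∂volume.restrict (Ioc a b),
      ∫⁻ t' in Ioc a b, ‖∫ ξ, e t ξ * conj (e t' ξ) ∂m‖ₑ ≤ κ) :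
    ∫⁻ t in Ioc a b, ‖∫ ξ, e t ξ * U t ξ ∂m‖ₑ ^ 2 ≤ 2 * κ * (∫⁻ ξ, ‖U a ξ‖ₑ ^ 2 ∂m +
      ENNReal.ofReal (b - a) * ∫⁻ t in Ioc a b, ∫⁻ ξ, ‖F t ξ‖ₑ ^ 2 ∂m) := by
  set V : ℝ → ℂ := fun t ↦ ∫ ξ, e t ξ * U a ξ ∂m
  set W : ℝ → ℝ → ℂ := fun t τ ↦ ∫ ξ, e t ξ * F τ ξ ∂m
  have hW : Measurable (uncurry W) := by
    refine (StronglyMeasurable.integral_prod_right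
      (f := fun (p : ℝ × ℝ) ξ ↦ e p.1 ξ * F p.2 ξ) ?_).measurable
    exact (he.comp_measurable (g := fun q : (ℝ × ℝ) × X ↦ (q.1.1, q.2)) (by fun_prop)).mul
      (hF_meas.comp_measurable (g := fun q : (ℝ × ℝ) × X ↦ (q.1.2, q.2)) (by fun_prop))
  have hpointwise : ∀ t ∈ Ioc a b, ‖∫ ξ, e t ξ * U t ξ ∂m‖ₑ ^ 2 ≤
      2 * ‖V t‖ₑ ^ 2 + 2 * ENNReal.ofReal (b - a) * ∫⁻ τ in Ioc a b, ‖W t τ‖ₑ ^ 2 := fun t ht ↦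
    calc ‖∫ ξ, e t ξ * U t ξ ∂m‖ₑ ^ 2 ≤ (‖V t‖ₑ + ∫⁻ τ in Ioc a b, ‖W t τ‖ₑ) ^ 2 := by
          gcongr
          exact enorm_integral_mul_le_of_eq_add_integral
            (he.comp_measurable measurable_prodMk_left) (he1 t) hUa hF ht (hU t ht)
      _ ≤ 2 * ‖V t‖ₑ ^ 2 + 2 * ENNReal.ofReal (b - a) * ∫⁻ τ in Ioc a b, ‖W t τ‖ₑ ^ 2 := by
          simpa using add_lintegral_sq_le (m := volume.restrict (Ioc a b))
            hW.of_uncurry_left.enorm.aemeasurable ‖V t‖ₑ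
  have hsource : ∀ᵐ τ ∂volume.restrict (Ioc a b),
      ∫⁻ t in Ioc a b, ‖W t τ‖ₑ ^ 2 ≤ κ * ∫⁻ ξ, ‖F τ ξ‖ₑ ^ 2 ∂m := by
    filter_upwards [hF.prod_right_ae] with τ hτ
    exact lintegral_enorm_integral_mul_sq_le_of_kernel he he1
      (hF_meas.comp_measurable measurable_prodMk_left).measurable hτ hκ
  calc ∫⁻ t in Ioc a b, ‖∫ ξ, e t ξ * U t ξ ∂m‖ₑ ^ 2
      ≤ ∫⁻ t in Ioc a b, (2 * ‖V t‖ₑ ^ 2 +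
          2 * ENNReal.ofReal (b - a) * ∫⁻ τ in Ioc a b, ‖W t τ‖ₑ ^ 2) :=
        setLIntegral_mono' measurableSet_Ioc hpointwise
    _ = 2 * (∫⁻ t in Ioc a b, ‖V t‖ₑ ^ 2) +
          2 * ENNReal.ofReal (b - a) * ∫⁻ τ in Ioc a b, ∫⁻ t in Ioc a b, ‖W t τ‖ₑ ^ 2 := by
        rw [lintegral_add_right _ (by fun_prop), lintegral_const_mul' _ _ ENNReal.ofNat_ne_top,
          lintegral_const_mul' _ _ (by finiteness), lintegral_lintegral_swap (by fun_prop)]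
    _ ≤ 2 * (κ * ∫⁻ ξ, ‖U a ξ‖ₑ ^ 2 ∂m) +
          2 * ENNReal.ofReal (b - a) * ∫⁻ τ in Ioc a b, κ * ∫⁻ ξ, ‖F τ ξ‖ₑ ^ 2 ∂m := by
        gcongr 2 * ?_ + 2 * _ * ?_
        · exact lintegral_enorm_integral_mul_sq_le_of_kernel he he1 hUa_meas hUa hκ
        · exact lintegral_mono_ae hsource
    _ = _ := by
        rw [lintegral_const_mul _ (by fun_prop)]
        ring

end DualityMethod

section Propagation

open Set Function intervalIntegral
open scoped Real ComplexConjugate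

theorem intervalIntegrable_abs_rpow {r : ℝ} (hr : -1 < r) (a b : ℝ) :
    IntervalIntegrable (fun x ↦ |x| ^ r) volume a b := by
  refine intervalIntegrable_of_even (fun x ↦ by rw [abs_neg]) fun c hc ↦
    (intervalIntegrable_rpow' hr).congr fun x hx ↦ ?_
  rw [uIoc_of_le hc.le] at hx
  simp only [abs_of_pos hx.1]

theorem integral_abs_sub_rpow {r : ℝ} (hr : -1 < r) {a b t : ℝ} (ht : t ∈ Icc a b) :
    ∫ x in a..b, |t - x| ^ r = ((b - t) ^ (r + 1) + (t - a) ^ (r + 1)) / (r + 1) := by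
  have hpos : ∀ c, 0 ≤ c → ∫ x in 0..c, |x| ^ r = c ^ (r + 1) / (r + 1) := fun c hc ↦ by
    rw [integral_congr (g := fun x ↦ x ^ r) fun x hx ↦ ?_, integral_rpow (Or.inl hr),
      Real.zero_rpow (by linarith), sub_zero]
    rw [uIcc_of_le hc] at hx
    simp only [abs_of_nonneg hx.1]
  have hneg : ∫ x in (t - b)..0, |x| ^ r = ∫ x in 0..(b - t), |x| ^ r := by
    simpa using (integral_comp_neg (a := 0) (b := b - t) fun x : ℝ ↦ |x| ^ r).symm
  rw [integral_comp_sub_left fun x ↦ |x| ^ r, ← integral_add_adjacent_intervals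
    (intervalIntegrable_abs_rpow hr _ 0) (intervalIntegrable_abs_rpow hr 0 _), hneg,
    hpos _ (by linarith [ht.2]), hpos _ (by linarith [ht.1])]
  ring

theorem lintegral_abs_sub_rpow_le {s a b t : ℝ} (hs : 0 < s) (ht : t ∈ Icc a b) :
    ∫⁻ x in Ioc a b, ENNReal.ofReal (|t - x| ^ (s - 1)) ≤
      ENNReal.ofReal (2 / s * (b - a) ^ s) := by
  have hab := ht.1.trans ht.2
  have hint : IntegrableOn (fun x ↦ |t - x| ^ (s - 1)) (Ioc a b) :=
    (intervalIntegrable_iff_integrableOn_Ioc_of_le hab).1 <| by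
      simpa using (intervalIntegrable_abs_rpow (by linarith) (t - a) (t - b)).comp_sub_left t
  rw [← ofReal_integral_eq_lintegral_ofReal hint (.of_forall fun x ↦ by positivity),
    ← integral_of_le hab, integral_abs_sub_rpow (by linarith) ht, sub_add_cancel]
  refine ENNReal.ofReal_le_ofReal ?_
  have hright : (b - t) ^ s ≤ (b - a) ^ s :=
    Real.rpow_le_rpow (by linarith [ht.2]) (by linarith [ht.1]) hs.le
  have hleft : (t - a) ^ s ≤ (b - a) ^ s :=
    Real.rpow_le_rpow (by linarith [ht.1]) (by linarith [ht.2]) hs.le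
  calc ((b - t) ^ s + (t - a) ^ s) / s ≤ ((b - a) ^ s + (b - a) ^ s) / s := by gcongr
    _ = 2 / s * (b - a) ^ s := by ring

theorem le_rpow_mul_rpow {a b c s : ℝ} (hs : 0 ≤ s) (hs1 : s ≤ 1) (hc : 0 ≤ c) (hca : c ≤ a)
    (hcb : c ≤ b) : c ≤ a ^ s * b ^ (1 - s) := by
  have hs' : 0 ≤ 1 - s := sub_nonneg.2 hs1
  have ha := hc.trans hca
  calc c = c ^ s * c ^ (1 - s) := by rw [← Real.rpow_add_of_nonneg hc hs hs']; simp
    _ ≤ a ^ s * b ^ (1 - s) := by gcongr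

theorem exists_lintegral_dispersiveKernel_le {s : ℝ} (hs : 0 < s) (hs1 : s < 1) :
    ∃ C : ℝ, 0 < C ∧ ∀ ν N q a b t : ℝ, 0 < ν → 0 < N → 1 ≤ q → ν * N ≤ q ^ 2 → t ∈ Icc a b →
      ∀ y : ℝ → E2, ∫⁻ t' in Ioc a b, ‖dispersiveKernel ν (t - t') N (y t')‖ₑ ≤
        ENNReal.ofReal (C * N ^ (2 * s) * (q ^ 3 / ν) ^ (1 - s) * (b - a) ^ s) := by
  obtain ⟨C, hC, hkernel⟩ := exists_norm_dispersiveKernel_le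
  refine ⟨(4 * π) ^ s * C ^ (1 - s) * (2 / s), by positivity, ?_⟩
  intro ν N q a b t hν hN hq hqN ht y
  set K : ℝ := (4 * π) ^ s * C ^ (1 - s) * N ^ (2 * s) * (q ^ 3 / ν) ^ (1 - s) with hK
  have hK0 : 0 ≤ K := by positivity
  have hpointwise : ∀ t', t' ≠ t →
      ‖dispersiveKernel ν (t - t') N (y t')‖ ≤ K * |t - t'| ^ (s - 1) := fun t' ht' ↦ by
    have htt' : 0 < |t - t'| := abs_pos.2 (sub_ne_zero.2 ht'.symm)
    calc ‖dispersiveKernel ν (t - t') N (y t')‖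
        ≤ (4 * π * N ^ 2) ^ s * (C * q ^ 3 / (ν * |t - t'|)) ^ (1 - s) :=
          le_rpow_mul_rpow hs.le hs1.le (norm_nonneg _) (norm_dispersiveKernel_le _ _ hN _)
            (hkernel ν N q _ hν hN hq hqN (abs_pos.1 htt') _)
      _ = K * |t - t'| ^ (s - 1) := by
          rw [show C * q ^ 3 / (ν * |t - t'|) = C * (q ^ 3 / ν) * |t - t'|⁻¹ by field_simp,
            Real.mul_rpow (x := 4 * π) (by positivity) (by positivity),
            Real.mul_rpow (y := |t - t'|⁻¹) (by positivity) (by positivity),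
            Real.mul_rpow hC.le (by positivity), Real.inv_rpow htt'.le,
            ← Real.rpow_neg htt'.le, neg_sub, hK, Real.rpow_mul hN.le, Real.rpow_two]
          ring
  calc ∫⁻ t' in Ioc a b, ‖dispersiveKernel ν (t - t') N (y t')‖ₑ
      ≤ ∫⁻ t' in Ioc a b, ENNReal.ofReal K * ENNReal.ofReal (|t - t'| ^ (s - 1)) := by
        refine lintegral_mono_ae (ae_restrict_of_ae ?_)
        filter_upwards [compl_mem_ae_iff.2 (measure_singleton t)] with t' ht'
        rw [← ENNReal.ofReal_mul hK0, ← ofReal_norm]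
        exact ENNReal.ofReal_le_ofReal (hpointwise t' ht')
    _ ≤ ENNReal.ofReal K * ENNReal.ofReal (2 / s * (b - a) ^ s) := by
        rw [lintegral_const_mul' _ _ ENNReal.ofReal_ne_top]
        gcongr
        exact lintegral_abs_sub_rpow_le hs ht
    _ = _ := by
        rw [← ENNReal.ofReal_mul hK0, hK]
        ring_nf

/-- The character `x ↦ exp (2πi⟨ξ, x⟩)` evolved freely up to time `t` and evaluated at the point
`x t` of a path `x`. -/
def evolvedCharacter (ν : ℝ) (x : ℝ → E2) (t : ℝ) (ξ : E2) : ℂ :=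
  Complex.exp ((2 * π * inner ℝ ξ (x t) - t * scaledDispersion ν ‖ξ‖ : ℝ) * Complex.I)

theorem norm_evolvedCharacter (ν : ℝ) (x : ℝ → E2) (t : ℝ) (ξ : E2) :
    ‖evolvedCharacter ν x t ξ‖ = 1 :=
  Complex.norm_exp_ofReal_mul_I _

theorem stronglyMeasurable_evolvedCharacter (ν : ℝ) {x : ℝ → E2} (hx : Measurable x) :
    StronglyMeasurable (uncurry (evolvedCharacter ν x)) := by
  have hcont : Continuous fun p : ℝ × E2 × E2 ↦
      Complex.exp ((2 * π * inner ℝ p.2.1 p.2.2 - p.1 * scaledDispersion ν ‖p.2.1‖ : ℝ) *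
        Complex.I) := by
    have := continuous_scaledDispersion ν
    fun_prop
  exact hcont.stronglyMeasurable.comp_measurable
    (g := fun q : ℝ × E2 ↦ (q.1, q.2, x q.1)) (by fun_prop)

theorem setIntegral_evolvedCharacter_mul_conj (ν N : ℝ) (x : ℝ → E2) (t t' : ℝ) :
    ∫ ξ in dyadicAnnulus N, evolvedCharacter ν x t ξ * conj (evolvedCharacter ν x t' ξ) =
      dispersiveKernel ν (t - t') N (x t - x t') := by
  refine integral_congr_ae (.of_forall fun ξ ↦ ?_)
  simp only [evolvedCharacter, ← Complex.exp_conj, map_mul, Complex.conj_ofReal, Complex.conj_I,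
    ← Complex.exp_add, inner_sub_right]
  congr 1
  push_cast
  ring

/-- `U` and `F` are the spatial Fourier transforms of a solution and of the source of the
dispersive equation on the time set `s`. The equation is encoded frequency by frequency in
integrated form, which asks nothing about one-sided derivatives at the endpoints of `s`. -/
def IsFourierSolutionOn (ν : ℝ) (U F : ℝ → E2 → ℂ) (s : Set ℝ) : Prop :=
  ∀ a ∈ s, ∀ t ∈ s, a ≤ t → ∀ ξ,
    U t ξ = U a ξ + ∫ τ in a..t, -Complex.I * (scaledDispersion ν ‖ξ‖ * U τ ξ + F τ ξ)

theorem IsFourierSolutionOn.mono {ν : ℝ} {U F : ℝ → E2 → ℂ} {s s' : Set ℝ}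
    (hUF : IsFourierSolutionOn ν U F s) (hs : s' ⊆ s) : IsFourierSolutionOn ν U F s' :=
  fun a ha t ht ↦ hUF a (hs ha) t (hs ht)

/-- The interaction picture `exp (i t h(ξ)) U(t, ξ)`, in which the free evolution is constant. -/
def interactionPicture (ν : ℝ) (U : ℝ → E2 → ℂ) (t : ℝ) (ξ : E2) : ℂ :=
  Complex.exp ((t * scaledDispersion ν ‖ξ‖ : ℝ) * Complex.I) * U t ξ

theorem enorm_interactionPicture (ν : ℝ) (U : ℝ → E2 → ℂ) (t : ℝ) (ξ : E2) :
    ‖interactionPicture ν U t ξ‖ₑ = ‖U t ξ‖ₑ := by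
  rw [interactionPicture, enorm_mul, ← ofReal_norm (Complex.exp _),
    Complex.norm_exp_ofReal_mul_I, ENNReal.ofReal_one, one_mul]

theorem continuous_interactionPicture (ν : ℝ) {U : ℝ → E2 → ℂ} (hU : Continuous (uncurry U)) :
    Continuous (uncurry (interactionPicture ν U)) := by
  have := continuous_scaledDispersion ν
  exact Continuous.mul (by fun_prop) hU

theorem IsFourierSolutionOn.interactionPicture_eq_add_integral {ν a b t : ℝ}
    {U F : ℝ → E2 → ℂ} (hUF : IsFourierSolutionOn ν U F (Icc a b)) (hU : Continuous (uncurry U))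
    (hF : Continuous (uncurry F)) (ht : t ∈ Ioc a b) (ξ : E2) :
    interactionPicture ν U t ξ =
      interactionPicture ν U a ξ + ∫ τ in Ioc a t, -Complex.I * interactionPicture ν F τ ξ := by
  have hUξ : Continuous fun τ ↦ U τ ξ := hU.uncurry_right ξ
  have hFξ : Continuous fun τ ↦ F τ ξ := hF.uncurry_right ξ
  have hrhs : Continuous fun τ ↦ -Complex.I * (scaledDispersion ν ‖ξ‖ * U τ ξ + F τ ξ) := by
    fun_prop
  have hderiv : ∀ τ ∈ uIcc a t, HasDerivAt
      (fun τ ↦ Complex.exp ((τ * scaledDispersion ν ‖ξ‖ : ℝ) * Complex.I) * (U a ξ +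
        ∫ τ' in a..τ, -Complex.I * (scaledDispersion ν ‖ξ‖ * U τ' ξ + F τ' ξ)))
      (-Complex.I * interactionPicture ν F τ ξ) τ := fun τ hτ ↦ by
    rw [uIcc_of_le ht.1.le] at hτ
    have hphase : HasDerivAt (fun τ : ℝ ↦ ((τ * scaledDispersion ν ‖ξ‖ : ℝ) * Complex.I : ℂ))
        (scaledDispersion ν ‖ξ‖ * Complex.I) τ := by
      simpa using ((hasDerivAt_id τ).mul_const _).ofReal_comp.mul_const Complex.I
    refine (hphase.cexp.mul
      ((hrhs.integral_hasStrictDerivAt a τ).hasDerivAt.const_add (U a ξ))).congr_deriv ?_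
    rw [← hUF a (left_mem_Icc.2 (ht.1.le.trans ht.2)) τ ⟨hτ.1, hτ.2.trans ht.2⟩ hτ.1 ξ,
      interactionPicture]
    ring
  have hF' : Continuous fun τ ↦ interactionPicture ν F τ ξ :=
    (continuous_interactionPicture ν hF).uncurry_right ξ
  have hftc := integral_eq_sub_of_hasDerivAt hderiv ((hF'.const_mul _).intervalIntegrable _ _)
  rw [← hUF a (left_mem_Icc.2 (ht.1.le.trans ht.2)) t (Ioc_subset_Icc_self ht) ht.1.le ξ,
    integral_same, add_zero] at hftc
  rw [← integral_of_le ht.1.le, hftc, interactionPicture, interactionPicture]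
  ring

/-- The part of the inverse Fourier transform of `g` coming from the frequencies in
`dyadicAnnulus N`. -/
def annulusPart (N : ℝ) (g : E2 → ℂ) (x : E2) : ℂ :=
  ∫ ξ in dyadicAnnulus N, Complex.exp ((2 * π * inner ℝ ξ x : ℝ) * Complex.I) * g ξ

theorem annulusPart_eq_integral_evolvedCharacter (ν N : ℝ) (U : ℝ → E2 → ℂ) (x : ℝ → E2)
    (t : ℝ) : annulusPart N (U t) (x t) =
      ∫ ξ in dyadicAnnulus N, evolvedCharacter ν x t ξ * interactionPicture ν U t ξ := by
  refine integral_congr_ae (.of_forall fun ξ ↦ ?_)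
  simp only [evolvedCharacter, interactionPicture, ← mul_assoc, ← Complex.exp_add]
  congr 2
  push_cast
  ring

instance isFiniteMeasure_restrict_dyadicAnnulus (N : ℝ) :
    IsFiniteMeasure (volume.restrict (dyadicAnnulus N)) :=
  ⟨by simpa using volume_dyadicAnnulus_lt_top N⟩

theorem integrable_uncurry_prod_dyadicAnnulus {U : ℝ → E2 → ℂ} (hU : Continuous (uncurry U))
    (a b N : ℝ) : Integrable (uncurry U)
      ((volume.restrict (Ioc a b)).prod (volume.restrict (dyadicAnnulus N))) := by
  rw [Measure.prod_restrict]
  refine (hU.continuousOn.integrableOn_compact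
    (isCompact_Icc.prod (isCompact_closedBall (0 : E2) (2 * N)))).mono_set
      (prod_mono Ioc_subset_Icc_self fun ξ hξ ↦ ?_)
  simpa using hξ.2.le

theorem integrableOn_dyadicAnnulus {g : E2 → ℂ} (hg : Continuous g) (N : ℝ) :
    IntegrableOn g (dyadicAnnulus N) :=
  (hg.continuousOn.integrableOn_compact (isCompact_closedBall (0 : E2) (2 * N))).mono_set
    fun ξ hξ ↦ by simpa using hξ.2.le

theorem exists_lintegral_annulusPart_sq_le {s : ℝ} (hs : 0 < s) (hs1 : s < 1) :
    ∃ C : ℝ, 0 < C ∧ ∀ ν N q a b : ℝ, 0 < ν → 0 < N → 1 ≤ q → ν * N ≤ q ^ 2 →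
      ∀ U F : ℝ → E2 → ℂ, Continuous (uncurry U) → Continuous (uncurry F) →
      IsFourierSolutionOn ν U F (Icc a b) → ∀ x : ℝ → E2, Measurable x →
      ∫⁻ t in Ioc a b, ‖annulusPart N (U t) (x t)‖ₑ ^ 2 ≤
        ENNReal.ofReal (C * N ^ (2 * s) * (q ^ 3 / ν) ^ (1 - s) * (b - a) ^ s) *
          ((∫⁻ ξ in dyadicAnnulus N, ‖U a ξ‖ₑ ^ 2) + ENNReal.ofReal (b - a) *
            ∫⁻ t in Ioc a b, ∫⁻ ξ in dyadicAnnulus N, ‖F t ξ‖ₑ ^ 2) := by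
  obtain ⟨C, hC, hkernel⟩ := exists_lintegral_dispersiveKernel_le hs hs1
  refine ⟨2 * C, by positivity, ?_⟩
  intro ν N q a b hν hN hq hqN U F hU hF hUF x hx
  have hU' := continuous_interactionPicture ν hU
  have hU'a : Continuous (interactionPicture ν U a) := hU'.uncurry_left a
  have hF' : Continuous (uncurry fun τ ξ ↦ -Complex.I * interactionPicture ν F τ ξ) :=
    (continuous_interactionPicture ν hF).const_mul _
  have hκ : ∀ᵐ t ∂volume.restrict (Ioc a b), ∫⁻ t' in Ioc a b,
      ‖∫ ξ in dyadicAnnulus N, evolvedCharacter ν x t ξ * conj (evolvedCharacter ν x t' ξ)‖ₑ ≤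
        ENNReal.ofReal (C * N ^ (2 * s) * (q ^ 3 / ν) ^ (1 - s) * (b - a) ^ s) :=
    ae_restrict_of_forall_mem measurableSet_Ioc fun t ht ↦ by
      simp only [setIntegral_evolvedCharacter_mul_conj]
      exact hkernel ν N q a b t hν hN hq hqN (Ioc_subset_Icc_self ht) fun t' ↦ x t - x t'
  have hduhamel := lintegral_enorm_integral_mul_sq_le_of_eq_add_integral
    (stronglyMeasurable_evolvedCharacter ν hx) (fun t ξ ↦ (norm_evolvedCharacter ν x t ξ).le)
    hU'a.measurable (integrableOn_dyadicAnnulus hU'a N) hF'.stronglyMeasurable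
    (integrable_uncurry_prod_dyadicAnnulus hF' a b N)
    (fun t ht ξ ↦ hUF.interactionPicture_eq_add_integral hU hF ht ξ) hκ
  have henorm_I : ‖Complex.I‖ₑ = 1 := by simp [← ofReal_norm]
  simp only [← annulusPart_eq_integral_evolvedCharacter, enorm_mul, enorm_neg, henorm_I, one_mul,
    enorm_interactionPicture] at hduhamel
  simpa only [mul_assoc, ENNReal.ofReal_mul zero_le_two, ENNReal.ofReal_ofNat] using hduhamel

theorem continuous_annulusPart (N : ℝ) {g : E2 → ℂ} (hg : Continuous g) :
    Continuous (annulusPart N g) := by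
  refine continuous_of_dominated (bound := fun ξ ↦ ‖g ξ‖) (fun x ↦ ?_) (fun x ↦ ?_)
    (integrableOn_dyadicAnnulus hg N).norm (.of_forall fun ξ ↦ by fun_prop)
  · exact (by fun_prop : Continuous _).aestronglyMeasurable
  · exact .of_forall fun ξ ↦ by rw [norm_mul, Complex.norm_exp_ofReal_mul_I, one_mul]

theorem measurable_annulusPart (N : ℝ) {U : ℝ → E2 → ℂ} (hU : Continuous (uncurry U)) :
    Measurable (uncurry fun t ↦ annulusPart N (U t)) := by
  have hcont : Continuous fun q : (ℝ × E2) × E2 ↦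
      Complex.exp ((2 * π * inner ℝ q.2 q.1.2 : ℝ) * Complex.I) * U q.1.1 q.2 :=
    Continuous.mul (by fun_prop)
      (hU.comp (by fun_prop : Continuous fun q : (ℝ × E2) × E2 ↦ (q.1.1, q.2)))
  exact (StronglyMeasurable.integral_prod_right (ν := volume.restrict (dyadicAnnulus N))
    (f := fun (p : ℝ × E2) ξ ↦ Complex.exp ((2 * π * inner ℝ ξ p.2 : ℝ) * Complex.I) * U p.1 ξ)
    hcont.stronglyMeasurable).measurable

theorem exists_measurable_forall_le {Ω X : Type*} [MeasurableSpace Ω] [MeasurableSpace X]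
    {f : Ω → X → ℝ≥0∞} (hf : Measurable (uncurry f)) (y : ℕ → X) (n : ℕ) :
    ∃ x : Ω → X, Measurable x ∧ ∀ k ≤ n, ∀ t, f t (y k) ≤ f t (x t) := by
  classical
  induction n with
  | zero => exact ⟨fun _ ↦ y 0, measurable_const, fun k hk t ↦ by rw [Nat.le_zero.1 hk]⟩
  | succ n ih =>
    obtain ⟨x, hx, hle⟩ := ih
    refine ⟨fun t ↦ if f t (x t) ≤ f t (y (n + 1)) then y (n + 1) else x t,
      .ite (measurableSet_le (hf.comp (measurable_id.prodMk hx))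
        (hf.comp (measurable_id.prodMk measurable_const))) measurable_const hx, fun k hk t ↦ ?_⟩
    rcases Nat.le_succ_iff.1 hk with hk | rfl <;> dsimp only <;> split_ifs with h
    · exact (hle k hk t).trans h
    · exact hle k hk t
    · exact le_rfl
    · exact (not_le.1 h).le

-- Linearisation of the supremum by measurable selection of a nearly maximising path.
theorem lintegral_iSup_le_of_forall_measurable {Ω X : Type*} [MeasurableSpace Ω]
    [TopologicalSpace X] [TopologicalSpace.SeparableSpace X] [Nonempty X] [MeasurableSpace X]
    {τ : Measure Ω} {f : Ω → X → ℝ≥0∞} {B : ℝ≥0∞} (hf : Measurable (uncurry f))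
    (hf_cont : ∀ t, Continuous (f t))
    (hB : ∀ x : Ω → X, Measurable x → ∫⁻ t, f t (x t) ∂τ ≤ B) :
    ∫⁻ t, ⨆ x, f t x ∂τ ≤ B := by
  set y := TopologicalSpace.denseSeq X
  have hdense : ∀ t, ⨆ x, f t x = ⨆ n, ⨆ k ≤ n, f t (y k) := fun t ↦ by
    rw [biSup_le_eq_iSup, ← (TopologicalSpace.denseRange_denseSeq X).ciSup' (hf_cont t),
      iSup_range' (f t) y]
  simp only [hdense]
  have hmeas : ∀ n, Measurable fun t ↦ ⨆ k ≤ n, f t (y k) := fun n ↦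
    .biSup _ (to_countable _) fun k _ ↦ hf.of_uncurry_right
  have hmono : Monotone fun n t ↦ ⨆ k ≤ n, f t (y k) := fun n m hnm t ↦
    biSup_mono fun k hk ↦ hk.trans hnm
  rw [lintegral_iSup hmeas hmono]
  refine iSup_le fun n ↦ ?_
  obtain ⟨x, hx, hle⟩ := exists_measurable_forall_le hf y n
  exact (lintegral_mono fun t ↦ iSup₂_le fun k hk ↦ hle k hk t).trans (hB x hx)

theorem sum_setLIntegral_Ioc_nat_mul {f : ℝ → ℝ≥0∞} {δ : ℝ} (hδ : 0 ≤ δ) (J : ℕ) :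
    ∑ j ∈ Finset.range J, ∫⁻ t in Ioc (j * δ) ((j + 1) * δ), f t =
      ∫⁻ t in Ioc 0 (J * δ), f t := by
  induction J with
  | zero => simp
  | succ J ih =>
    have hle : (J : ℝ) * δ ≤ (J + 1) * δ := by gcongr; linarith
    rw [Finset.sum_range_succ, ih, ← lintegral_union measurableSet_Ioc
      (Ioc_disjoint_Ioc_of_le le_rfl), Ioc_union_Ioc_eq_Ioc (by positivity) hle, Nat.cast_succ]

-- Apply `exists_lintegral_annulusPart_sq_le` on each of `J` time intervals of length `T / J`.
theorem exists_lintegral_iSup_annulusPart_sq_le {s : ℝ} (hs : 0 < s) (hs1 : s < 1) :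
    ∃ C : ℝ, 0 < C ∧ ∀ ν N q T : ℝ, 0 < ν → 0 < N → 1 ≤ q → ν * N ≤ q ^ 2 → 0 < T →
      ∀ U F : ℝ → E2 → ℂ, Continuous (uncurry U) → Continuous (uncurry F) →
      IsFourierSolutionOn ν U F (Icc 0 T) →
      ∀ S : ℝ≥0∞, (∀ t ∈ Icc 0 T, ∫⁻ ξ in dyadicAnnulus N, ‖U t ξ‖ₑ ^ 2 ≤ S) →
      ∀ J : ℕ, 0 < J → ∫⁻ t in Ioc 0 T, (⨆ x, ‖annulusPart N (U t) x‖ₑ) ^ 2 ≤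
        ENNReal.ofReal (C * N ^ (2 * s) * (q ^ 3 / ν) ^ (1 - s) * (T / J) ^ s) *
          (J * S + ENNReal.ofReal (T / J) *
            ∫⁻ t in Ioc 0 T, ∫⁻ ξ in dyadicAnnulus N, ‖F t ξ‖ₑ ^ 2) := by
  obtain ⟨C, hC, hpath⟩ := exists_lintegral_annulusPart_sq_le hs hs1
  refine ⟨C, hC, ?_⟩
  intro ν N q T hν hN hq hqN hT U F hU hF hUF S hS J hJ
  set δ := T / J with hδ
  have hδ0 : 0 < δ := by positivity
  have hJδ : J * δ = T := by rw [hδ]; field_simp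
  set κ := ENNReal.ofReal (C * N ^ (2 * s) * (q ^ 3 / ν) ^ (1 - s) * δ ^ s)
  have hinterval : ∀ j ∈ Finset.range J,
      ∫⁻ t in Ioc (j * δ) ((j + 1) * δ), ⨆ x, ‖annulusPart N (U t) x‖ₑ ^ 2 ≤
        κ * (S + ENNReal.ofReal δ * ∫⁻ t in Ioc (j * δ) ((j + 1) * δ),
          ∫⁻ ξ in dyadicAnnulus N, ‖F t ξ‖ₑ ^ 2) := fun j hj ↦ by
    have hj1 : ((j : ℝ) + 1) * δ ≤ T := by
      rw [← hJδ]
      gcongr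
      exact_mod_cast Finset.mem_range.1 hj
    have hsub : Icc (j * δ) ((j + 1) * δ) ⊆ Icc 0 T := Icc_subset_Icc (by positivity) hj1
    refine lintegral_iSup_le_of_forall_measurable ((measurable_annulusPart N hU).enorm.pow_const 2)
      (fun t ↦ (ENNReal.continuous_pow 2).comp
        (continuous_annulusPart N (hU.uncurry_left t)).enorm) fun x hx ↦ ?_
    have hmove := hpath ν N q (j * δ) ((j + 1) * δ) hν hN hq hqN U F hU hF
      (hUF.mono hsub) x hx
    rw [add_one_mul, add_sub_cancel_left, ← add_one_mul] at hmove
    refine hmove.trans ?_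
    gcongr
    exact hS _ (hsub (left_mem_Icc.2 (by gcongr; linarith)))
  simp only [ENNReal.iSup_pow_of_ne_zero two_ne_zero]
  rw [← hJδ, ← sum_setLIntegral_Ioc_nat_mul hδ0.le, ← sum_setLIntegral_Ioc_nat_mul hδ0.le]
  refine (Finset.sum_le_sum hinterval).trans_eq ?_
  rw [← Finset.mul_sum, Finset.sum_add_distrib, ← Finset.mul_sum]
  simp

end Propagation

section FourierInverse

open FourierTransform

variable {V : Type*} [NormedAddCommGroup V] [InnerProductSpace ℝ V] [FiniteDimensional ℝ V]
  [MeasurableSpace V] [BorelSpace V]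

theorem fourierInv_add_of_integrable {f g : V → ℂ} (hf : Integrable f)
    (hg : Integrable g) : 𝓕⁻ (fun ξ ↦ f ξ + g ξ) = fun x ↦ 𝓕⁻ f x + 𝓕⁻ g x :=
  VectorFourier.fourierIntegral_add (L := -innerₗ V) Real.continuous_fourierChar
    (continuous_inner.neg) hf hg

theorem fourierInv_const_mul (c : ℂ) (f : V → ℂ) :
    𝓕⁻ (fun ξ ↦ c * f ξ) = fun x ↦ c * 𝓕⁻ f x :=
  VectorFourier.fourierIntegral_const_smul _ _ (-innerₗ V) f c

theorem integral_fourierInv_mul_eq_flip {f g : V → ℂ} (hf : Integrable f)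
    (hg : Integrable g) : ∫ x, 𝓕⁻ f x * g x = ∫ ξ, f ξ * 𝓕⁻ g ξ := by
  have hflip : (-innerₗ V).flip = -innerₗ V := by
    ext v w
    simp [real_inner_comm]
  simpa only [hflip] using! VectorFourier.integral_fourierIntegral_smul_eq_flip
    (L := -innerₗ V) Real.continuous_fourierChar continuous_inner.neg hf hg

theorem continuous_fourierInv_of_integrable {f : V → ℂ}
    (hf : Integrable f) : Continuous (𝓕⁻ f) :=
  VectorFourier.fourierIntegral_continuous (L := -innerₗ V) Real.continuous_fourierChar
    continuous_inner.neg hf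

theorem fourier_toLp_fourierInv_ae_eq {g : V → ℂ} (hg : Integrable g) (hm : MemLp (𝓕⁻ g) 2) :
    (𝓕 (hm.toLp (𝓕⁻ g)) : Lp (α := V) ℂ 2) =ᵐ[volume] g := by
  set G : Lp (α := V) ℂ 2 volume := hm.toLp (𝓕⁻ g)
  have hpair : ∀ φ : 𝓢(V, ℂ),
      ∫ x, φ x * (𝓕 G : Lp (α := V) ℂ 2 volume) x = ∫ x, φ x * g x := fun φ ↦ by
    have hdistr := Lp.toTemperedDistribution_apply (𝓕 G : Lp (α := V) ℂ 2 volume) φ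
    rw [← Lp.fourier_toTemperedDistribution_eq, TemperedDistribution.fourier_apply,
      Lp.toTemperedDistribution_apply] at hdistr
    have hG : ∫ x, (𝓕 φ : 𝓢(V, ℂ)) x * G x = ∫ x, (𝓕 φ : 𝓢(V, ℂ)) x * 𝓕⁻ g x := by
      refine integral_congr_ae ?_
      filter_upwards [hm.coeFn_toLp] with x hx
      rw [hx]
    simp only [smul_eq_mul] at hdistr
    have hφ : Integrable (𝓕 φ : 𝓢(V, ℂ)) := (𝓕 φ : 𝓢(V, ℂ)).integrable
    rw [← hdistr, hG, ← integral_fourierInv_mul_eq_flip hφ hg, ← SchwartzMap.fourierInv_coe,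
      fourierInv_fourier_eq]
  refine ae_eq_of_integral_contDiff_smul_eq
    ((Lp.memLp (𝓕 G : Lp (α := V) ℂ 2 volume)).locallyIntegrable one_le_two) hg.locallyIntegrable
    fun φ hφ hsupp ↦ ?_
  have hsupp' : HasCompactSupport fun x ↦ (φ x : ℂ) :=
    hsupp.comp_left (g := fun r : ℝ ↦ (r : ℂ)) Complex.ofReal_zero
  have hφ' : ContDiff ℝ (⊤ : ℕ∞) fun x ↦ (φ x : ℂ) := Complex.ofRealCLM.contDiff.comp hφ
  simpa using hpair (hsupp'.toSchwartzMap hφ')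

theorem eLpNorm_two_le_eLpNorm_fourierInv {g : V → ℂ} (hg : Integrable g) :
    eLpNorm g 2 volume ≤ eLpNorm (𝓕⁻ g) 2 volume := by
  by_cases htop : eLpNorm (𝓕⁻ g) 2 volume = ⊤
  · exact htop ▸ le_top
  have hm : MemLp (𝓕⁻ g) 2 :=
    ⟨(continuous_fourierInv_of_integrable hg).aestronglyMeasurable, lt_top_iff_ne_top.2 htop⟩
  have hplancherel := Lp.norm_fourier_eq (hm.toLp (𝓕⁻ g))
  rw [Lp.norm_def, Lp.norm_def, ENNReal.toReal_eq_toReal_iff' (Lp.eLpNorm_ne_top _)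
    (Lp.eLpNorm_ne_top _), eLpNorm_congr_ae hm.coeFn_toLp,
    eLpNorm_congr_ae (fourier_toLp_fourierInv_ae_eq hg hm)] at hplancherel
  exact hplancherel.le

variable {Ω : Type*} [MeasurableSpace Ω] {m : Measure Ω}

theorem integrable_uncurry_exp_mul {R : Ω → V → ℂ}
    (hR : Integrable (Function.uncurry R) (m.prod volume)) (x : V) :
    Integrable (Function.uncurry fun ω ξ ↦
      Complex.exp ((2 * Real.pi * inner ℝ ξ x : ℝ) * Complex.I) * R ω ξ) (m.prod volume) := by
  have hchar : Continuous fun ξ : V ↦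
      Complex.exp ((2 * Real.pi * inner ℝ ξ x : ℝ) * Complex.I) := by fun_prop
  exact hR.bdd_mul (hchar.aestronglyMeasurable.comp_snd)
    (.of_forall fun p ↦ (Complex.norm_exp_ofReal_mul_I _).le)

theorem integrable_fourierInv_of_prod {R : Ω → V → ℂ}
    (hR : Integrable (Function.uncurry R) (m.prod volume)) (x : V) :
    Integrable (fun ω ↦ 𝓕⁻ (R ω) x) m := by
  simp only [Real.fourierInv_eq', smul_eq_mul]
  exact (integrable_uncurry_exp_mul hR x).integral_prod_left

theorem fourierInv_integral [SFinite m] {R : Ω → V → ℂ}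
    (hR : Integrable (Function.uncurry R) (m.prod volume)) (x : V) :
    𝓕⁻ (fun ξ ↦ ∫ ω, R ω ξ ∂m) x = ∫ ω, 𝓕⁻ (R ω) x ∂m := by
  simp only [Real.fourierInv_eq', smul_eq_mul, ← integral_const_mul]
  exact integral_integral_swap (integrable_uncurry_exp_mul hR x).swap

end FourierInverse

section SchwartzCurves

open Set Function FourierTransform

section

variable {V : Type*} [NormedAddCommGroup V] [NormedSpace ℝ V]

theorem continuous_uncurry_schwartzMap {X : Type*} [TopologicalSpace X] {v : X → 𝓢(V, ℂ)}
    (hv : Continuous v) : Continuous (uncurry fun t ξ ↦ v t ξ) :=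
  (((toBoundedContinuousFunctionCLM ℂ V ℂ).continuous.comp hv).comp continuous_fst).eval
    continuous_snd

theorem exists_forall_one_add_norm_pow_mul_norm_le {X : Type*} [TopologicalSpace X]
    {v : X → 𝓢(V, ℂ)} (hv : Continuous v) (k : ℕ) {K : Set X} (hK : IsCompact K) :
    ∃ G : ℝ, ∀ t ∈ K, ∀ ξ, (1 + ‖ξ‖) ^ k * ‖v t ξ‖ ≤ G := by
  have hcont : Continuous fun t ↦
      (Finset.Iic (k, 0)).sup (schwartzSeminormFamily ℂ V ℂ) (v t) :=
    (Seminorm.continuous_finsetSup fun i _ ↦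
      (schwartz_withSeminorms ℂ V ℂ).continuous_seminorm i).comp hv
  obtain ⟨B, hB⟩ := hK.bddAbove_image hcont.continuousOn
  refine ⟨2 ^ k * B, fun t ht ξ ↦ ?_⟩
  have hle := one_add_le_sup_seminorm_apply (𝕜 := ℂ) (m := (k, 0)) le_rfl le_rfl (v t) ξ
  rw [norm_iteratedFDeriv_zero] at hle
  exact hle.trans (mul_le_mul_of_nonneg_left (hB (mem_image_of_mem _ ht)) (by positivity))

end

theorem exists_integrable_forall_norm_mul_le {X : Type*} [TopologicalSpace X]
    {v : X → 𝓢(E2, ℂ)} (hv : Continuous v) {K : Set X} (hK : IsCompact K) {w : E2 → ℂ} {C : ℝ}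
    (hw : ∀ ξ, ‖w ξ‖ ≤ C * (1 + ‖ξ‖)) :
    ∃ g : E2 → ℝ, Integrable g ∧ ∀ t ∈ K, ∀ ξ, ‖w ξ * v t ξ‖ ≤ g ξ := by
  obtain ⟨G, hG⟩ := exists_forall_one_add_norm_pow_mul_norm_le hv 4 hK
  have hC : 0 ≤ C := by simpa using (norm_nonneg _).trans (hw 0)
  refine ⟨fun ξ ↦ C * G * (1 + ‖ξ‖) ^ (-(3 : ℝ)), (integrable_one_add_norm ?_).const_mul _,
    fun t ht ξ ↦ ?_⟩
  · rw [finrank_euclideanSpace_fin]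
    norm_num
  · have hpos : 0 < 1 + ‖ξ‖ := by positivity
    have hpow : (1 + ‖ξ‖) ^ (-(3 : ℝ)) = ((1 + ‖ξ‖) ^ 3)⁻¹ := by
      rw [Real.rpow_neg hpos.le]
      norm_cast
    calc ‖w ξ * v t ξ‖ ≤ C * (1 + ‖ξ‖) * ‖v t ξ‖ := by
          rw [norm_mul]
          gcongr
          exact hw ξ
      _ = C * ((1 + ‖ξ‖) ^ 4 * ‖v t ξ‖) * ((1 + ‖ξ‖) ^ 3)⁻¹ := by field_simp
      _ ≤ C * G * (1 + ‖ξ‖) ^ (-(3 : ℝ)) := by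
          rw [hpow]
          gcongr
          exact hG t ht ξ

theorem integrable_mul_schwartzMap (f : 𝓢(E2, ℂ)) {w : E2 → ℂ} (hw : Continuous w) {C : ℝ}
    (hC : ∀ ξ, ‖w ξ‖ ≤ C * (1 + ‖ξ‖)) : Integrable fun ξ ↦ w ξ * f ξ := by
  obtain ⟨g, hg, hle⟩ := exists_integrable_forall_norm_mul_le (X := Unit) (v := fun _ ↦ f)
    continuous_const isCompact_univ hC
  exact hg.mono' (hw.mul f.continuous).aestronglyMeasurable (.of_forall (hle () trivial))

theorem norm_scaledDispersion_le {ν : ℝ} (hν : 0 < ν) (ξ : E2) :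
    ‖(scaledDispersion ν ‖ξ‖ : ℂ)‖ ≤ (1 / ν + 1) * (1 + ‖ξ‖) := by
  have hdisp : dispersion (ν * ‖ξ‖) ≤ 1 + ν * ‖ξ‖ := by
    refine Real.sqrt_le_iff.2 ⟨by positivity, ?_⟩
    have : ν * ‖ξ‖ * Real.tanh (ν * ‖ξ‖) ≤ ν * ‖ξ‖ * 1 := by
      gcongr
      exact (Real.tanh_lt_one _).le
    nlinarith [sq_nonneg (ν * ‖ξ‖), show 0 ≤ ν * ‖ξ‖ by positivity]
  have hnonneg : 0 ≤ dispersion (ν * ‖ξ‖) / ν := div_nonneg (Real.sqrt_nonneg _) hν.le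
  rw [Complex.norm_real, scaledDispersion, Real.norm_of_nonneg hnonneg]
  calc dispersion (ν * ‖ξ‖) / ν ≤ (1 + ν * ‖ξ‖) / ν := by gcongr
    _ ≤ (1 + ν * ‖ξ‖) / ν + (1 + ‖ξ‖ / ν) := le_add_of_nonneg_right (by positivity)
    _ = (1 / ν + 1) * (1 + ‖ξ‖) := by field_simp; ring

/-- The Fourier transform of `-i ((1/√μ) m₂(√μ D) v + f)`, where `ν = √μ`. -/
def fourierVelocity (ν : ℝ) (v f : 𝓢(E2, ℂ)) (ξ : E2) : ℂ :=
  -Complex.I * (scaledDispersion ν ‖ξ‖ * 𝓕 v ξ + 𝓕 f ξ)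

theorem fourierInv_coe_fourier (f : 𝓢(E2, ℂ)) (x : E2) : 𝓕⁻ ⇑(𝓕 f : 𝓢(E2, ℂ)) x = f x := by
  rw [← SchwartzMap.fourierInv_coe, fourierInv_fourier_eq]

theorem fourierInv_fourierVelocity {μ : ℝ} (hμ : 0 < μ) (v f : 𝓢(E2, ℂ)) (x : E2) :
    𝓕⁻ (fourierVelocity (√μ) v f) x = -Complex.I * (whithamOp2 μ v x + f x) := by
  have hw : Continuous fun ξ : E2 ↦ (scaledDispersion (√μ) ‖ξ‖ : ℂ) := by
    have := continuous_scaledDispersion √μ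
    fun_prop
  have hint := integrable_mul_schwartzMap (𝓕 v) hw (norm_scaledDispersion_le (Real.sqrt_pos.2 hμ))
  unfold fourierVelocity
  rw [fourierInv_const_mul, fourierInv_add_of_integrable hint (𝓕 f : 𝓢(E2, ℂ)).integrable]
  simp only [fourierInv_coe_fourier f, whithamOp2, fmul2, one_div_sqrt_mul_m2_eq,
    ← SchwartzMap.fourier_coe]

section

variable {ν : ℝ} {v f : ℝ → 𝓢(E2, ℂ)}

theorem continuous_uncurry_fourier (hv : Continuous v) :
    Continuous (uncurry fun t ξ ↦ (𝓕 (v t) : 𝓢(E2, ℂ)) ξ) :=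
  continuous_uncurry_schwartzMap ((fourierCLM ℂ 𝓢(E2, ℂ)).continuous.comp hv)

theorem continuous_uncurry_fourierVelocity (ν : ℝ) (hv : Continuous v) (hf : Continuous f) :
    Continuous (uncurry fun t ↦ fourierVelocity ν (v t) (f t)) := by
  have hdisp := continuous_scaledDispersion ν
  exact (((by fun_prop : Continuous fun p : ℝ × E2 ↦ (scaledDispersion ν ‖p.2‖ : ℂ)).mul
    (continuous_uncurry_fourier hv)).add (continuous_uncurry_fourier hf)).const_mul _

theorem continuous_integral_fourierVelocity (ν : ℝ) (hv : Continuous v) (hf : Continuous f)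
    (a b : ℝ) : Continuous fun ξ ↦ ∫ τ in a..b, fourierVelocity ν (v τ) (f τ) ξ := by
  have hswap := (continuous_uncurry_fourierVelocity ν hv hf).comp continuous_swap
  simp only [Function.comp_def, uncurry_def, Prod.fst_swap, Prod.snd_swap] at hswap
  exact intervalIntegral.continuous_parametric_intervalIntegral_of_continuous' hswap a b

theorem integrable_uncurry_fourierVelocity (hν : 0 < ν) (hv : Continuous v) (hf : Continuous f)
    (a b : ℝ) : Integrable (uncurry fun t ↦ fourierVelocity ν (v t) (f t))
      ((volume.restrict (Ioc a b)).prod volume) := by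
  have hfourier := (fourierCLM ℂ 𝓢(E2, ℂ)).continuous
  obtain ⟨g, hg, hgv⟩ := exists_integrable_forall_norm_mul_le (hfourier.comp hv)
    (isCompact_Icc (a := a) (b := b)) (norm_scaledDispersion_le hν)
  obtain ⟨g', hg', hgf⟩ := exists_integrable_forall_norm_mul_le (hfourier.comp hf)
    (isCompact_Icc (a := a) (b := b)) (w := 1) (C := 1) (by simp)
  have hbound : Integrable (fun p : ℝ × E2 ↦ g p.2 + g' p.2)
      ((volume.restrict (Ioc a b)).prod volume) := (hg.add hg').comp_snd _
  refine hbound.mono'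
    (continuous_uncurry_fourierVelocity ν hv hf).aestronglyMeasurable ?_
  rw [show (volume.restrict (Ioc a b)).prod volume =
    (volume.prod (volume : Measure E2)).restrict (Ioc a b ×ˢ univ) by
      rw [← Measure.prod_restrict, Measure.restrict_univ]]
  refine ae_restrict_of_forall_mem (measurableSet_Ioc.prod .univ) fun p hp ↦ ?_
  have hmem := Ioc_subset_Icc_self hp.1
  have henergy := hgf _ hmem p.2
  rw [Pi.one_apply, one_mul] at henergy
  simp only [uncurry, fourierVelocity, norm_mul, norm_neg, Complex.norm_I, one_mul]
  exact (norm_add_le _ _).trans (add_le_add (hgv _ hmem _) henergy)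

theorem integrable_integral_fourierVelocity (hν : 0 < ν) (hv : Continuous v) (hf : Continuous f)
    (a b : ℝ) : Integrable fun ξ ↦ ∫ τ in Ioc a b, fourierVelocity ν (v τ) (f τ) ξ :=
  (integrable_uncurry_fourierVelocity hν hv hf a b).integral_prod_right

end

/-- `u` solves `i ∂_t u − (1/√μ) m₂(√μ D) u = F` at every time of `s`, pointwise in space. -/
def IsWhithamSolutionOn (μ : ℝ) (u F : ℝ → 𝓢(E2, ℂ)) (s : Set ℝ) : Prop :=
  ∀ t ∈ s, ∀ x, HasDerivAt (fun τ ↦ u τ x) (-Complex.I * (whithamOp2 μ (u t) x + F t x)) t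

theorem fourierInv_fourier_add_integral_fourierVelocity {μ a b : ℝ} (hμ : 0 < μ) (hab : a ≤ b)
    {u F : ℝ → 𝓢(E2, ℂ)} (hu : Continuous u) (hF : Continuous F)
    (hsol : IsWhithamSolutionOn μ u F (Icc a b)) :
    𝓕⁻ (fun ξ ↦ (𝓕 (u a) : 𝓢(E2, ℂ)) ξ + ∫ τ in a..b, fourierVelocity (√μ) (u τ) (F τ) ξ) =
      u b := by
  have hint := integrable_uncurry_fourierVelocity (Real.sqrt_pos.2 hμ) hu hF a b
  ext x
  have hftc : ∫ τ in a..b, 𝓕⁻ (fourierVelocity (√μ) (u τ) (F τ)) x = u b x - u a x := by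
    refine intervalIntegral.integral_eq_sub_of_hasDerivAt (f := fun τ ↦ u τ x) (fun τ hτ ↦ ?_)
      ((intervalIntegrable_iff_integrableOn_Ioc_of_le hab).2
        (integrable_fourierInv_of_prod hint x))
    rw [uIcc_of_le hab] at hτ
    exact fourierInv_fourierVelocity hμ (u τ) (F τ) x ▸ hsol τ hτ x
  simp only [intervalIntegral.integral_of_le hab] at hftc ⊢
  rw [fourierInv_add_of_integrable (𝓕 (u a) : 𝓢(E2, ℂ)).integrable
    (integrable_integral_fourierVelocity (Real.sqrt_pos.2 hμ) hu hF a b)]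
  beta_reduce
  rw [fourierInv_coe_fourier, fourierInv_integral hint, hftc, add_sub_cancel]

theorem eq_coe_fourier_of_fourierInv_eq {g : E2 → ℂ} {f : 𝓢(E2, ℂ)} (hgc : Continuous g)
    (hg : Integrable g) (h : 𝓕⁻ g = f) : g = (𝓕 f : 𝓢(E2, ℂ)) := by
  have hfourier : 𝓕 g = fun x ↦ f (-x) := by
    ext x
    rw [← h, Real.fourierInv_eq_fourier_neg, neg_neg]
  have hint : Integrable (𝓕 g) := by
    rw [hfourier]
    exact f.integrable.comp_neg
  rw [SchwartzMap.fourier_coe, ← h, hgc.fourier_fourierInv_eq hg hint]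

theorem isFourierSolutionOn_fourier {μ T : ℝ} (hμ : 0 < μ) {u F : ℝ → 𝓢(E2, ℂ)}
    (hu : Continuous u) (hF : Continuous F)
    (hsol : IsWhithamSolutionOn μ u F (Icc 0 T)) :
    IsFourierSolutionOn (√μ) (fun t ↦ ⇑(𝓕 (u t) : 𝓢(E2, ℂ))) (fun t ↦ ⇑(𝓕 (F t) : 𝓢(E2, ℂ)))
      (Icc 0 T) := by
  intro a ha t ht hat ξ
  have hinv := fourierInv_fourier_add_integral_fourierVelocity hμ hat hu hF
    fun τ hτ ↦ hsol τ (Icc_subset_Icc ha.1 ht.2 hτ)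
  have hduhamel := congrFun (eq_coe_fourier_of_fourierInv_eq ?_ ?_ hinv) ξ
  · exact hduhamel.symm
  · exact (𝓕 (u a) : 𝓢(E2, ℂ)).continuous.add (continuous_integral_fourierVelocity _ hu hF a t)
  · refine (𝓕 (u a) : 𝓢(E2, ℂ)).integrable.add ?_
    simp only [intervalIntegral.integral_of_le hat]
    exact integrable_integral_fourierVelocity (Real.sqrt_pos.2 hμ) hu hF a t

end SchwartzCurves

section SobolevSymbols

open Set

theorem one_le_jap (x : ℝ) : 1 ≤ jap x :=
  Real.one_le_rpow (by nlinarith [sq_nonneg x]) (by norm_num)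

theorem le_jap (x : ℝ) : x ≤ jap x := by
  rw [jap, ← Real.sqrt_eq_rpow]
  exact Real.le_sqrt_of_sq_le (by linarith)

theorem jap_le_one_add {x : ℝ} (hx : 0 ≤ x) : jap x ≤ 1 + x := by
  rw [jap, ← Real.sqrt_eq_rpow]
  exact Real.sqrt_le_iff.2 ⟨by positivity, by nlinarith⟩

theorem measurable_jap : Measurable jap := by
  unfold jap
  fun_prop

/-- The symbol of `|D|^α ⟨D⟩^β ⟨ν D⟩^γ`; with `ν = √μ` this is `|D|^α J^β J_μ^γ`. -/
def sobolevSymbol (ν α β γ : ℝ) (ξ : E2) : ℝ := ‖ξ‖ ^ α * jap ‖ξ‖ ^ β * jap (ν * ‖ξ‖) ^ γ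

theorem measurable_sobolevSymbol (ν α β γ : ℝ) : Measurable (sobolevSymbol ν α β γ) := by
  have := measurable_jap
  unfold sobolevSymbol
  fun_prop

theorem sobolevSymbol_nonneg (ν α β γ : ℝ) (ξ : E2) : 0 ≤ sobolevSymbol ν α β γ ξ := by
  have hone := fun x ↦ zero_le_one.trans (one_le_jap x)
  have := hone ‖ξ‖
  have := hone (ν * ‖ξ‖)
  unfold sobolevSymbol
  positivity

theorem integrable_norm_inv_mul_one_add_norm_rpow :
    Integrable fun ξ : E2 ↦ ‖ξ‖⁻¹ * (1 + ‖ξ‖) ^ (-(3 : ℝ)) := by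
  rw [integrable_fun_norm_addHaar volume (f := fun r : ℝ ↦ r⁻¹ * (1 + r) ^ (-(3 : ℝ)))]
  refine (integrableOn_add_rpow_Ioi_of_lt (a := -3) (c := 0) (m := 1) (by norm_num)
    (by norm_num)).congr_fun (fun r (hr : 0 < r) ↦ ?_) measurableSet_Ioi
  simp only [finrank_euclideanSpace_fin, smul_eq_mul, Nat.add_one_sub_one, pow_one]
  rw [add_comm r 1]
  field_simp

section

variable {ν α β γ : ℝ}

theorem exists_sobolevSymbol_le (hν : 0 ≤ ν) (hα : -1 ≤ α) (hβ : 0 ≤ β) (hγ : 0 ≤ γ) :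
    ∃ k : ℕ, ∀ ξ ≠ 0, sobolevSymbol ν α β γ ξ ≤ (1 + ν) ^ γ * (‖ξ‖⁻¹ * (1 + ‖ξ‖) ^ k) := by
  refine ⟨⌈α + 1 + β + γ⌉₊, fun ξ hξ ↦ ?_⟩
  have hr : 0 < ‖ξ‖ := norm_pos_iff.2 hξ
  have hr1 : 0 < 1 + ‖ξ‖ := by positivity
  have hjap := zero_le_one.trans (one_le_jap ‖ξ‖)
  have hjapν := zero_le_one.trans (one_le_jap (ν * ‖ξ‖))
  have hriesz : ‖ξ‖ ^ α ≤ ‖ξ‖⁻¹ * (1 + ‖ξ‖) ^ (α + 1) := by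
    have hsplit : ‖ξ‖ ^ α = ‖ξ‖⁻¹ * ‖ξ‖ ^ (α + 1) := by
      rw [Real.rpow_add_one hr.ne']
      field_simp
    rw [hsplit]
    gcongr
    · linarith
    · linarith
  have hbessel : jap (ν * ‖ξ‖) ≤ (1 + ν) * (1 + ‖ξ‖) :=
    (jap_le_one_add (by positivity)).trans (by nlinarith)
  calc sobolevSymbol ν α β γ ξ
      ≤ ‖ξ‖⁻¹ * (1 + ‖ξ‖) ^ (α + 1) * (1 + ‖ξ‖) ^ β * ((1 + ν) * (1 + ‖ξ‖)) ^ γ := by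
        unfold sobolevSymbol
        gcongr
        exact jap_le_one_add hr.le
    _ = (1 + ν) ^ γ * (‖ξ‖⁻¹ * (1 + ‖ξ‖) ^ (α + 1 + β + γ)) := by
        rw [Real.mul_rpow (by positivity) hr1.le, Real.rpow_add hr1 (α + 1 + β) γ,
          Real.rpow_add hr1 (α + 1) β]
        ring
    _ ≤ (1 + ν) ^ γ * (‖ξ‖⁻¹ * (1 + ‖ξ‖) ^ ⌈α + 1 + β + γ⌉₊) := by
        gcongr
        rw [← Real.rpow_natCast]
        exact Real.rpow_le_rpow_of_exponent_le (by linarith) (Nat.le_ceil _)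

theorem integrable_sobolevSymbol_mul (hν : 0 ≤ ν) (hα : -1 ≤ α) (hβ : 0 ≤ β) (hγ : 0 ≤ γ)
    (f : 𝓢(E2, ℂ)) : Integrable fun ξ ↦ (sobolevSymbol ν α β γ ξ : ℂ) * f ξ := by
  obtain ⟨k, hk⟩ := exists_sobolevSymbol_le hν hα hβ hγ
  obtain ⟨G, hG⟩ := exists_forall_one_add_norm_pow_mul_norm_le (X := Unit) (v := fun _ ↦ f)
    continuous_const (k + 3) isCompact_univ
  have hmeas := Complex.measurable_ofReal.comp (measurable_sobolevSymbol ν α β γ)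
  refine (integrable_norm_inv_mul_one_add_norm_rpow.const_mul ((1 + ν) ^ γ * G)).mono'
    (hmeas.aestronglyMeasurable.mul f.continuous.aestronglyMeasurable) ?_
  filter_upwards [compl_mem_ae_iff.2 (measure_singleton (0 : E2))] with ξ hξ
  have hpow : (1 + ‖ξ‖) ^ (-(3 : ℝ)) = ((1 + ‖ξ‖) ^ 3)⁻¹ := by
    rw [Real.rpow_neg (by positivity)]
    norm_cast
  calc ‖(sobolevSymbol ν α β γ ξ : ℂ) * f ξ‖
      ≤ (1 + ν) ^ γ * (‖ξ‖⁻¹ * (1 + ‖ξ‖) ^ k) * ‖f ξ‖ := by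
        rw [norm_mul, Complex.norm_real, Real.norm_of_nonneg (sobolevSymbol_nonneg ..)]
        gcongr
        exact hk ξ hξ
    _ = (1 + ν) ^ γ * ((1 + ‖ξ‖) ^ (k + 3) * ‖f ξ‖) * (‖ξ‖⁻¹ * ((1 + ‖ξ‖) ^ 3)⁻¹) := by
        rw [pow_add]
        field_simp
    _ ≤ (1 + ν) ^ γ * G * (‖ξ‖⁻¹ * (1 + ‖ξ‖) ^ (-(3 : ℝ))) := by
        rw [hpow]
        gcongr
        exact hG () trivial ξ

theorem rpow_le_two_mul_norm_rpow {N : ℝ} (hN : 0 < N) (hα : -1 ≤ α) {ξ : E2}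
    (hξ : ξ ∈ dyadicAnnulus N) : N ^ α ≤ 2 * ‖ξ‖ ^ α := by
  rcases le_total 0 α with hα0 | hα0
  · have := Real.rpow_le_rpow hN.le hξ.1 hα0
    nlinarith [Real.rpow_nonneg hN.le α]
  · have htwo : 1 ≤ 2 * (2 : ℝ) ^ α := by
      rw [mul_comm, ← Real.rpow_add_one two_ne_zero]
      exact Real.one_le_rpow one_le_two (by linarith)
    calc N ^ α ≤ 2 * (2 : ℝ) ^ α * N ^ α := le_mul_of_one_le_left (by positivity) htwo
      _ = 2 * (2 * N) ^ α := by rw [Real.mul_rpow zero_le_two hN.le, mul_assoc]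
      _ ≤ 2 * ‖ξ‖ ^ α := by
        gcongr 2 * ?_
        exact Real.rpow_le_rpow_of_nonpos (hN.trans_le hξ.1) hξ.2.le hα0

theorem le_two_mul_sobolevSymbol {N : ℝ} (hν : 0 ≤ ν) (hN : 0 < N) (hα : -1 ≤ α) (hβ : 0 ≤ β)
    (hγ : 0 ≤ γ) {ξ : E2} (hξ : ξ ∈ dyadicAnnulus N) :
    N ^ α * max 1 N ^ β * max 1 (ν * N) ^ γ ≤ 2 * sobolevSymbol ν α β γ ξ := by
  have hbracket : ∀ {x y : ℝ}, x ≤ y → max 1 x ≤ jap y := fun hxy ↦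
    max_le (one_le_jap _) (hxy.trans (le_jap _))
  have hjap := zero_le_one.trans (one_le_jap ‖ξ‖)
  rw [sobolevSymbol, ← mul_assoc, ← mul_assoc]
  gcongr
  · exact rpow_le_two_mul_norm_rpow hN hα hξ
  · exact hbracket hξ.1
  · exact hbracket (mul_le_mul_of_nonneg_left hξ.1 hν)

theorem setLIntegral_dyadicAnnulus_le_eLpNorm_fmul2 {N : ℝ} (hν : 0 ≤ ν) (hN : 0 < N)
    (hα : -1 ≤ α) (hβ : 0 ≤ β) (hγ : 0 ≤ γ) (f : 𝓢(E2, ℂ)) :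
    ENNReal.ofReal (N ^ α * max 1 N ^ β * max 1 (ν * N) ^ γ) ^ 2 *
        ∫⁻ ξ in dyadicAnnulus N, ‖(𝓕 f : 𝓢(E2, ℂ)) ξ‖ₑ ^ 2 ≤
      4 * eLpNorm (fmul2 (sobolevSymbol ν α β γ) f) 2 volume ^ 2 := by
  set g : E2 → ℂ := fun ξ ↦ (sobolevSymbol ν α β γ ξ : ℂ) * (𝓕 f : 𝓢(E2, ℂ)) ξ
  set c := N ^ α * max 1 N ^ β * max 1 (ν * N) ^ γ
  have hpointwise : ∀ ξ ∈ dyadicAnnulus N,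
      ENNReal.ofReal c ^ 2 * ‖(𝓕 f : 𝓢(E2, ℂ)) ξ‖ₑ ^ 2 ≤ 4 * ‖g ξ‖ₑ ^ 2 := fun ξ hξ ↦ by
    have hc := ENNReal.ofReal_le_ofReal (le_two_mul_sobolevSymbol hν hN hα hβ hγ hξ)
    rw [ENNReal.ofReal_mul zero_le_two, ENNReal.ofReal_ofNat] at hc
    calc ENNReal.ofReal c ^ 2 * ‖(𝓕 f : 𝓢(E2, ℂ)) ξ‖ₑ ^ 2
        ≤ (2 * ENNReal.ofReal (sobolevSymbol ν α β γ ξ)) ^ 2 * ‖(𝓕 f : 𝓢(E2, ℂ)) ξ‖ₑ ^ 2 := by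
          gcongr
      _ = 4 * ‖g ξ‖ₑ ^ 2 := by
          rw [enorm_mul, ← ofReal_norm (Complex.ofReal _), Complex.norm_real,
            Real.norm_of_nonneg (sobolevSymbol_nonneg ..)]
          ring
  have hplancherel : ∫⁻ ξ, ‖g ξ‖ₑ ^ 2 ≤ eLpNorm (fmul2 (sobolevSymbol ν α β γ) f) 2 volume ^ 2 :=
    calc ∫⁻ ξ, ‖g ξ‖ₑ ^ 2 = eLpNorm g 2 volume ^ 2 := by
          simpa using (eLpNorm_nnreal_pow_eq_lintegral (f := g) (μ := volume) two_ne_zero).symm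
      _ ≤ eLpNorm (𝓕⁻ g) 2 volume ^ 2 := by
          gcongr
          exact eLpNorm_two_le_eLpNorm_fourierInv
            (integrable_sobolevSymbol_mul hν hα hβ hγ (𝓕 f))
  calc ENNReal.ofReal c ^ 2 * ∫⁻ ξ in dyadicAnnulus N, ‖(𝓕 f : 𝓢(E2, ℂ)) ξ‖ₑ ^ 2
      = ∫⁻ ξ in dyadicAnnulus N, ENNReal.ofReal c ^ 2 * ‖(𝓕 f : 𝓢(E2, ℂ)) ξ‖ₑ ^ 2 :=
        (lintegral_const_mul' _ _ (ENNReal.pow_ne_top ENNReal.ofReal_ne_top)).symm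
    _ ≤ ∫⁻ ξ in dyadicAnnulus N, 4 * ‖g ξ‖ₑ ^ 2 :=
        setLIntegral_mono' (measurableSet_dyadicAnnulus N) hpointwise
    _ ≤ ∫⁻ ξ, 4 * ‖g ξ‖ₑ ^ 2 := setLIntegral_le_lintegral _ _
    _ ≤ 4 * eLpNorm (fmul2 (sobolevSymbol ν α β γ) f) 2 volume ^ 2 := by
        rw [lintegral_const_mul' _ _ (by norm_num)]
        gcongr

end

end SobolevSymbols

section LittlewoodPaley

open Set Function
open scoped Real

theorem iSup_annulusPart_sq_le {N : ℝ} (hN : 0 < N) {g : E2 → ℂ} (hg : Measurable g) :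
    (⨆ x, ‖annulusPart N g x‖ₑ) ^ 2 ≤
      ENNReal.ofReal (4 * π * N ^ 2) * ∫⁻ ξ in dyadicAnnulus N, ‖g ξ‖ₑ ^ 2 := by
  have hsup : ⨆ x, ‖annulusPart N g x‖ₑ ≤ ∫⁻ ξ in dyadicAnnulus N, ‖g ξ‖ₑ := by
    refine iSup_le fun x ↦ (enorm_integral_le_lintegral_enorm _).trans_eq ?_
    simp only [enorm_mul, ← ofReal_norm (Complex.exp _), Complex.norm_exp_ofReal_mul_I,
      ENNReal.ofReal_one, one_mul]
  calc (⨆ x, ‖annulusPart N g x‖ₑ) ^ 2 ≤ (∫⁻ ξ in dyadicAnnulus N, ‖g ξ‖ₑ) ^ 2 := by gcongr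
    _ ≤ volume (dyadicAnnulus N) * ∫⁻ ξ in dyadicAnnulus N, ‖g ξ‖ₑ ^ 2 := by
        simpa using lintegral_sq_le (m := volume.restrict (dyadicAnnulus N)) hg.enorm.aemeasurable
    _ ≤ ENNReal.ofReal (4 * π * N ^ 2) * ∫⁻ ξ in dyadicAnnulus N, ‖g ξ‖ₑ ^ 2 := by
        gcongr
        rw [← ofReal_measureReal (volume_dyadicAnnulus_lt_top N).ne]
        exact ENNReal.ofReal_le_ofReal (volume_real_dyadicAnnulus_le hN)

theorem pairwise_disjoint_dyadicAnnulus_zpow :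
    Pairwise (Disjoint on fun k : ℤ ↦ dyadicAnnulus (2 ^ k)) := by
  refine pairwise_disjoint_on _ |>.2 fun i j hij ↦ disjoint_left.2 fun ξ hi hj ↦ ?_
  have hle : (2 : ℝ) * 2 ^ i ≤ 2 ^ j := by
    rw [← zpow_one_add₀ two_ne_zero]
    exact zpow_le_zpow_right₀ one_le_two (by lia)
  exact (hi.2.trans_le (hle.trans hj.1)).false

theorem iUnion_dyadicAnnulus_zpow : ⋃ k : ℤ, dyadicAnnulus (2 ^ k) = {0}ᶜ := by
  ext ξ
  simp only [mem_iUnion, mem_compl_iff, mem_singleton_iff]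
  refine ⟨fun ⟨k, hk, _⟩ hξ ↦ ?_, fun hξ ↦ ?_⟩
  · rw [hξ, norm_zero] at hk
    exact hk.not_gt (by positivity)
  · obtain ⟨k, hk, hk'⟩ := exists_mem_Ico_zpow (norm_pos_iff.2 hξ) one_lt_two
    exact ⟨k, hk, by rwa [← zpow_one_add₀ two_ne_zero, add_comm]⟩

theorem hasSum_annulusPart_zpow (f : 𝓢(E2, ℂ)) (x : E2) :
    HasSum (fun k : ℤ ↦ annulusPart (2 ^ k) (𝓕 f : 𝓢(E2, ℂ)) x) (f x) := by
  have hint : Integrable fun ξ ↦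
      Complex.exp ((2 * π * inner ℝ ξ x : ℝ) * Complex.I) * (𝓕 f : 𝓢(E2, ℂ)) ξ :=
    (𝓕 f : 𝓢(E2, ℂ)).integrable.bdd_mul (c := 1)
      (by fun_prop) (.of_forall fun ξ ↦ (Complex.norm_exp_ofReal_mul_I _).le)
  have hinv : ∫ ξ in ⋃ k : ℤ, dyadicAnnulus (2 ^ k),
      Complex.exp ((2 * π * inner ℝ ξ x : ℝ) * Complex.I) * (𝓕 f : 𝓢(E2, ℂ)) ξ = f x := by
    rw [iUnion_dyadicAnnulus_zpow, setIntegral_congr_set (t := univ)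
      (ae_eq_univ.2 (by rw [compl_compl]; exact measure_singleton _)), Measure.restrict_univ,
      ← fourierInv_coe_fourier f x, Real.fourierInv_eq']
    simp only [smul_eq_mul]
  have hsum := hasSum_integral_iUnion (fun k : ℤ ↦ measurableSet_dyadicAnnulus (2 ^ k))
    pairwise_disjoint_dyadicAnnulus_zpow hint.integrableOn
  rwa [hinv] at hsum

theorem eLpNorm_top_le_tsum_iSup_annulusPart (f : 𝓢(E2, ℂ)) :
    eLpNorm f ⊤ volume ≤ ∑' k : ℤ, ⨆ x, ‖annulusPart (2 ^ k) (𝓕 f : 𝓢(E2, ℂ)) x‖ₑ := by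
  rw [eLpNorm_exponent_top]
  refine essSup_le_of_ae_le _ (.of_forall fun x ↦ ?_)
  beta_reduce
  rw [← (hasSum_annulusPart_zpow f x).tsum_eq]
  exact enorm_tsum_le_tsum_enorm.trans <| ENNReal.tsum_le_tsum fun k ↦
    le_iSup (fun x ↦ ‖annulusPart (2 ^ k) (𝓕 f : 𝓢(E2, ℂ)) x‖ₑ) x

theorem measurable_iSup_annulusPart (N : ℝ) {U : ℝ → E2 → ℂ} (hU : Continuous (uncurry U)) :
    Measurable fun t ↦ ⨆ x, ‖annulusPart N (U t) x‖ₑ := by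
  have hsup : (fun t ↦ ⨆ x, ‖annulusPart N (U t) x‖ₑ) = ⨆ x, fun t ↦ ‖annulusPart N (U t) x‖ₑ :=
    funext fun t ↦ (iSup_apply (f := fun x t ↦ ‖annulusPart N (U t) x‖ₑ) (a := t)).symm
  rw [hsup]
  exact measurable_iSup_of_lowerSemicontinuous
    (fun x ↦ ((measurable_annulusPart N hU).of_uncurry_right (y := x)).enorm)
    (fun t ↦ (continuous_annulusPart N (hU.uncurry_left t)).enorm.lowerSemicontinuous)

end LittlewoodPaley

section Minkowski

variable {Ω : Type*} [MeasurableSpace Ω] {m : Measure Ω} {p : ℝ}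

theorem lintegral_finsetSum_rpow_le {ι : Type*} (hp : 1 ≤ p) {a : ι → Ω → ℝ≥0∞}
    (ha : ∀ i, AEMeasurable (a i) m) (s : Finset ι) :
    (∫⁻ ω, (∑ i ∈ s, a i ω) ^ p ∂m) ^ (1 / p) ≤ ∑ i ∈ s, (∫⁻ ω, a i ω ^ p ∂m) ^ (1 / p) := by
  classical
  have hp0 : 0 < p := zero_lt_one.trans_le hp
  induction s using Finset.induction_on with
  | empty => simp [ENNReal.zero_rpow_of_pos hp0, ENNReal.zero_rpow_of_pos (inv_pos.2 hp0)]
  | insert i s hi ih =>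
    simp only [Finset.sum_insert hi]
    exact (ENNReal.lintegral_Lp_add_le (ha i)
      (Finset.aemeasurable_fun_sum s fun j _ ↦ ha j) hp).trans (by gcongr)

theorem lintegral_tsum_rpow_le {ι : Type*} [Countable ι] (hp : 1 ≤ p) {a : ι → Ω → ℝ≥0∞}
    (ha : ∀ i, AEMeasurable (a i) m) :
    (∫⁻ ω, (∑' i, a i ω) ^ p ∂m) ^ (1 / p) ≤ ∑' i, (∫⁻ ω, a i ω ^ p ∂m) ^ (1 / p) := by
  have hp0 : 0 < p := zero_lt_one.trans_le hp
  have hsup : ∀ {q : ℝ} (_ : 0 < q) (g : Finset ι → ℝ≥0∞), (⨆ s, g s) ^ q = ⨆ s, g s ^ q :=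
    fun hq g ↦ (ENNReal.orderIsoRpow _ hq).map_iSup g
  simp only [ENNReal.tsum_eq_iSup_sum, hsup hp0]
  rw [lintegral_iSup_directed
    (fun s ↦ (Finset.aemeasurable_fun_sum s fun i _ ↦ ha i).pow_const p)
    (Monotone.directed_le fun s s' hs ω ↦ by gcongr), hsup (one_div_pos.2 hp0)]
  exact iSup_mono fun s ↦ lintegral_finsetSum_rpow_le hp ha s

end Minkowski

section FrequencyBalance

open Set Function Real

variable {θ m n τ : ℝ}

/-- The logarithm of the size of `sobolevSymbol (e^(m/2)) α β γ` on the annulus of radius `e^n`. -/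
def symbolExponent (m α β γ n : ℝ) : ℝ := α * n + β * max 0 n + γ * max 0 (m / 2 + n)

/-- The factor in front of the norms of `u` in the refined Strichartz estimate. -/
def solutionWeight (θ μ T : ℝ) : ℝ :=
  μ ^ (-(1 : ℝ) / 6 + 5 * θ / 36) * T ^ ((1 : ℝ) / 6 + 5 * θ / 18)

/-- The factor in front of the norm of `F` in the refined Strichartz estimate. -/
def forcingWeight (θ μ T : ℝ) : ℝ :=
  μ ^ (-(1 : ℝ) / 3 + θ / 9) * T ^ ((1 : ℝ) / 3 + 2 * θ / 9)

/-- For `μ = e^m` and `T = e^τ`, the Strichartz estimate at frequency `e^n` is applied on time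
intervals of length about `e^(-timeStepExponent θ m τ n)`. The exponent is the one for which the
contribution of `u` to the estimate equals `e^(-(2θ/3)|n|) * solutionWeight θ μ T ^ 2`. -/
def timeStepExponent (θ m τ n : ℝ) : ℝ :=
  -(2 * θ / 3) * |n| + (1 / 6 + θ / 36) * m + (-2 / 3 + θ / 18) * τ + (1 - 5 * θ / 3) * n +
    4 * θ * max 0 n

theorem solutionWeight_exp_sq : solutionWeight θ (exp m) (exp τ) ^ 2 =
    exp ((-1 / 3 + 5 * θ / 18) * m + (1 / 3 + 5 * θ / 9) * τ) := by
  rw [solutionWeight, ← exp_mul, ← exp_mul, ← exp_add, ← exp_nat_mul]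
  congr 1
  push_cast
  ring

theorem forcingWeight_exp_sq : forcingWeight θ (exp m) (exp τ) ^ 2 =
    exp ((-2 / 3 + 2 * θ / 9) * m + (2 / 3 + 4 * θ / 9) * τ) := by
  rw [forcingWeight, ← exp_mul, ← exp_mul, ← exp_add, ← exp_nat_mul]
  congr 1
  push_cast
  ring

theorem exp_lowFrequency_le (hθ : 0 < θ) (hθ' : θ < 1 / 2)
    (hlow : τ + timeStepExponent θ m τ n < 0) :
    exp (τ + 2 * n - 2 * θ * max 0 n) ≤
      exp (-(2 * θ / 3) * |n|) * solutionWeight θ (exp m) (exp τ) ^ 2 := by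
  rw [solutionWeight_exp_sq, ← exp_add, exp_le_exp]
  unfold timeStepExponent at hlow
  obtain ⟨ℓ, rfl⟩ : ∃ ℓ, m = ℓ - 2 * τ := ⟨m + 2 * τ, by ring⟩
  rcases le_total 0 n with hn | hn
  · rw [abs_of_nonneg hn, max_eq_right hn] at hlow ⊢
    have hlow' : (1 / 6 + θ / 36) * ℓ + (1 + 5 * θ / 3) * n < 0 := by linarith
    suffices (2 - 4 * θ / 3) * n + (1 / 3 - 5 * θ / 18) * ℓ ≤ 0 by linarith
    have hcoeff : 0 ≤ (1 / 3 - 5 * θ / 18) * (1 + 5 * θ / 3) -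
        (1 / 6 + θ / 36) * (2 - 4 * θ / 3) := by nlinarith
    nlinarith [mul_nonneg hcoeff hn, hlow']
  · rw [abs_of_nonpos hn, max_eq_left hn] at hlow ⊢
    have hlow' : (1 / 6 + θ / 36) * ℓ + (1 - θ) * n < 0 := by linarith
    suffices (2 - 2 * θ / 3) * n + (1 / 3 - 5 * θ / 18) * ℓ ≤ 0 by linarith
    have hcoeff : 0 ≤ (1 / 6 + θ / 36) * (2 - 2 * θ / 3) - (1 / 3 - 5 * θ / 18) * (1 - θ) := by
      nlinarith
    nlinarith [mul_nonneg hcoeff (neg_nonneg.2 hn), hlow']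

theorem setLIntegral_dyadicAnnulus_exp_le {α β γ : ℝ} (hα : -1 ≤ α) (hβ : 0 ≤ β) (hγ : 0 ≤ γ)
    (m n : ℝ) (f : 𝓢(E2, ℂ)) :
    ∫⁻ ξ in dyadicAnnulus (exp n), ‖(𝓕 f : 𝓢(E2, ℂ)) ξ‖ₑ ^ 2 ≤
      ENNReal.ofReal (4 * exp (-(2 * symbolExponent m α β γ n))) *
        eLpNorm (fmul2 (sobolevSymbol (exp (m / 2)) α β γ) f) 2 volume ^ 2 := by
  have hmax : ∀ x, max 1 (exp x) = exp (max 0 x) := fun x ↦ by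
    rw [exp_monotone.map_max, exp_zero]
  have hsize : exp n ^ α * max 1 (exp n) ^ β * max 1 (exp (m / 2) * exp n) ^ γ =
      exp (symbolExponent m α β γ n) := by
    rw [← exp_add, hmax, hmax, ← exp_mul, ← exp_mul, ← exp_mul, ← exp_add, ← exp_add,
      symbolExponent]
    ring_nf
  have hann := setLIntegral_dyadicAnnulus_le_eLpNorm_fmul2 (exp_pos (m / 2)).le (exp_pos n)
    hα hβ hγ f
  rw [hsize] at hann
  calc ∫⁻ ξ in dyadicAnnulus (exp n), ‖(𝓕 f : 𝓢(E2, ℂ)) ξ‖ₑ ^ 2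
      = ENNReal.ofReal (exp (-(2 * symbolExponent m α β γ n))) *
          (ENNReal.ofReal (exp (symbolExponent m α β γ n)) ^ 2 *
            ∫⁻ ξ in dyadicAnnulus (exp n), ‖(𝓕 f : 𝓢(E2, ℂ)) ξ‖ₑ ^ 2) := by
        rw [← mul_assoc, ← ENNReal.ofReal_pow (exp_pos _).le, ← exp_nat_mul,
          ← ENNReal.ofReal_mul (exp_pos _).le, ← exp_add]
        simp
    _ ≤ ENNReal.ofReal (exp (-(2 * symbolExponent m α β γ n))) *
          (4 * eLpNorm (fmul2 (sobolevSymbol (exp (m / 2)) α β γ) f) 2 volume ^ 2) := by gcongr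
    _ = ENNReal.ofReal (4 * exp (-(2 * symbolExponent m α β γ n))) *
          eLpNorm (fmul2 (sobolevSymbol (exp (m / 2)) α β γ) f) 2 volume ^ 2 := by
        rw [ENNReal.ofReal_mul zero_le_four, ENNReal.ofReal_ofNat]
        ring

theorem lintegral_iSup_annulusPart_sq_le_of_low (hθ : 0 < θ) (hθ' : θ < 1 / 2)
    (hlow : τ + timeStepExponent θ m τ n < 0) {U : ℝ → E2 → ℂ} (hU : ∀ t, Measurable (U t))
    {S : ℝ≥0∞} (hS : ∀ t ∈ Icc 0 (exp τ), ∫⁻ ξ in dyadicAnnulus (exp n), ‖U t ξ‖ₑ ^ 2 ≤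
      ENNReal.ofReal (4 * exp (-(2 * symbolExponent m 0 θ 0 n))) * S) :
    ∫⁻ t in Ioc 0 (exp τ), (⨆ x, ‖annulusPart (exp n) (U t) x‖ₑ) ^ 2 ≤
      ENNReal.ofReal (16 * π * (exp (-(2 * θ / 3) * |n|) *
        solutionWeight θ (exp m) (exp τ) ^ 2)) * S := by
  have hbernstein : ∀ t ∈ Ioc 0 (exp τ), (⨆ x, ‖annulusPart (exp n) (U t) x‖ₑ) ^ 2 ≤
      ENNReal.ofReal (4 * π * exp n ^ 2) *
        (ENNReal.ofReal (4 * exp (-(2 * symbolExponent m 0 θ 0 n))) * S) := fun t ht ↦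
    (iSup_annulusPart_sq_le (exp_pos n) (hU t)).trans (by grw [hS t ⟨ht.1.le, ht.2⟩])
  have hexp : 4 * π * exp n ^ 2 * (4 * exp (-(2 * symbolExponent m 0 θ 0 n))) * exp τ =
      16 * π * exp (τ + 2 * n - 2 * θ * max 0 n) := by
    have : τ + 2 * n - 2 * θ * max 0 n = n + n + -(2 * symbolExponent m 0 θ 0 n) + τ := by
      rw [symbolExponent]
      ring
    rw [this, exp_add, exp_add, exp_add]
    ring
  calc ∫⁻ t in Ioc 0 (exp τ), (⨆ x, ‖annulusPart (exp n) (U t) x‖ₑ) ^ 2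
      ≤ ∫⁻ _ in Ioc 0 (exp τ), ENNReal.ofReal (4 * π * exp n ^ 2) *
          (ENNReal.ofReal (4 * exp (-(2 * symbolExponent m 0 θ 0 n))) * S) :=
        setLIntegral_mono' measurableSet_Ioc hbernstein
    _ = ENNReal.ofReal (16 * π * exp (τ + 2 * n - 2 * θ * max 0 n)) * S := by
        have hpos : 0 ≤ 4 * π * exp n ^ 2 := by positivity
        rw [setLIntegral_const, volume_Ioc, sub_zero, ← hexp, ENNReal.ofReal_mul' (exp_pos τ).le,
          ENNReal.ofReal_mul hpos]
        ring
    _ ≤ _ := by grw [exp_lowFrequency_le hθ hθ' hlow]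

theorem exp_highFrequency_solution :
    exp (θ * n + 3 / 2 * max 0 (m / 2 + n) - (1 / 2 - θ / 4) * m + θ / 2 * τ) *
        exp (τ + timeStepExponent θ m τ n) *
        exp (-(2 * symbolExponent m ((1 : ℝ) / 2 - θ / 3) (2 * θ) (3 / 4) n)) =
      exp (-(2 * θ / 3) * |n|) * solutionWeight θ (exp m) (exp τ) ^ 2 := by
  rw [solutionWeight_exp_sq, ← exp_add, ← exp_add, ← exp_add, timeStepExponent, symbolExponent]
  congr 1
  ring

theorem exp_highFrequency_forcing_le (hθ : 0 < θ) :
    exp (θ * n + 3 / 2 * max 0 (m / 2 + n) - (1 / 2 - θ / 4) * m + θ / 2 * τ) *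
        exp (-timeStepExponent θ m τ n) *
        exp (-(2 * symbolExponent m (-(1 : ℝ) / 2 - θ / 3) θ (3 / 4) n)) ≤
      exp (-(2 * θ / 3) * |n|) * forcingWeight θ (exp m) (exp τ) ^ 2 := by
  have habs : 10 * θ / 3 * n - 6 * θ * max 0 n ≤ -(4 * θ / 3) * |n| := by
    rcases le_total 0 n with hn | hn
    · rw [abs_of_nonneg hn, max_eq_right hn]
      nlinarith [mul_nonneg hθ.le hn]
    · rw [abs_of_nonpos hn, max_eq_left hn]
      nlinarith [mul_nonneg hθ.le (neg_nonneg.2 hn)]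
  rw [forcingWeight_exp_sq, ← exp_add, ← exp_add, ← exp_add, exp_le_exp, timeStepExponent,
    symbolExponent]
  linarith

theorem exists_nat_mem_Icc {x : ℝ} (hx : 1 ≤ x) : ∃ J : ℕ, (J : ℝ) ∈ Icc x (2 * x) :=
  ⟨⌈x⌉₊, Nat.le_ceil x, by linarith [Nat.ceil_lt_add_one (zero_le_one.trans hx)]⟩

/-- The constant, up to a numerical factor, of the Strichartz estimate on the annulus of radius
`e^n` with `s = θ / 2`, when `μ = e^m` and the interval `[0, e^τ]` is cut into `J` pieces. -/
def strichartzFactor (θ m n τ J : ℝ) : ℝ :=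
  exp n ^ (2 * (θ / 2)) * (exp (max 0 (m / 2 + n) / 2) ^ 3 / exp (m / 2)) ^ (1 - θ / 2) *
    (exp τ / J) ^ (θ / 2)

theorem strichartzFactor_nonneg {J : ℝ} (hJ : 0 ≤ J) : 0 ≤ strichartzFactor θ m n τ J := by
  unfold strichartzFactor
  positivity

theorem strichartzFactor_le {J : ℝ} (hθ : 0 < θ) (hJ : 1 ≤ J) :
    strichartzFactor θ m n τ J ≤
      exp (θ * n + 3 / 2 * max 0 (m / 2 + n) - (1 / 2 - θ / 4) * m + θ / 2 * τ) := by
  have hbase : exp (max 0 (m / 2 + n) / 2) ^ 3 / exp (m / 2) =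
      exp (3 / 2 * max 0 (m / 2 + n) - m / 2) := by
    rw [← exp_nat_mul, ← exp_sub]
    congr 1
    push_cast
    ring
  have htime : (exp τ / J) ^ (θ / 2) ≤ exp (τ * (θ / 2)) := by
    rw [exp_mul]
    gcongr
    exact div_le_self (exp_pos _).le hJ
  calc strichartzFactor θ m n τ J
      ≤ exp (n * (2 * (θ / 2))) * exp ((3 / 2 * max 0 (m / 2 + n) - m / 2) * (1 - θ / 2)) *
          exp (τ * (θ / 2)) := by
        rw [strichartzFactor, hbase, ← exp_mul, ← exp_mul]
        gcongr
    _ ≤ exp (θ * n + 3 / 2 * max 0 (m / 2 + n) - (1 / 2 - θ / 4) * m + θ / 2 * τ) := by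
        rw [← exp_add, ← exp_add, exp_le_exp]
        nlinarith [mul_nonneg hθ.le (le_max_left 0 (m / 2 + n))]

theorem exists_strichartzFactor_mul_le (hθ : 0 < θ) (hhigh : 0 ≤ τ + timeStepExponent θ m τ n) :
    ∃ J : ℕ, 0 < J ∧
      strichartzFactor θ m n τ J * J *
          (4 * exp (-(2 * symbolExponent m (1 / 2 - θ / 3) (2 * θ) (3 / 4) n))) ≤
        8 * (exp (-(2 * θ / 3) * |n|) * solutionWeight θ (exp m) (exp τ) ^ 2) ∧
      strichartzFactor θ m n τ J * (exp τ / J) *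
          (4 * exp (-(2 * symbolExponent m (-1 / 2 - θ / 3) θ (3 / 4) n))) ≤
        4 * (exp (-(2 * θ / 3) * |n|) * forcingWeight θ (exp m) (exp τ) ^ 2) := by
  obtain ⟨J, hJ, hJ'⟩ := exists_nat_mem_Icc (one_le_exp hhigh)
  have hJ1 : (1 : ℝ) ≤ J := (one_le_exp hhigh).trans hJ
  have hJ0 : (0 : ℝ) < J := by positivity
  have hfactor := strichartzFactor_le (m := m) (n := n) (τ := τ) hθ hJ1
  have hstep : exp τ / J ≤ exp (-timeStepExponent θ m τ n) := by
    rw [div_le_iff₀ hJ0]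
    calc exp τ = exp (-timeStepExponent θ m τ n) * exp (τ + timeStepExponent θ m τ n) := by
          rw [← exp_add]
          ring_nf
      _ ≤ exp (-timeStepExponent θ m τ n) * J := by gcongr
  refine ⟨J, by exact_mod_cast hJ0, ?_, ?_⟩
  · rw [← exp_highFrequency_solution]
    grw [hfactor, hJ']
    exact le_of_eq (by ring)
  · grw [← exp_highFrequency_forcing_le hθ, hfactor, hstep]
    exact le_of_eq (by ring)

theorem exists_lintegral_iSup_annulusPart_sq_le_of_high (hθ : 0 < θ) (hθ' : θ < 1 / 2) :
    ∃ C > 0, ∀ m n τ : ℝ, 0 ≤ τ + timeStepExponent θ m τ n → ∀ U F : ℝ → E2 → ℂ,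
      Continuous (uncurry U) → Continuous (uncurry F) →
      IsFourierSolutionOn (exp (m / 2)) U F (Icc 0 (exp τ)) → ∀ S Z : ℝ≥0∞,
      (∀ t ∈ Icc 0 (exp τ), ∫⁻ ξ in dyadicAnnulus (exp n), ‖U t ξ‖ₑ ^ 2 ≤
        ENNReal.ofReal (4 * exp (-(2 * symbolExponent m (1 / 2 - θ / 3) (2 * θ) (3 / 4) n))) * S) →
      ∫⁻ t in Ioc 0 (exp τ), ∫⁻ ξ in dyadicAnnulus (exp n), ‖F t ξ‖ₑ ^ 2 ≤
        ENNReal.ofReal (4 * exp (-(2 * symbolExponent m (-1 / 2 - θ / 3) θ (3 / 4) n))) * Z →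
      ∫⁻ t in Ioc 0 (exp τ), (⨆ x, ‖annulusPart (exp n) (U t) x‖ₑ) ^ 2 ≤
        ENNReal.ofReal (C * exp (-(2 * θ / 3) * |n|)) *
          (ENNReal.ofReal (solutionWeight θ (exp m) (exp τ) ^ 2) * S +
            ENNReal.ofReal (forcingWeight θ (exp m) (exp τ) ^ 2) * Z) := by
  obtain ⟨C, hC, hstrichartz⟩ :=
    exists_lintegral_iSup_annulusPart_sq_le (s := θ / 2) (by linarith) (by linarith)
  refine ⟨8 * C, by positivity, fun m n τ hhigh U F hU hF hsol S Z hS hZ ↦ ?_⟩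
  obtain ⟨J, hJ, hsolution, hforcing⟩ := exists_strichartzFactor_mul_le hθ hhigh
  set a := symbolExponent m (1 / 2 - θ / 3) (2 * θ) (3 / 4) n
  set b := symbolExponent m (-1 / 2 - θ / 3) θ (3 / 4) n
  set w := exp (-(2 * θ / 3) * |n|)
  set σ := solutionWeight θ (exp m) (exp τ) ^ 2
  set φ := forcingWeight θ (exp m) (exp τ) ^ 2
  set κ := strichartzFactor θ m n τ J
  have hregime : exp (m / 2) * exp n ≤ exp (max 0 (m / 2 + n) / 2) ^ 2 := by
    rw [← exp_add, ← exp_nat_mul, exp_le_exp]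
    exact (le_max_right 0 _).trans_eq (by push_cast; ring)
  have hκ : 0 ≤ κ := strichartzFactor_nonneg J.cast_nonneg
  have hκJ : 0 ≤ κ * J := by positivity
  have hκτ : 0 ≤ κ * (exp τ / J) := by positivity
  calc ∫⁻ t in Ioc 0 (exp τ), (⨆ x, ‖annulusPart (exp n) (U t) x‖ₑ) ^ 2
      ≤ ENNReal.ofReal (C * κ) * (J * (ENNReal.ofReal (4 * exp (-(2 * a))) * S) +
          ENNReal.ofReal (exp τ / J) * (ENNReal.ofReal (4 * exp (-(2 * b))) * Z)) := by
        grw [hstrichartz _ _ _ _ (exp_pos (m / 2)) (exp_pos n) (one_le_exp (by positivity)) hregime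
          (exp_pos τ) U F hU hF hsol _ hS J hJ, hZ]
        simp only [κ, strichartzFactor, mul_assoc, le_refl]
    _ = ENNReal.ofReal (C * (κ * J * (4 * exp (-(2 * a))))) * S +
          ENNReal.ofReal (C * (κ * (exp τ / J) * (4 * exp (-(2 * b))))) * Z := by
        rw [← ENNReal.ofReal_natCast, mul_add]
        simp only [ENNReal.ofReal_mul hC.le, ENNReal.ofReal_mul hκ, ENNReal.ofReal_mul hκJ,
          ENNReal.ofReal_mul hκτ]
        ring
    _ ≤ ENNReal.ofReal (8 * C * w * σ) * S + ENNReal.ofReal (8 * C * w * φ) * Z := by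
        gcongr ENNReal.ofReal ?_ * S + ENNReal.ofReal ?_ * Z
        · linarith [mul_le_mul_of_nonneg_left hsolution hC.le]
        · have : 0 ≤ C * (w * φ) := by positivity
          linarith [mul_le_mul_of_nonneg_left hforcing hC.le]
    _ = ENNReal.ofReal (8 * C * w) * (ENNReal.ofReal σ * S + ENNReal.ofReal φ * Z) := by
        rw [ENNReal.ofReal_mul (by positivity), ENNReal.ofReal_mul (q := φ) (by positivity)]
        ring

theorem exists_lintegral_iSup_annulusPart_exp_sq_le (hθ : 0 < θ) (hθ' : θ < 1 / 2) :
    ∃ K > 0, ∀ m n τ : ℝ, ∀ U F : ℝ → E2 → ℂ, Continuous (uncurry U) → Continuous (uncurry F) →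
      IsFourierSolutionOn (exp (m / 2)) U F (Icc 0 (exp τ)) → ∀ S₁ S₂ Z : ℝ≥0∞,
      (∀ t ∈ Icc 0 (exp τ), ∫⁻ ξ in dyadicAnnulus (exp n), ‖U t ξ‖ₑ ^ 2 ≤
        ENNReal.ofReal (4 * exp (-(2 * symbolExponent m 0 θ 0 n))) * S₁) →
      (∀ t ∈ Icc 0 (exp τ), ∫⁻ ξ in dyadicAnnulus (exp n), ‖U t ξ‖ₑ ^ 2 ≤
        ENNReal.ofReal (4 * exp (-(2 * symbolExponent m (1 / 2 - θ / 3) (2 * θ) (3 / 4) n))) * S₂) →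
      ∫⁻ t in Ioc 0 (exp τ), ∫⁻ ξ in dyadicAnnulus (exp n), ‖F t ξ‖ₑ ^ 2 ≤
        ENNReal.ofReal (4 * exp (-(2 * symbolExponent m (-1 / 2 - θ / 3) θ (3 / 4) n))) * Z →
      ∫⁻ t in Ioc 0 (exp τ), (⨆ x, ‖annulusPart (exp n) (U t) x‖ₑ) ^ 2 ≤
        ENNReal.ofReal (K * exp (-(2 * θ / 3) * |n|)) *
          (ENNReal.ofReal (solutionWeight θ (exp m) (exp τ) ^ 2) * (S₁ + S₂) +
            ENNReal.ofReal (forcingWeight θ (exp m) (exp τ) ^ 2) * Z) := by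
  obtain ⟨C, hC, hhighFrequency⟩ := exists_lintegral_iSup_annulusPart_sq_le_of_high hθ hθ'
  refine ⟨C + 16 * π, by positivity, fun m n τ U F hU hF hsol S₁ S₂ Z hS₁ hS₂ hZ ↦ ?_⟩
  rcases lt_or_ge (τ + timeStepExponent θ m τ n) 0 with hlow | hhigh
  · grw [lintegral_iSup_annulusPart_sq_le_of_low hθ hθ' hlow
      (fun t ↦ (hU.uncurry_left t).measurable) hS₁]
    rw [← mul_assoc, ENNReal.ofReal_mul (by positivity), mul_assoc]
    gcongr
    · linarith
    · exact le_add_right (by gcongr; exact le_self_add)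
  · grw [hhighFrequency m n τ hhigh U F hU hF hsol S₂ Z hS₂ hZ]
    gcongr
    · linarith [pi_pos]
    · exact le_add_self

end FrequencyBalance

section RefinedStrichartz

open Set Function Real

variable {θ μ T : ℝ} {u F : ℝ → 𝓢(E2, ℂ)}

/-- The quantity bounding `‖u‖_{L²([0,T]; L^∞)}` in the refined Strichartz estimate. -/
def strichartzBound (θ μ T : ℝ) (u F : ℝ → 𝓢(E2, ℂ)) : ℝ≥0∞ :=
  ENNReal.ofReal (solutionWeight θ μ T) *
      ((⨆ t ∈ Icc (0 : ℝ) T, eLpNorm (fmul2 (fun ξ ↦ jap ‖ξ‖ ^ θ) (u t)) 2 volume) +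
        ⨆ t ∈ Icc (0 : ℝ) T,
          eLpNorm (fmul2 (sobolevSymbol (√μ) (1 / 2 - θ / 3) (2 * θ) (3 / 4)) (u t)) 2 volume) +
    ENNReal.ofReal (forcingWeight θ μ T) *
      (∫⁻ t in Ioc (0 : ℝ) T,
        eLpNorm (fmul2 (sobolevSymbol (√μ) (-1 / 2 - θ / 3) θ (3 / 4)) (F t)) 2 volume ^ 2) ^
          ((1 : ℝ) / 2)

theorem sobolevSymbol_zero_left_right (ν β : ℝ) :
    sobolevSymbol ν 0 β 0 = fun ξ ↦ jap ‖ξ‖ ^ β := by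
  ext ξ
  rw [sobolevSymbol, rpow_zero, rpow_zero, one_mul, mul_one]

theorem ennreal_sq_add_sq_add_sq_le (κ σ φ a b c : ℝ≥0∞) :
    κ ^ 2 * (σ ^ 2 * (a ^ 2 + b ^ 2) + φ ^ 2 * c ^ 2) ≤ (κ * (σ * (a + b) + φ * c)) ^ 2 :=
  calc κ ^ 2 * (σ ^ 2 * (a ^ 2 + b ^ 2) + φ ^ 2 * c ^ 2)
      ≤ κ ^ 2 * (σ ^ 2 * (a ^ 2 + b ^ 2) + φ ^ 2 * c ^ 2) +
          2 * κ ^ 2 * (σ ^ 2 * (a * b) + σ * φ * ((a + b) * c)) := le_self_add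
    _ = (κ * (σ * (a + b) + φ * c)) ^ 2 := by ring

theorem solutionWeight_nonneg (hμ : 0 ≤ μ) (hT : 0 ≤ T) : 0 ≤ solutionWeight θ μ T := by
  unfold solutionWeight
  positivity

theorem forcingWeight_nonneg (hμ : 0 ≤ μ) (hT : 0 ≤ T) : 0 ≤ forcingWeight θ μ T := by
  unfold forcingWeight
  positivity

theorem ofReal_weights_mul_le_sq_strichartzBound (hμ : 0 ≤ μ) (hT : 0 ≤ T) (κ : ℝ≥0∞) :
    κ ^ 2 *
        (ENNReal.ofReal (solutionWeight θ μ T ^ 2) *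
          ((⨆ t ∈ Icc (0 : ℝ) T, eLpNorm (fmul2 (fun ξ ↦ jap ‖ξ‖ ^ θ) (u t)) 2 volume) ^ 2 +
            (⨆ t ∈ Icc (0 : ℝ) T, eLpNorm
              (fmul2 (sobolevSymbol (√μ) (1 / 2 - θ / 3) (2 * θ) (3 / 4)) (u t)) 2 volume) ^ 2) +
        ENNReal.ofReal (forcingWeight θ μ T ^ 2) *
          ∫⁻ t in Ioc (0 : ℝ) T, eLpNorm
            (fmul2 (sobolevSymbol (√μ) (-1 / 2 - θ / 3) θ (3 / 4)) (F t)) 2 volume ^ 2) ≤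
      (κ * strichartzBound θ μ T u F) ^ 2 := by
  have hroot (Z : ℝ≥0∞) : Z = (Z ^ ((1 : ℝ) / 2)) ^ 2 := by
    rw [← ENNReal.rpow_mul_natCast]
    norm_num
  rw [ENNReal.ofReal_pow (solutionWeight_nonneg hμ hT),
    ENNReal.ofReal_pow (forcingWeight_nonneg hμ hT), hroot (∫⁻ t in Ioc 0 T, _)]
  exact ennreal_sq_add_sq_add_sq_le _ _ _ _ _ _

theorem exists_lintegral_iSup_annulusPart_sq_le_strichartzBound_sq
    (hθ : 0 < θ) (hθ' : θ < 1 / 2) :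
    ∃ K > 0, ∀ m τ : ℝ, ∀ u F : ℝ → 𝓢(E2, ℂ), Continuous u → Continuous F →
      IsWhithamSolutionOn (exp m) u F (Icc 0 (exp τ)) → ∀ n : ℝ,
      ∫⁻ t in Ioc 0 (exp τ), (⨆ x, ‖annulusPart (exp n) (𝓕 (u t) : 𝓢(E2, ℂ)) x‖ₑ) ^ 2 ≤
        (ENNReal.ofReal (K * exp (-(θ / 3 * |n|))) *
          strichartzBound θ (exp m) (exp τ) u F) ^ 2 := by
  obtain ⟨K, hK, hannulus⟩ := exists_lintegral_iSup_annulusPart_exp_sq_le hθ hθ'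
  refine ⟨√K, sqrt_pos.2 hK, fun m τ u F hu hF hsol n ↦ ?_⟩
  have hfourier := isFourierSolutionOn_fourier (exp_pos m) hu hF hsol
  rw [← exp_half] at hfourier
  have hdata : ∀ {α β γ : ℝ}, -1 ≤ α → 0 ≤ β → 0 ≤ γ → ∀ t ∈ Icc 0 (exp τ),
      ∫⁻ ξ in dyadicAnnulus (exp n), ‖(𝓕 (u t) : 𝓢(E2, ℂ)) ξ‖ₑ ^ 2 ≤
        ENNReal.ofReal (4 * exp (-(2 * symbolExponent m α β γ n))) *
          (⨆ t ∈ Icc 0 (exp τ), eLpNorm (fmul2 (sobolevSymbol (exp (m / 2)) α β γ) (u t)) 2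
            volume) ^ 2 := fun hα hβ hγ t ht ↦ by
    grw [setLIntegral_dyadicAnnulus_exp_le hα hβ hγ m n (u t), ← le_iSup₂ t ht]
  have hforcing : ∫⁻ t in Ioc 0 (exp τ), ∫⁻ ξ in dyadicAnnulus (exp n),
      ‖(𝓕 (F t) : 𝓢(E2, ℂ)) ξ‖ₑ ^ 2 ≤
        ENNReal.ofReal (4 * exp (-(2 * symbolExponent m (-1 / 2 - θ / 3) θ (3 / 4) n))) *
          ∫⁻ t in Ioc 0 (exp τ), eLpNorm
            (fmul2 (sobolevSymbol (exp (m / 2)) (-1 / 2 - θ / 3) θ (3 / 4)) (F t)) 2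
              volume ^ 2 := by
    rw [← lintegral_const_mul' _ _ ENNReal.ofReal_ne_top]
    gcongr with t
    exact setLIntegral_dyadicAnnulus_exp_le (by linarith) hθ.le (by norm_num) m n (F t)
  have hdecay : K * exp (-(2 * θ / 3) * |n|) = (√K * exp (-(θ / 3 * |n|))) ^ 2 := by
    rw [mul_pow, sq_sqrt hK.le, ← exp_nat_mul]
    ring_nf
  have hsquare := hannulus m (n := n) τ _ _ (continuous_uncurry_fourier hu)
    (continuous_uncurry_fourier hF) hfourier _ _ _ (hdata (by norm_num) hθ.le le_rfl)
    (hdata (by linarith) (by linarith) (by norm_num)) hforcing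
  rw [sobolevSymbol_zero_left_right, hdecay, ENNReal.ofReal_pow (by positivity), exp_half]
    at hsquare
  exact hsquare.trans
    (ofReal_weights_mul_le_sq_strichartzBound (exp_pos m).le (exp_pos τ).le _)

theorem exists_lintegral_iSup_annulusPart_zpow_le (hθ : 0 < θ) (hθ' : θ < 1 / 2) :
    ∃ K > 0, ∀ μ T : ℝ, 0 < μ → 0 < T → ∀ u F : ℝ → 𝓢(E2, ℂ), Continuous u → Continuous F →
      IsWhithamSolutionOn μ u F (Icc 0 T) → ∀ k : ℤ,
      (∫⁻ t in Ioc 0 T, (⨆ x, ‖annulusPart (2 ^ k) (𝓕 (u t) : 𝓢(E2, ℂ)) x‖ₑ) ^ 2) ^ ((1 : ℝ) / 2) ≤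
        ENNReal.ofReal (K * exp (-(θ / 3 * |k * log 2|))) * strichartzBound θ μ T u F := by
  obtain ⟨K, hK, hannulus⟩ := exists_lintegral_iSup_annulusPart_sq_le_strichartzBound_sq hθ hθ'
  refine ⟨K, hK, fun μ T hμ hT u F hu hF hsol k ↦ ?_⟩
  obtain ⟨m, rfl⟩ : ∃ m, exp m = μ := ⟨log μ, exp_log hμ⟩
  obtain ⟨τ, rfl⟩ : ∃ τ, exp τ = T := ⟨log T, exp_log hT⟩
  have hradius : (2 : ℝ) ^ k = exp (k * log 2) := by
    rw [mul_comm, exp_mul, exp_log two_pos, rpow_intCast]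
  rw [one_div, ENNReal.rpow_inv_le_iff two_pos, ENNReal.rpow_ofNat, hradius]
  exact hannulus m τ u F hu hF hsol (k * log 2)

theorem exists_tsum_ofReal_mul_exp_neg_le {K c a : ℝ} (hK : 0 < K) (hc : 0 < c) (ha : 0 < a) :
    ∃ C > 0, ∑' k : ℤ, ENNReal.ofReal (K * exp (-(c * |k * a|))) ≤ ENNReal.ofReal C := by
  have hgeom : Summable fun n : ℕ ↦ exp (-(c * (n * a))) :=
    (summable_exp_nat_mul_iff.2 (neg_neg_iff_pos.2 (mul_pos hc ha))).congr fun n ↦ by ring_nf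
  have hsum : Summable fun k : ℤ ↦ K * exp (-(c * |k * a|)) := by
    refine .mul_left K (.of_nat_of_neg ?_ ?_) <;> simpa [abs_mul, abs_of_pos ha] using hgeom
  exact ⟨_, hsum.tsum_pos (fun k ↦ by positivity) 0 (by positivity),
    (ENNReal.ofReal_tsum_of_nonneg (fun k ↦ by positivity) hsum).ge⟩

end RefinedStrichartz

theorem refined_strichartz_whitham_2d_general {θ : ℝ} (hθ : 0 < θ) (hθ' : θ < 1 / 2) :
    ∃ C : ℝ, 0 < C ∧ ∀ μ : ℝ, 0 < μ → ∀ T : ℝ, 0 < T → ∀ u F : ℝ → 𝓢(E2, ℂ),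
      Continuous u → Continuous F → IsWhithamSolutionOn μ u F (Set.Icc 0 T) →
      (∫⁻ t in Set.Ioc (0 : ℝ) T, eLpNorm (u t) ⊤ volume ^ 2) ^ ((1 : ℝ) / 2) ≤
        ENNReal.ofReal C * strichartzBound θ μ T u F := by
  obtain ⟨K, hK, hannulus⟩ := exists_lintegral_iSup_annulusPart_zpow_le hθ hθ'
  obtain ⟨C, hC, hsum⟩ :=
    exists_tsum_ofReal_mul_exp_neg_le hK (div_pos hθ three_pos) (Real.log_pos one_lt_two)
  refine ⟨C, hC, fun μ hμ T hT u F hu hF hsol ↦ ?_⟩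
  calc (∫⁻ t in Set.Ioc (0 : ℝ) T, eLpNorm (u t) ⊤ volume ^ 2) ^ ((1 : ℝ) / 2)
      ≤ (∫⁻ t in Set.Ioc 0 T,
          (∑' k : ℤ, ⨆ x, ‖annulusPart (2 ^ k) (𝓕 (u t) : 𝓢(E2, ℂ)) x‖ₑ) ^ 2) ^ ((1 : ℝ) / 2) := by
        gcongr with t
        exact eLpNorm_top_le_tsum_iSup_annulusPart (u t)
    _ ≤ ∑' k : ℤ, (∫⁻ t in Set.Ioc 0 T,
          (⨆ x, ‖annulusPart (2 ^ k) (𝓕 (u t) : 𝓢(E2, ℂ)) x‖ₑ) ^ 2) ^ ((1 : ℝ) / 2) := by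
        simpa only [ENNReal.rpow_ofNat] using lintegral_tsum_rpow_le one_le_two fun k : ℤ ↦
          (measurable_iSup_annulusPart (2 ^ k) (continuous_uncurry_fourier hu)).aemeasurable
    _ ≤ ∑' k : ℤ, ENNReal.ofReal (K * Real.exp (-(θ / 3 * |k * Real.log 2|))) *
          strichartzBound θ μ T u F :=
        ENNReal.tsum_le_tsum (hannulus μ T hμ hT u F hu hF hsol)
    _ ≤ ENNReal.ofReal C * strichartzBound θ μ T u F := by
        rw [ENNReal.tsum_mul_right]
        gcongr

/-- Refined Strichartz estimate for the linear Whitham-type equation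
`i∂_t u − (1/√μ) m₂(√μ D) u = F` in dimension two (Corollary 3.3, `d = 2`). -/
theorem refined_strichartz_whitham_2d :
    ∃ θ₀ : ℝ, 0 < θ₀ ∧
      ∀ θ : ℝ, 0 < θ → θ < θ₀ →
        ∃ C : ℝ, 0 < C ∧
          ∀ μ : ℝ, 0 < μ → μ ≤ 1 → ∀ T : ℝ, 0 < T →
            ∀ u F : ℝ → 𝓢(E2, ℂ), Continuous u → Continuous F →
              -- the equation `i ∂_t u − (1/√μ) m₂(√μ D) u = F`, i.e.
              -- `∂_t u = −i((1/√μ) m₂(√μ D) u + F)`, holds on `[0,T]`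
              (∀ t ∈ Set.Icc (0 : ℝ) T, ∀ x : E2,
                HasDerivAt (fun τ => (u τ) x)
                  (-Complex.I * (whithamOp2 μ (⇑(u t)) x + (F t) x)) t) →
              (∫⁻ t in Set.Ioc (0 : ℝ) T, eLpNorm (⇑(u t)) ⊤ volume ^ 2) ^ ((1 : ℝ) / 2)
                ≤ ENNReal.ofReal C *
                  (ENNReal.ofReal
                      (μ ^ (-(1 : ℝ) / 6 + 5 * θ / 36) * T ^ ((1 : ℝ) / 6 + 5 * θ / 18)) *
                    ((⨆ t ∈ Set.Icc (0 : ℝ) T,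
                        eLpNorm (fmul2 (fun ξ => jap ‖ξ‖ ^ θ) (⇑(u t))) 2 volume) +
                      (⨆ t ∈ Set.Icc (0 : ℝ) T,
                        eLpNorm
                          (fmul2 (fun ξ => ‖ξ‖ ^ ((1 : ℝ) / 2 - θ / 3) *
                              jap ‖ξ‖ ^ (2 * θ) * jap (Real.sqrt μ * ‖ξ‖) ^ ((3 : ℝ) / 4))
                            (⇑(u t))) 2 volume))
                  + ENNReal.ofReal
                      (μ ^ (-(1 : ℝ) / 3 + θ / 9) * T ^ ((1 : ℝ) / 3 + 2 * θ / 9)) *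
                    (∫⁻ t in Set.Ioc (0 : ℝ) T,
                      eLpNorm
                        (fmul2 (fun ξ => ‖ξ‖ ^ (-(1 : ℝ) / 2 - θ / 3) * jap ‖ξ‖ ^ θ *
                            jap (Real.sqrt μ * ‖ξ‖) ^ ((3 : ℝ) / 4)) (⇑(F t))) 2 volume ^ 2) ^
                      ((1 : ℝ) / 2)) := by
  refine ⟨1 / 2, one_half_pos, fun θ hθ hθ' ↦ ?_⟩
  obtain ⟨C, hC, hbound⟩ := refined_strichartz_whitham_2d_general hθ hθ'
  exact ⟨C, hC, fun μ hμ _ ↦ hbound μ hμ⟩
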